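/- Let h : (0,∞)² → ℝ be continuous and piecewise generalized polynomial. Then there exist M ∈ ℕ, real numbers 0 = η_0 < η_1 < … < η_M < η_{M+1} = ∞, and functions e_0, e_1, …, e_M : (0,∞)² → ℝ, each a pointwise supremum of infima of finitely many generalized polynomial functions, such that for each q ∈ {0,…,M}, e_q coincides with h on the horizontal half-strip I_q := (0,∞) × (η_q, η_{q+1}). -/

import Mathlib

open Set

noncomputable section

/-- The open positive quadrant `(0,∞)²`, as a subtype of `ℝ × ℝ`. -/
abbrev PQ : Type := {p : ℝ × ℝ // 0 < p.1 ∧ 0 < p.2}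

/-- A generalized polynomial function (signomial) of two variables: a finite sum
`∑ cᵢ x^{αᵢ₁} y^{αᵢ₂}` with nonzero real coefficients and distinct real exponent pairs. -/
def IsGenPoly (a : PQ → ℝ) : Prop :=
  ∃ (m : ℕ) (c : Fin m → ℝ) (α : Fin m → ℝ × ℝ),
    (∀ i, c i ≠ 0) ∧ Function.Injective α ∧
    ∀ p : PQ, a p = ∑ i, c i * p.1.1 ^ (α i).1 * p.1.2 ^ (α i).2

/-- A basic generalized semialgebraic (semisignomial) subset of `(0,∞)²`. -/
def IsBasicGSA (S : Set PQ) : Prop :=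
  ∃ (f : PQ → ℝ) (K : ℕ) (g : Fin K → PQ → ℝ),
    IsGenPoly f ∧ (∀ k, IsGenPoly (g k)) ∧
    S = {p : PQ | f p = 0 ∧ ∀ k, 0 < g k p}

/-- A generalized semialgebraic set: a finite union of basic ones. -/
def IsGSA (S : Set PQ) : Prop :=
  ∃ (J : ℕ) (T : Fin J → Set PQ), (∀ j, IsBasicGSA (T j)) ∧ S = ⋃ j, T j

/-- `h` is piecewise generalized polynomial: there are finitely many *distinct*
generalized polynomial functions `g i` whose agreement sets with `h` are
generalized semialgebraic and cover `(0,∞)²`. -/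
def IsPiecewiseGenPoly (h : PQ → ℝ) : Prop :=
  ∃ (l : ℕ) (g : Fin l → PQ → ℝ),
    (∀ i, IsGenPoly (g i)) ∧ Function.Injective g ∧
    (∀ i, IsGSA {p : PQ | h p = g i p}) ∧
    ∀ p : PQ, ∃ i, h p = g i p

/-- `h` is a pointwise sup of infs of finitely many generalized polynomial functions. -/
def IsSupInf (h : PQ → ℝ) : Prop :=
  ∃ (J : ℕ) (K : Fin (J + 1) → ℕ)
    (f : (j : Fin (J + 1)) → Fin (K j + 1) → PQ → ℝ),
    (∀ j k, IsGenPoly (f j k)) ∧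
    ∀ p : PQ, h p = ⨆ j, ⨅ k, f j k p

/-- The `p`-th interval of the subdivision `0 = γ 0 < γ 1 < … < γ L < γ (L+1) = ∞`
of `(0,∞)`: it is `(γ p, γ (p+1))` for `p < L` and `(γ L, ∞)` for `p = L`. -/
def vstrip (γ : ℕ → ℝ) (L p : ℕ) : Set ℝ :=
  if p = L then Set.Ioi (γ p) else Set.Ioo (γ p) (γ (p + 1))

/-!
Fix a one-sided germ of `y` at a point of `[0, ∞]`, parametrised by `ε → 0+`. By Newton–Puiseux the
roots in `x` of generalized polynomials are germs of the form `ε ^ γ * (c + o(1))` given by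
generalized power series; generalized polynomials have a definite sign on them, and so does the
difference of two of them. Hence finitely many ordered root germs cut the line `x > 0`, and `h`
coincides with a single `gᵢ` between consecutive ones. The function is built up from left to right:
when `gᵢ` changes into `gⱼ` at the germ `r`, one adds the function that is `0` before `r` and
`gⱼ - gᵢ` after it. This is a sup of infs, because `gⱼ - gᵢ` is dominated after `r` by a sup of infs
that is nonpositive before `r`, which follows by induction on the number of terms from the mean
value theorem. Compactness of `[0, ∞]` leaves finitely many strips.
-/

open Filter Topology Asymptotics

/-! ### Division of an analytic function by a coordinate -/

section Division

variable {𝕜 E F : Type*} [NontriviallyNormedField 𝕜] [NormedAddCommGroup E] [NormedSpace 𝕜 E]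
  [NormedAddCommGroup F] [NormedSpace 𝕜 F]

variable (𝕜 E) in
/-- The projection `(x, y) ↦ (x, 0)` of `E × 𝕜`. -/
def dropSnd : (E × 𝕜) →L[𝕜] (E × 𝕜) :=
  (ContinuousLinearMap.inl 𝕜 E 𝕜).comp (ContinuousLinearMap.fst 𝕜 E 𝕜)

@[simp]
lemma dropSnd_apply (x : E × 𝕜) : dropSnd 𝕜 E x = (x.1, 0) := by
  simp [dropSnd]

lemma norm_dropSnd_le : ‖dropSnd 𝕜 E‖ ≤ 1 :=
  ContinuousLinearMap.opNorm_le_bound _ zero_le_one fun x => by simp [Prod.norm_def]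

/-- The `i`-th summand of the quotient by the second coordinate of a homogeneous term of degree
`n + 1`: the `i`-th argument is `(0, 1)` and those before it are projected by `dropSnd`, in
analogy with the summand `x₀ ^ i * (x - x₀) * x ^ (n - i)` of `x ^ (n + 1) - x₀ ^ (n + 1)`. -/
def divSndTerm (p : FormalMultilinearSeries 𝕜 (E × 𝕜) F) (n : ℕ) (i : Fin (n + 1)) :
    ContinuousMultilinearMap 𝕜 (fun _ : Fin n => E × 𝕜) F :=
  ((p (n + 1)).curryMid i (0, 1)).compContinuousLinearMap
    fun j => if j.castSucc < i then dropSnd 𝕜 E else ContinuousLinearMap.id 𝕜 _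

/-- The power series of `(Φ (x, y) - Φ (x, 0)) / y`, where `p` is that of `Φ`. -/
def divSnd (p : FormalMultilinearSeries 𝕜 (E × 𝕜) F) : FormalMultilinearSeries 𝕜 (E × 𝕜) F :=
  fun n => ∑ i : Fin (n + 1), divSndTerm p n i

lemma norm_divSndTerm_le (p : FormalMultilinearSeries 𝕜 (E × 𝕜) F) (n : ℕ) (i : Fin (n + 1)) :
    ‖divSndTerm p n i‖ ≤ ‖p (n + 1)‖ := by
  have hcurry : ‖(p (n + 1)).curryMid i ((0, 1) : E × 𝕜)‖ ≤ ‖p (n + 1)‖ := by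
    refine (ContinuousLinearMap.le_opNorm _ _).trans ?_
    rw [ContinuousMultilinearMap.norm_curryMid]
    simp [Prod.norm_def]
  have hprod : ∏ j : Fin n,
      ‖if j.castSucc < i then dropSnd 𝕜 E else ContinuousLinearMap.id 𝕜 _‖ ≤ 1 := by
    refine Finset.prod_le_one (fun _ _ => norm_nonneg _) fun j _ => ?_
    split_ifs
    exacts [norm_dropSnd_le, ContinuousLinearMap.norm_id_le]
  calc ‖divSndTerm p n i‖ ≤ _ := ContinuousMultilinearMap.norm_compContinuousLinearMap_le _ _
    _ ≤ ‖p (n + 1)‖ * 1 := by gcongr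
    _ = ‖p (n + 1)‖ := mul_one _

lemma norm_divSnd_le (p : FormalMultilinearSeries 𝕜 (E × 𝕜) F) (n : ℕ) :
    ‖divSnd p n‖ ≤ (n + 1) * ‖p (n + 1)‖ :=
  (norm_sum_le_of_le _ fun i _ => norm_divSndTerm_le p n i).trans_eq (by simp)

lemma apply_sub_apply_succ_eq_divSndTerm (p : FormalMultilinearSeries 𝕜 (E × 𝕜) F) (n : ℕ)
    (x : E × 𝕜) (i : Fin (n + 1)) :
    p (n + 1) (fun j => if (j : ℕ) < i then dropSnd 𝕜 E x else x) -
      p (n + 1) (fun j => if (j : ℕ) < i + 1 then dropSnd 𝕜 E x else x) =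
      x.2 • divSndTerm p n i fun _ => x := by
  set m : Fin (n + 1) → E × 𝕜 := fun j => if (j : ℕ) < i then dropSnd 𝕜 E x else x
  have hm : m = Function.update m i x := by
    rw [eq_comm, Function.update_eq_self_iff]
    simp [m]
  have hm_succ : (fun j : Fin (n + 1) => if (j : ℕ) < i + 1 then dropSnd 𝕜 E x else x) =
      Function.update m i (dropSnd 𝕜 E x) := by
    funext j
    rcases eq_or_ne j i with rfl | hji
    · simp
    · have : (j : ℕ) < i + 1 ↔ (j : ℕ) < i := by have := Fin.val_ne_of_ne hji; omega
      simp [hji, m, this]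
  have hinsert : Function.update m i ((0, 1) : E × 𝕜) = i.insertNth ((0, 1) : E × 𝕜)
      (fun j : Fin n => (if j.castSucc < i then dropSnd 𝕜 E
        else ContinuousLinearMap.id 𝕜 _) x) := by
    rw [Fin.eq_insertNth_iff]
    refine ⟨by simp, funext fun j => ?_⟩
    rw [Fin.removeNth_apply, Function.update_of_ne (Fin.succAbove_ne i j)]
    by_cases h : j.castSucc < i
    · rw [Fin.succAbove_of_castSucc_lt _ _ h]
      simp [m, h]
    · have : ¬ j.succ < i := fun hj => h (j.castSucc_lt_succ.trans hj)
      rw [Fin.succAbove_of_le_castSucc _ _ (not_lt.mp h)]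
      simp [m, h, this]
  have hsub : x - dropSnd 𝕜 E x = x.2 • ((0, 1) : E × 𝕜) := by ext <;> simp
  rw [hm_succ]
  conv_lhs => enter [1]; rw [hm]
  rw [← ContinuousMultilinearMap.map_update_sub, hsub,
    ContinuousMultilinearMap.map_update_smul, hinsert]
  rfl

lemma apply_diag_eq_add_divSnd (p : FormalMultilinearSeries 𝕜 (E × 𝕜) F) (n : ℕ) (x : E × 𝕜) :
    p (n + 1) (fun _ => x) = p (n + 1) (fun _ => (x.1, 0)) + x.2 • divSnd p n fun _ => x := by
  let m (k : ℕ) (j : Fin (n + 1)) : E × 𝕜 := if (j : ℕ) < k then dropSnd 𝕜 E x else x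
  have hm0 : m 0 = fun _ => x := by simp [m]
  have hmn : m (n + 1) = fun _ => (x.1, 0) := funext fun j => by simp [m, j.is_lt]
  rw [← sub_eq_iff_eq_add', ← hm0, ← hmn,
    ← Finset.sum_range_sub' (fun k => p (n + 1) (m k)) (n + 1),
    ← Fin.sum_univ_eq_sum_range fun k => p (n + 1) (m k) - p (n + 1) (m (k + 1))]
  simp only [divSnd, _root_.sum_apply, Finset.smul_sum]
  exact Finset.sum_congr rfl fun i _ => apply_sub_apply_succ_eq_divSndTerm p n x i

lemma radius_divSnd_pos {p : FormalMultilinearSeries 𝕜 (E × 𝕜) F} (hp : 0 < p.radius) :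
    0 < (divSnd p).radius := by
  obtain ⟨s, hs, hsr⟩ := ENNReal.lt_iff_exists_nnreal_btwn.mp hp
  obtain ⟨C, -, hC⟩ := p.norm_mul_pow_le_of_lt_radius hsr
  have hs : (0 : ℝ) < s := by exact_mod_cast hs
  have hbound (n : ℕ) : ‖divSnd p n‖ * ((s / 2 : NNReal) : ℝ) ^ n ≤ C / s := by
    have hn : (n : ℝ) + 1 ≤ 2 ^ n := by exact_mod_cast Nat.lt_two_pow_self (n := n)
    rw [le_div_iff₀ hs, NNReal.coe_div, NNReal.coe_ofNat]
    calc ‖divSnd p n‖ * (s / 2 : ℝ) ^ n * s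
        ≤ 2 ^ n * ‖p (n + 1)‖ * (s / 2 : ℝ) ^ n * s := by
          gcongr
          exact (norm_divSnd_le p n).trans (by gcongr)
      _ = ‖p (n + 1)‖ * s ^ (n + 1) := by rw [div_pow, pow_succ]; field_simp
      _ ≤ C := hC (n + 1)
  refine lt_of_lt_of_le ?_ ((divSnd p).le_radius_of_bound _ hbound)
  exact_mod_cast half_pos hs

theorem exists_analyticAt_div_snd [CompleteSpace F] {Φ : E × 𝕜 → F} (hΦ : AnalyticAt 𝕜 Φ 0) :
    ∃ H : E × 𝕜 → F, AnalyticAt 𝕜 H 0 ∧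
      ∀ᶠ x in 𝓝 (0 : E × 𝕜), Φ x = Φ (x.1, 0) + x.2 • H x := by
  obtain ⟨p, r, hp⟩ := hΦ
  have hrad := radius_divSnd_pos (hp.r_pos.trans_le hp.r_le)
  have hH := (divSnd p).hasFPowerSeriesOnBall hrad
  refine ⟨(divSnd p).sum, hH.analyticAt, ?_⟩
  filter_upwards [Metric.eball_mem_nhds (0 : E × 𝕜) hp.r_pos,
    Metric.eball_mem_nhds (0 : E × 𝕜) hrad] with x hxr hxH
  have hx0 : dropSnd 𝕜 E x ∈ Metric.eball (0 : E × 𝕜) r := by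
    rw [mem_eball_zero_iff] at hxr ⊢
    refine lt_of_le_of_lt (enorm_le_iff_norm_le.2 ?_) hxr
    simpa only [one_mul] using (dropSnd 𝕜 E).le_of_opNorm_le norm_dropSnd_le x
  rw [dropSnd_apply] at hx0
  have hsum := (hasSum_nat_add_iff' 1).mpr (hp.hasSum hxr)
  have hsum0 := (hasSum_nat_add_iff' 1).mpr (hp.hasSum hx0)
  have hsumH := (hH.hasSum hxH).const_smul x.2
  have hterm0 : (p 0 fun _ => x) = p 0 fun _ => (x.1, 0) := congrArg _ (Subsingleton.elim _ _)
  simp only [zero_add, apply_diag_eq_add_divSnd p _ x, Finset.sum_range_one, hterm0]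
    at hsum hsum0 hsumH
  have heq := hsum.unique (hsum0.add hsumH)
  rwa [sub_add_eq_add_sub, sub_left_inj] at heq

end Division

/-! ### Taylor expansion in the last variable and the Tschirnhaus translation -/

section Tschirnhaus

variable {E : Type*} [NormedAddCommGroup E] [NormedSpace ℝ E]

lemma exists_analyticAt_taylor_snd {Φ : E × ℝ → ℝ} (hΦ : AnalyticAt ℝ Φ 0) (n : ℕ) :
    ∃ (B : ℕ → E → ℝ) (H : E × ℝ → ℝ), (∀ k, AnalyticAt ℝ (B k) 0) ∧ AnalyticAt ℝ H 0 ∧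
      ∀ᶠ x in 𝓝 (0 : E × ℝ), Φ x = ∑ k ∈ Finset.range n, B k x.1 * x.2 ^ k + x.2 ^ n * H x := by
  induction n with
  | zero => exact ⟨fun _ _ => 0, Φ, fun _ => analyticAt_const, hΦ, by simp⟩
  | succ n ih =>
    obtain ⟨B, H, hB, hH, hΦeq⟩ := ih
    obtain ⟨G, hG, hHeq⟩ := exists_analyticAt_div_snd hH
    have hH0 : AnalyticAt ℝ (fun v : E => H (v, 0)) 0 :=
      AnalyticAt.fun_comp (f := fun v : E => (v, (0 : ℝ))) (x := 0) hH
        (analyticAt_id.prod analyticAt_const)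
    refine ⟨Function.update B n fun v => H (v, 0), G, fun k => ?_, hG, ?_⟩
    · rcases eq_or_ne k n with rfl | hk
      · simpa only [Function.update_self] using hH0
      · simpa only [Function.update_of_ne hk] using hB k
    · filter_upwards [hΦeq, hHeq] with x hx hHx
      have hlower : ∀ k ∈ Finset.range n,
          Function.update B n (fun v => H (v, 0)) k x.1 * x.2 ^ k = B k x.1 * x.2 ^ k :=
        fun k hk => by rw [Function.update_of_ne (Finset.mem_range.mp hk).ne]
      rw [hx, Finset.sum_range_succ, Finset.sum_congr rfl hlower, Function.update_self, hHx,
        smul_eq_mul]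
      ring

lemma analyticAt_iteratedDeriv {f : ℝ → ℝ} {x : ℝ} (hf : AnalyticAt ℝ f x) (n : ℕ) :
    AnalyticAt ℝ (iteratedDeriv n f) x := by
  rw [iteratedDeriv_eq_iterate]
  exact hf.iterated_deriv n

lemma iteratedDeriv_pow_mul_zero {g : ℝ → ℝ} {m : ℕ} (hg : ContDiffAt ℝ m g 0) (k : ℕ) :
    iteratedDeriv m (fun y => y ^ k * g y) 0 =
      if k ≤ m then m.choose k * k.factorial * iteratedDeriv (m - k) g 0 else 0 := by
  rw [iteratedDeriv_fun_mul (by fun_prop) hg]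
  simp only [iteratedDeriv_fun_pow_zero, Nat.cast_ite, Nat.cast_zero, mul_ite, mul_zero, ite_mul,
    zero_mul, Finset.sum_ite_eq', Finset.mem_range, Order.lt_add_one_iff]

lemma iteratedDeriv_taylor_zero {f H : ℝ → ℝ} {c : ℕ → ℝ} {n : ℕ} (hH : AnalyticAt ℝ H 0)
    (hf : ∀ᶠ y in 𝓝 (0 : ℝ), f y = ∑ k ∈ Finset.range n, c k * y ^ k + y ^ n * H y) {m : ℕ}
    (hm : m ≤ n) :
    iteratedDeriv m f 0 = m.factorial * if m < n then c m else H 0 := by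
  have hmono (k : ℕ) : iteratedDeriv m (fun y => y ^ k * c k) 0 =
      if m = k then m.factorial * c m else 0 := by
    rw [iteratedDeriv_pow_mul_zero contDiffAt_const]
    rcases lt_trichotomy k m with hk | rfl | hk
    · simp [iteratedDeriv_const, Nat.sub_ne_zero_of_lt hk, hk.ne']
    · simp
    · simp [hk.not_ge, hk.ne]
  have hrem : iteratedDeriv m (fun y => y ^ n * H y) 0 =
      if m < n then 0 else m.factorial * H 0 := by
    rw [iteratedDeriv_pow_mul_zero hH.contDiffAt]
    rcases hm.lt_or_eq with hm | rfl
    · simp [hm, hm.not_ge]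
    · simp
  have hHm : ContDiffAt ℝ m H 0 := hH.contDiffAt
  simp only [mul_comm (c _)] at hf
  rw [Filter.EventuallyEq.iteratedDeriv_eq m hf, iteratedDeriv_fun_add (by fun_prop) (by fun_prop),
    iteratedDeriv_fun_sum (by fun_prop), hrem]
  simp only [hmono, Finset.sum_ite_eq, Finset.mem_range]
  split_ifs <;> simp

lemma exists_analyticAt_implicit [CompleteSpace E] {C : E × ℝ → ℝ} (hC : AnalyticAt ℝ C 0)
    (hC0 : C 0 = 0) {c : ℝ} (hc : c ≠ 0) (hder : HasDerivAt (fun s => C ((0 : E), s)) c 0) :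
    ∃ ψ : E → ℝ, AnalyticAt ℝ ψ 0 ∧ ψ 0 = 0 ∧ ∀ᶠ v in 𝓝 (0 : E), C (v, ψ v) = 0 := by
  have hsmooth : ContDiffAt ℝ ⊤ C 0 := hC.contDiffAt
  have hpartial : (fderiv ℝ C 0 ∘L .inr ℝ E ℝ) 1 = c := by
    have hfderiv : HasFDerivAt C (fderiv ℝ C 0) ((0 : E), (0 : ℝ)) :=
      hC.differentiableAt.hasFDerivAt
    have hline : HasDerivAt (fun s : ℝ => ((0 : E), s)) ((0 : E), (1 : ℝ)) 0 :=
      (hasDerivAt_const _ _).prodMk (hasDerivAt_id _)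
    simpa using (hfderiv.comp_hasDerivAt (0 : ℝ) hline).unique hder
  have hinv : (fderiv ℝ C 0 ∘L .inr ℝ E ℝ).IsInvertible := by
    refine ⟨ContinuousLinearEquiv.unitsEquivAut ℝ (Units.mk0 _ hc), ?_⟩
    ext
    simp only [ContinuousLinearEquiv.coe_coe, ContinuousLinearEquiv.unitsEquivAut_apply]
    rw [hpartial]
    simp
  have htop : (⊤ : WithTop ℕ∞) ≠ 0 := by simp
  refine ⟨hsmooth.implicitFunction htop hinv,
    (hsmooth.contDiffAt_implicitFunction htop hinv).analyticAt,
    hsmooth.implicitFunction_apply_self htop hinv, ?_⟩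
  simpa only [hC0, Prod.fst_zero] using hsmooth.eventually_apply_implicitFunction htop hinv

lemma eventually_iteratedDeriv_eq_coeff_translate {φ : ℝ → ℝ} {C : ℕ → ℝ → ℝ} {H : ℝ × ℝ → ℝ}
    {n : ℕ} (hH : AnalyticAt ℝ H 0)
    (hφ : ∀ᶠ x in 𝓝 (0 : ℝ × ℝ),
      φ (x.2 + x.1) = ∑ k ∈ Finset.range n, C k x.1 * x.2 ^ k + x.2 ^ n * H x) :
    ∀ᶠ s in 𝓝 (0 : ℝ), ∀ m ≤ n,
      iteratedDeriv m φ s = m.factorial * if m < n then C m s else H (s, 0) := by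
  have hs : Tendsto (fun s : ℝ => (s, (0 : ℝ))) (𝓝 0) (𝓝 0) :=
    Continuous.tendsto' (by fun_prop) _ _ rfl
  filter_upwards [hs.eventually hφ.eventually_nhds, hs.eventually hH.eventually_analyticAt]
    with s hφs hHs m hm
  have hy : Tendsto (fun y : ℝ => (s, y)) (𝓝 0) (𝓝 (s, 0)) :=
    Continuous.tendsto' (by fun_prop) _ _ rfl
  have hcoeff := iteratedDeriv_taylor_zero (f := fun y => φ (y + s)) (c := fun k => C k s)
    (AnalyticAt.fun_comp (f := fun y : ℝ => (s, y)) (x := 0) hHs (by fun_prop))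
    (hy.eventually hφs) hm
  simpa only [iteratedDeriv_comp_add_const, zero_add] using hcoeff

lemma exists_taylor_translate {Φ : E × ℝ → ℝ} (hΦ : AnalyticAt ℝ Φ 0) (n : ℕ) :
    ∃ (C : ℕ → E × ℝ → ℝ) (H : (E × ℝ) × ℝ → ℝ), (∀ k, AnalyticAt ℝ (C k) 0) ∧
      AnalyticAt ℝ H 0 ∧ (∀ᶠ x in 𝓝 (0 : (E × ℝ) × ℝ), Φ (x.1.1, x.2 + x.1.2) =
        ∑ k ∈ Finset.range n, C k x.1 * x.2 ^ k + x.2 ^ n * H x) ∧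
      ∀ᶠ s in 𝓝 (0 : ℝ), ∀ m ≤ n, iteratedDeriv m (fun y => Φ (0, y)) s =
        m.factorial * if m < n then C m (0, s) else H ((0, s), 0) := by
  have hshift : AnalyticAt ℝ (fun x : (E × ℝ) × ℝ => Φ (x.1.1, x.2 + x.1.2)) 0 := by
    apply AnalyticAt.fun_comp (f := fun x : (E × ℝ) × ℝ => (x.1.1, x.2 + x.1.2)) (x := 0)
    · simpa [Prod.mk_zero_zero] using hΦ
    · exact (analyticAt_fst.fun_comp analyticAt_fst).prod
        (analyticAt_snd.add (analyticAt_snd.fun_comp analyticAt_fst))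
  obtain ⟨C, H, hC, hH, hexp⟩ := exists_analyticAt_taylor_snd hshift n
  refine ⟨C, H, hC, hH, hexp, ?_⟩
  have hline : Tendsto (fun x : ℝ × ℝ => (((0 : E), x.1), x.2)) (𝓝 0) (𝓝 0) :=
    Continuous.tendsto' (by fun_prop) _ _ rfl
  exact eventually_iteratedDeriv_eq_coeff_translate (φ := fun y => Φ (0, y))
    (C := fun k s => C k (0, s)) (H := fun x => H ((0, x.1), x.2))
    (AnalyticAt.fun_comp (f := fun x : ℝ × ℝ => (((0 : E), x.1), x.2)) (x := 0) hH
      ((analyticAt_const.prod analyticAt_fst).prod analyticAt_snd)) (hline.eventually hexp)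

lemma exists_analyticAt_root_coeff [CompleteSpace E] {φ : ℝ → ℝ} {C : E × ℝ → ℝ} {n : ℕ}
    (hφ : AnalyticAt ℝ φ 0) (hC : AnalyticAt ℝ C 0)
    (hcoeff : ∀ᶠ s in 𝓝 (0 : ℝ), iteratedDeriv n φ s = n.factorial * C (0, s))
    (hzero : iteratedDeriv n φ 0 = 0) (hne : iteratedDeriv (n + 1) φ 0 ≠ 0) :
    ∃ ψ : E → ℝ, AnalyticAt ℝ ψ 0 ∧ ψ 0 = 0 ∧ ∀ᶠ v in 𝓝 (0 : E), C (v, ψ v) = 0 := by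
  have hfact : (n.factorial : ℝ) ≠ 0 := by exact_mod_cast n.factorial_ne_zero
  have hCeq : ∀ᶠ s in 𝓝 (0 : ℝ), C ((0 : E), s) = iteratedDeriv n φ s / n.factorial :=
    hcoeff.mono fun s hs => by rw [hs, mul_div_cancel_left₀ _ hfact]
  have hder : HasDerivAt (fun s => C ((0 : E), s))
      (iteratedDeriv (n + 1) φ 0 / n.factorial) 0 := by
    rw [iteratedDeriv_succ]
    exact ((analyticAt_iteratedDeriv hφ n).differentiableAt.hasDerivAt.div_const
      _).congr_of_eventuallyEq hCeq
  have hC0 : C 0 = 0 := by simpa [hzero, Prod.mk_zero_zero] using hCeq.self_of_nhds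
  exact exists_analyticAt_implicit hC hC0 (div_ne_zero hne hfact) hder

theorem exists_tschirnhaus [CompleteSpace E] {Φ : E × ℝ → ℝ} (hΦ : AnalyticAt ℝ Φ 0) {n : ℕ}
    (hzero : iteratedDeriv n (fun y => Φ (0, y)) 0 = 0)
    (hne : iteratedDeriv (n + 1) (fun y => Φ (0, y)) 0 ≠ 0) :
    ∃ (ψ : E → ℝ) (B : ℕ → E → ℝ) (H : E × ℝ → ℝ), AnalyticAt ℝ ψ 0 ∧ ψ 0 = 0 ∧
      (∀ k, AnalyticAt ℝ (B k) 0) ∧ AnalyticAt ℝ H 0 ∧ H 0 ≠ 0 ∧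
      ∀ᶠ x in 𝓝 (0 : E × ℝ), Φ (x.1, x.2 + ψ x.1) =
        ∑ k ∈ Finset.range n, B k x.1 * x.2 ^ k + x.2 ^ (n + 1) * H x := by
  obtain ⟨C, H, hC, hH, hexp, hcoeff⟩ := exists_taylor_translate hΦ (n + 1)
  have hH0 : H 0 ≠ 0 := by
    have h := hcoeff.self_of_nhds (n + 1) le_rfl
    rw [if_neg (lt_irrefl _)] at h
    exact right_ne_zero_of_mul (h ▸ hne)
  obtain ⟨ψ, hψ, hψ0, hroot⟩ := exists_analyticAt_root_coeff
    (AnalyticAt.fun_comp (f := fun y : ℝ => ((0 : E), y)) (x := 0) hΦ (by fun_prop)) (hC n)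
    (hcoeff.mono fun s hs => by simpa using hs n n.le_succ) hzero hne
  have hsubst : AnalyticAt ℝ (fun x : E × ℝ => ((x.1, ψ x.1), x.2)) 0 :=
    (analyticAt_fst.prod (AnalyticAt.fun_comp (f := Prod.fst) (x := (0 : E × ℝ)) hψ
      analyticAt_fst)).prod analyticAt_snd
  have hsubst0 : (fun x : E × ℝ => ((x.1, ψ x.1), x.2)) 0 = 0 := by
    simp [hψ0, Prod.mk_zero_zero]
  refine ⟨ψ, fun k v => C k (v, ψ v), fun x => H ((x.1, ψ x.1), x.2), hψ, hψ0, fun k => ?_,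
    AnalyticAt.comp_of_eq hH hsubst hsubst0, (congrArg H hsubst0).trans_ne hH0, ?_⟩
  · exact AnalyticAt.comp_of_eq (hC k) (analyticAt_id.prod hψ) (by simp [hψ0, Prod.mk_zero_zero])
  · have hψE : ∀ᶠ x in 𝓝 (0 : E × ℝ), C n (x.1, ψ x.1) = 0 :=
      (continuous_fst.tendsto' (0 : E × ℝ) 0 rfl).eventually hroot
    have htend : Tendsto (fun x : E × ℝ => ((x.1, ψ x.1), x.2)) (𝓝 0) (𝓝 0) := by
      simpa only [hsubst0] using hsubst.continuousAt.tendsto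
    filter_upwards [htend.eventually hexp, hψE] with x hx hCx
    rw [hx, Finset.sum_range_succ, hCx, zero_mul, add_zero]

end Tschirnhaus

/-! ### Substitution of an absolutely convergent series into a power series -/

section Words

variable {𝕜 E G T : Type*} [NontriviallyNormedField 𝕜] [NormedAddCommGroup E] [NormedSpace 𝕜 E]
  [NormedAddCommGroup G] [NormedSpace 𝕜 G]

lemma hasSum_prod_words {f : T → ℝ} (hf0 : 0 ≤ f) (hf : Summable f) (n : ℕ) :
    HasSum (fun w : Fin n → T => ∏ k, f (w k)) ((∑' t, f t) ^ n) := by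
  induction n with
  | zero => simp
  | succ n ih =>
    rw [← (Fin.consEquiv fun _ => T).hasSum_iff, pow_succ']
    have hmul := hf.hasSum.mul ih (hf.mul_of_nonneg (g := fun w : Fin n → T => ∏ k, f (w k))
      ih.summable hf0 fun w => Finset.prod_nonneg fun k _ => hf0 (w k))
    simpa [Function.comp_def, Fin.consEquiv, Fin.prod_univ_succ] using hmul

lemma summable_norm_apply_words {F : T → E} (hF : Summable fun t => ‖F t‖) {n : ℕ}
    (p : ContinuousMultilinearMap 𝕜 (fun _ : Fin n => E) G) :
    Summable fun w : Fin n → T => ‖p fun k => F (w k)‖ :=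
  .of_nonneg_of_le (fun _ => norm_nonneg _) (fun _ => p.le_opNorm _)
    ((hasSum_prod_words (fun t => norm_nonneg (F t)) hF n).summable.mul_left ‖p‖)

lemma hasSum_apply_words [CompleteSpace G] {F : T → E} {S : E} (hS : HasSum F S)
    (hF : Summable fun t => ‖F t‖) {n : ℕ}
    (p : ContinuousMultilinearMap 𝕜 (fun _ : Fin n => E) G) :
    HasSum (fun w : Fin n → T => p fun k => F (w k)) (p fun _ => S) := by
  induction n with
  | zero =>
    have hconst : (fun w : Fin 0 → T => p fun k => F (w k)) = fun _ => p fun _ => S :=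
      funext fun _ => congrArg p (Subsingleton.elim _ _)
    simpa only [hconst] using hasSum_unique fun _ : Fin 0 → T => p fun _ => S
  | succ n ih =>
    have hcons (t : T) (w : Fin n → T) :
        (p fun k => F (Fin.cons (α := fun _ => T) t w k)) =
          p.curryLeft (F t) fun k => F (w k) := by
      rw [ContinuousMultilinearMap.curryLeft_apply]
      exact congrArg p (funext (Fin.cases rfl fun _ => rfl))
    have hsummable : Summable fun x : T × (Fin n → T) =>
        p.curryLeft (F x.1) fun k => F (x.2 k) := by
      simpa only [Function.comp_def, Fin.consEquiv, Equiv.coe_fn_mk, hcons] using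
        (Fin.consEquiv fun _ => T).summable_iff.mpr (summable_norm_apply_words hF p).of_norm
    have hfst : HasSum (fun t => p.curryLeft (F t) fun _ => S) (p.curryLeft S fun _ => S) :=
      hS.mapL ((ContinuousMultilinearMap.apply 𝕜 (fun _ : Fin n => E) G fun _ => S).comp
        p.curryLeft)
    have hsum := hsummable.hasSum
    rw [(hsum.prod_fiberwise fun t => ih (p.curryLeft (F t))).unique hfst] at hsum
    rw [← (Fin.consEquiv fun _ => T).hasSum_iff]
    have hdiag : p (fun _ => S) = p.curryLeft S fun _ => S := by
      rw [ContinuousMultilinearMap.curryLeft_apply]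
      exact congrArg p (funext (Fin.cases rfl fun _ => rfl))
    simpa only [Function.comp_def, Fin.consEquiv, Equiv.coe_fn_mk, hcons, hdiag] using hsum

lemma summable_norm_powerSeries_words {p : FormalMultilinearSeries 𝕜 E G} {F : T → E}
    (hF : Summable fun t => ‖F t‖) {s : NNReal} (hs : s < p.radius) (hle : ∑' t, ‖F t‖ ≤ s) :
    Summable fun x : Σ n : ℕ, (Fin (n + 1) → T) => ‖p (x.1 + 1) fun k => F (x.2 k)‖ := by
  rw [summable_sigma_of_nonneg fun _ => norm_nonneg _]
  refine ⟨fun n => summable_norm_apply_words hF (p (n + 1)), ?_⟩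
  refine .of_nonneg_of_le (fun n => tsum_nonneg fun _ => norm_nonneg _) (fun n => ?_)
    ((summable_nat_add_iff 1).mpr (p.summable_norm_mul_pow hs))
  have hprod := hasSum_prod_words (fun t => norm_nonneg (F t)) hF (n + 1)
  calc ∑' w : Fin (n + 1) → T, ‖p (n + 1) fun k => F (w k)‖
      ≤ ∑' w : Fin (n + 1) → T, ‖p (n + 1)‖ * ∏ k, ‖F (w k)‖ :=
        (summable_norm_apply_words hF (p (n + 1))).tsum_le_tsum
          (fun _ => (p (n + 1)).le_opNorm _) (hprod.summable.mul_left _)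
    _ = ‖p (n + 1)‖ * (∑' t, ‖F t‖) ^ (n + 1) := by rw [tsum_mul_left, hprod.tsum_eq]
    _ ≤ ‖p (n + 1)‖ * (s : ℝ) ^ (n + 1) := by gcongr

lemma hasSum_powerSeries_words [CompleteSpace G] {Ψ : E → G} {p : FormalMultilinearSeries 𝕜 E G}
    {r : ENNReal} (hΨ : HasFPowerSeriesOnBall Ψ p 0 r) {F : T → E} {S : E} (hS : HasSum F S)
    (hF : Summable fun t => ‖F t‖) {s : NNReal} (hs : s < r) (hle : ∑' t, ‖F t‖ ≤ s) :
    HasSum (fun x : Σ n : ℕ, (Fin (n + 1) → T) => p (x.1 + 1) fun k => F (x.2 k))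
      (Ψ S - Ψ 0) := by
  have hmem : S ∈ Metric.eball (0 : E) r := by
    rw [mem_eball_zero_iff, enorm_eq_nnnorm]
    refine lt_of_le_of_lt ?_ hs
    have hnorm : ‖S‖ ≤ s := hS.tsum_eq ▸ (norm_tsum_le_tsum_norm hF).trans hle
    exact_mod_cast hnorm
  have hseries := (hasSum_nat_add_iff' 1).mpr (hΨ.hasSum hmem)
  simp only [Finset.sum_range_one, zero_add, hΨ.coeff_zero] at hseries
  have hsum := (summable_norm_powerSeries_words hF (hs.trans_le hΨ.r_le) hle).of_norm.hasSum
  rwa [(hsum.sigma fun n => hasSum_apply_words hS hF (p (n + 1))).unique hseries] at hsum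

end Words

/-! ### Generalized power series at `0+` -/

section GenPowerSeries

variable {E F G : Type*} [NormedAddCommGroup E] [NormedSpace ℝ E] [NormedAddCommGroup F]
  [NormedSpace ℝ F] [NormedAddCommGroup G] [NormedSpace ℝ G]

/-- Near `0+`, `v` is the sum of the absolutely convergent generalized power series
`∑ t, ε ^ g t • b t`, whose exponents are positive and of which only finitely many lie below any
given bound. -/
structure HasGenPowerSeries {T : Type} (b : T → E) (g : T → ℝ) (v : ℝ → E) : Prop where
  exponent_pos : ∀ t, 0 < g t
  finite_exponent_le : ∀ C, {t | g t ≤ C}.Finite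
  eventually_summable : ∀ᶠ ε in 𝓝[>] (0 : ℝ), Summable fun t => ‖ε ^ g t • b t‖
  eventually_hasSum : ∀ᶠ ε in 𝓝[>] (0 : ℝ), HasSum (fun t => ε ^ g t • b t) (v ε)

/-- The germ of `v` at `0+` is the sum of some convergent generalized power series with positive
exponents. -/
def IsGenPowerSeries (v : ℝ → E) : Prop :=
  ∃ (T : Type) (b : T → E) (g : T → ℝ), HasGenPowerSeries b g v

lemma IsGenPowerSeries.congr {v w : ℝ → E} (hv : IsGenPowerSeries v) (h : w =ᶠ[𝓝[>] 0] v) :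
    IsGenPowerSeries w := by
  obtain ⟨T, b, g, hpos, hfin, hsummable, hsum⟩ := hv
  exact ⟨T, b, g, hpos, hfin, hsummable, by filter_upwards [hsum, h] with ε hε hw; rwa [hw]⟩

lemma tendsto_rpow_nhdsGT_zero {a : ℝ} (ha : 0 < a) :
    Tendsto (fun ε : ℝ => ε ^ a) (𝓝[>] 0) (𝓝 0) :=
  ((Real.continuous_rpow_const ha.le).tendsto' 0 0 (Real.zero_rpow ha.ne')).mono_left
    nhdsWithin_le_nhds

lemma HasGenPowerSeries.tendsto_tsum_norm {T : Type} {b : T → E} {g : T → ℝ} {v : ℝ → E}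
    (h : HasGenPowerSeries b g v) :
    Tendsto (fun ε : ℝ => ∑' t, ‖ε ^ g t • b t‖) (𝓝[>] 0) (𝓝 0) := by
  obtain ⟨ρ, hρsum, hρ : 0 < ρ⟩ := (h.eventually_summable.and self_mem_nhdsWithin).exists
  suffices Tendsto (fun ε : ℝ => ∑' t, ‖ε ^ g t • b t‖) (𝓝[>] 0) (𝓝 (∑' _ : T, 0)) by
    simpa only [tsum_zero] using this
  refine tendsto_tsum_of_dominated_convergence (bound := fun t => ‖ρ ^ g t • b t‖) hρsum
    (fun t => ?_) ?_
  · simpa using ((tendsto_rpow_nhdsGT_zero (h.exponent_pos t)).smul_const (b t)).norm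
  · filter_upwards [Ioc_mem_nhdsGT hρ] with ε hε t
    rw [norm_norm, norm_smul, norm_smul]
    gcongr
    exact abs_le_abs_of_nonneg (Real.rpow_nonneg hε.1.le _)
      (Real.rpow_le_rpow hε.1.le hε.2 (h.exponent_pos t).le)

lemma IsGenPowerSeries.tendsto_zero {v : ℝ → E} (hv : IsGenPowerSeries v) :
    Tendsto v (𝓝[>] 0) (𝓝 0) := by
  obtain ⟨T, b, g, h⟩ := hv
  refine squeeze_zero_norm' ?_ h.tendsto_tsum_norm
  filter_upwards [h.eventually_summable, h.eventually_hasSum] with ε hsummable hsum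
  exact hsum.tsum_eq ▸ norm_tsum_le_tsum_norm hsummable

lemma exists_forall_le_of_finite {T : Type*} [Nonempty T] {g : T → ℝ}
    (hfin : ∀ C, {t | g t ≤ C}.Finite) : ∃ t₀, ∀ t, g t₀ ≤ g t := by
  obtain ⟨t₁⟩ := ‹Nonempty T›
  obtain ⟨t₀, ht₀, hmin⟩ := Set.exists_min_image _ g (hfin (g t₁)) ⟨t₁, le_refl (g t₁)⟩
  exact ⟨t₀, fun t => (le_total (g t) (g t₁)).elim (hmin t) (ht₀.trans ·)⟩

lemma exists_pos_forall_le_of_finite {T : Type*} {g : T → ℝ} (hpos : ∀ t, 0 < g t)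
    (hfin : ∀ C, {t | g t ≤ C}.Finite) : ∃ κ, 0 < κ ∧ ∀ t, κ ≤ g t := by
  rcases isEmpty_or_nonempty T with hT | _
  · exact ⟨1, one_pos, fun t => hT.elim t⟩
  · obtain ⟨t₀, ht₀⟩ := exists_forall_le_of_finite hfin
    exact ⟨g t₀, hpos t₀, ht₀⟩

lemma finite_words_sum_le {T : Type*} {g : T → ℝ} (hpos : ∀ t, 0 < g t)
    (hfin : ∀ C, {t | g t ≤ C}.Finite) (C : ℝ) :
    {x : Σ n : ℕ, (Fin (n + 1) → T) | ∑ k, g (x.2 k) ≤ C}.Finite := by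
  obtain ⟨κ, hκ, hκg⟩ := exists_pos_forall_le_of_finite hpos hfin
  obtain ⟨N, hN⟩ := exists_nat_gt (C / κ)
  refine Set.Finite.subset (s := ⋃ n ∈ Finset.range N,
      Sigma.mk n '' {w : Fin (n + 1) → T | ∀ k, g (w k) ≤ C})
    (Set.Finite.biUnion (Finset.finite_toSet _) fun n _ =>
      (Set.Finite.pi' fun _ => hfin C).image _) ?_
  rintro ⟨n, w⟩ (hw : ∑ k, g (w k) ≤ C)
  have hlength : ((n : ℝ) + 1) * κ ≤ C :=
    calc ((n : ℝ) + 1) * κ = ∑ _k : Fin (n + 1), κ := by simp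
      _ ≤ ∑ k, g (w k) := Finset.sum_le_sum fun k _ => hκg _
      _ ≤ C := hw
  have hn : (n : ℝ) < N := by linarith [(le_div_iff₀ hκ).mpr hlength]
  simp only [mem_iUnion, mem_image]
  exact ⟨n, Finset.mem_range.mpr (by exact_mod_cast hn), w, fun k =>
    (Finset.single_le_sum (f := fun k => g (w k)) (fun i _ => (hpos _).le)
      (Finset.mem_univ k)).trans hw, rfl⟩

lemma apply_rpow_smul_words {T : Type*} {b : T → E} {g : T → ℝ} {n : ℕ}
    (p : ContinuousMultilinearMap ℝ (fun _ : Fin n => E) G) (w : Fin n → T) {ε : ℝ} (hε : 0 < ε) :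
    (p fun k => ε ^ g (w k) • b (w k)) = ε ^ (∑ k, g (w k)) • p fun k => b (w k) := by
  rw [ContinuousMultilinearMap.map_smul_univ, Real.rpow_sum_of_pos hε]

theorem IsGenPowerSeries.comp_analyticAt [CompleteSpace G] {v : ℝ → E} (hv : IsGenPowerSeries v)
    {Ψ : E → G} (hΨ : AnalyticAt ℝ Ψ 0) (hΨ0 : Ψ 0 = 0) :
    IsGenPowerSeries fun ε => Ψ (v ε) := by
  obtain ⟨T, b, g, h⟩ := hv
  obtain ⟨p, r, hp⟩ := hΨ
  obtain ⟨s, hs0, hsr⟩ := ENNReal.lt_iff_exists_nnreal_btwn.mp hp.r_pos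
  have hsmall : ∀ᶠ ε in 𝓝[>] (0 : ℝ), ∑' t, ‖ε ^ g t • b t‖ ≤ s :=
    h.tendsto_tsum_norm.eventually_le_const (by exact_mod_cast hs0)
  refine ⟨Σ n : ℕ, (Fin (n + 1) → T), fun x => p (x.1 + 1) fun k => b (x.2 k),
    fun x => ∑ k, g (x.2 k), fun x => Finset.sum_pos (fun k _ => h.exponent_pos _) ⟨0, by simp⟩,
    finite_words_sum_le h.exponent_pos h.finite_exponent_le, ?_, ?_⟩
  · filter_upwards [h.eventually_summable, hsmall, self_mem_nhdsWithin] with ε hsummable hle hε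
    simpa only [apply_rpow_smul_words _ _ (mem_Ioi.mp hε)] using
      summable_norm_powerSeries_words hsummable (hsr.trans_le hp.r_le) hle
  · filter_upwards [h.eventually_summable, h.eventually_hasSum, hsmall, self_mem_nhdsWithin]
      with ε hsummable hsum hle hε
    simpa only [apply_rpow_smul_words _ _ (mem_Ioi.mp hε), hΨ0, sub_zero] using
      hasSum_powerSeries_words hp hsum hsummable hsr hle

lemma IsGenPowerSeries.prodMk {v : ℝ → E} {w : ℝ → F} (hv : IsGenPowerSeries v)
    (hw : IsGenPowerSeries w) : IsGenPowerSeries fun ε => (v ε, w ε) := by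
  obtain ⟨T, b, g, h⟩ := hv
  obtain ⟨T', b', g', h'⟩ := hw
  refine ⟨T ⊕ T', Sum.elim (fun t => (b t, 0)) (fun t => (0, b' t)), Sum.elim g g',
    Sum.rec h.exponent_pos h'.exponent_pos, fun C => ?_, ?_, ?_⟩
  · refine (((h.finite_exponent_le C).image Sum.inl).union
      ((h'.finite_exponent_le C).image Sum.inr)).subset ?_
    rintro (t | t) ht
    exacts [.inl ⟨t, ht, rfl⟩, .inr ⟨t, ht, rfl⟩]
  · filter_upwards [h.eventually_summable, h'.eventually_summable] with ε hs hs'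
    refine (HasSum.sum (f := fun t : T ⊕ T' => _) (a := ∑' t, ‖ε ^ g t • b t‖)
      (b := ∑' t, ‖ε ^ g' t • b' t‖) ?_ ?_).summable
    · simpa [Function.comp_def, Prod.norm_def] using hs.hasSum
    · simpa [Function.comp_def, Prod.norm_def] using hs'.hasSum
  · filter_upwards [h.eventually_hasSum, h'.eventually_hasSum] with ε hs hs'
    rw [show (v ε, w ε) = (v ε, 0) + (0, w ε) by simp]
    refine HasSum.sum ?_ ?_
    · simpa [Function.comp_def] using hs.mapL (ContinuousLinearMap.inl ℝ E F)
    · simpa [Function.comp_def] using hs'.mapL (ContinuousLinearMap.inr ℝ E F)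

lemma isGenPowerSeries_rpow {d : ℝ} (hd : 0 < d) : IsGenPowerSeries fun ε : ℝ => ε ^ d :=
  ⟨Unit, fun _ => 1, fun _ => d, fun _ => hd, fun _ => Set.toFinite _,
    .of_forall fun _ => (hasSum_unique _).summable, .of_forall fun _ => by simp⟩

lemma isGenPowerSeries_zero : IsGenPowerSeries fun _ : ℝ => (0 : E) :=
  ⟨Empty, fun _ => 0, fun _ => 1, fun _ => one_pos, fun _ => Set.toFinite _,
    .of_forall fun _ => hasSum_empty.summable, .of_forall fun _ => hasSum_empty⟩

lemma IsGenPowerSeries.clm_apply [CompleteSpace F] {v : ℝ → E} (hv : IsGenPowerSeries v)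
    (L : E →L[ℝ] F) : IsGenPowerSeries fun ε => L (v ε) :=
  hv.comp_analyticAt (L.analyticAt 0) (map_zero L)

lemma IsGenPowerSeries.add [CompleteSpace E] {v w : ℝ → E} (hv : IsGenPowerSeries v)
    (hw : IsGenPowerSeries w) : IsGenPowerSeries fun ε => v ε + w ε :=
  (hv.prodMk hw).clm_apply (ContinuousLinearMap.fst ℝ E E + ContinuousLinearMap.snd ℝ E E)

lemma IsGenPowerSeries.sum [CompleteSpace E] {ι : Type*} (s : Finset ι) {v : ι → ℝ → E}
    (hv : ∀ i ∈ s, IsGenPowerSeries (v i)) : IsGenPowerSeries fun ε => ∑ i ∈ s, v i ε := by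
  classical
  induction s using Finset.induction_on with
  | empty => simpa using isGenPowerSeries_zero
  | insert i s hi ih =>
    simp only [Finset.sum_insert hi]
    exact (hv i (by simp)).add (ih fun j hj => hv j (by simp [hj]))

lemma IsGenPowerSeries.pi {ι : Type*} [Fintype ι] {v : ι → ℝ → ℝ}
    (hv : ∀ i, IsGenPowerSeries (v i)) : IsGenPowerSeries fun ε i => v i ε := by
  classical
  refine (IsGenPowerSeries.sum Finset.univ fun i _ =>
    (hv i).clm_apply (ContinuousLinearMap.single ℝ (fun _ : ι => ℝ) i)).congr (.of_forall ?_)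
  intro ε
  funext j
  simp [Finset.sum_apply, Pi.single_apply]

lemma IsGenPowerSeries.mul {v w : ℝ → ℝ} (hv : IsGenPowerSeries v) (hw : IsGenPowerSeries w) :
    IsGenPowerSeries fun ε => v ε * w ε :=
  (hv.prodMk hw).comp_analyticAt (Ψ := fun x : ℝ × ℝ => x.1 * x.2)
    (analyticAt_fst.mul analyticAt_snd) (mul_zero _)

lemma IsGenPowerSeries.const_mul {v : ℝ → ℝ} (hv : IsGenPowerSeries v) (c : ℝ) :
    IsGenPowerSeries fun ε => c * v ε :=
  hv.clm_apply (ContinuousLinearMap.lsmul ℝ ℝ c)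

end GenPowerSeries

/-! ### Generalized Puiseux germs -/

section Puiseux

/-- The germ of `u` at `0+` is `0` or `ε ^ γ * (c + v ε)` with `c ≠ 0` and `v` a convergent
generalized power series with positive exponents, i.e. a generalized Puiseux series with its
leading term made explicit. -/
def IsPuiseux (u : ℝ → ℝ) : Prop :=
  u =ᶠ[𝓝[>] 0] (fun _ => 0) ∨ ∃ (γ c : ℝ) (v : ℝ → ℝ), c ≠ 0 ∧ IsGenPowerSeries v ∧
    u =ᶠ[𝓝[>] 0] fun ε => ε ^ γ * (c + v ε)

lemma IsPuiseux.congr {u w : ℝ → ℝ} (hu : IsPuiseux u) (h : w =ᶠ[𝓝[>] 0] u) : IsPuiseux w :=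
  hu.imp h.trans fun ⟨γ, c, v, hc, hv, hu⟩ => ⟨γ, c, v, hc, hv, h.trans hu⟩

lemma HasGenPowerSeries.exists_injective_exponent {E : Type*} [NormedAddCommGroup E]
    [NormedSpace ℝ E] [CompleteSpace E] {T : Type} {b : T → E} {g : T → ℝ} {v : ℝ → E}
    (h : HasGenPowerSeries b g v) :
    ∃ B : ℝ → E, HasGenPowerSeries (fun γ : Function.support B => B γ) (fun γ => (γ : ℝ)) v := by
  have (γ : ℝ) : Finite (g ⁻¹' {γ}) :=
    ((h.finite_exponent_le γ).subset fun t (ht : g t = γ) => ht.le).to_subtype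
  let B : ℝ → E := fun γ => ∑' t : g ⁻¹' {γ}, b t
  have hB {γ : ℝ} (hγ : B γ ≠ 0) : ∃ t, g t = γ := by
    contrapose! hγ
    have : IsEmpty (g ⁻¹' {γ}) := ⟨fun t => hγ t t.2⟩
    exact tsum_empty
  have hterm (ε γ : ℝ) : ε ^ γ • B γ = ∑' t : g ⁻¹' {γ}, ε ^ g t • b t := by
    rw [← Summable.tsum_const_smul _ .of_finite]
    exact tsum_congr fun t => by rw [show g t = γ from t.2]
  refine ⟨B, fun γ => ?_, fun C => ?_, ?_, ?_⟩
  · obtain ⟨t, ht⟩ := hB γ.2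
    exact ht ▸ h.exponent_pos t
  · refine Set.Finite.of_finite_image (f := Subtype.val) ?_ Subtype.val_injective.injOn
    refine ((h.finite_exponent_le C).image g).subset ?_
    rintro _ ⟨⟨γ, hγ⟩, hC, rfl⟩
    obtain ⟨t, rfl⟩ := hB hγ
    exact ⟨t, hC, rfl⟩
  · filter_upwards [h.eventually_summable] with ε hε
    refine .of_nonneg_of_le (fun _ => norm_nonneg _) (fun γ => ?_)
      ((hε.hasSum.tsum_fiberwise g).summable.comp_injective Subtype.val_injective)
    simp only [hterm]
    exact norm_tsum_le_tsum_norm .of_finite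
  · filter_upwards [h.eventually_hasSum] with ε hε
    have hsum := hε.tsum_fiberwise g
    simp only [← hterm] at hsum
    exact (hasSum_subtype_iff_of_support_subset fun γ hγ => right_ne_zero_of_smul hγ).mpr hsum

lemma HasGenPowerSeries.factor_leading_term {T : Type} {b : T → ℝ} {g : T → ℝ} {v : ℝ → ℝ}
    (h : HasGenPowerSeries b g v) {t₀ : T} (hmin : ∀ t ≠ t₀, g t₀ < g t) :
    HasGenPowerSeries (fun t : {t // t ≠ t₀} => b t) (fun t => g t - g t₀)
      fun ε => v ε / ε ^ g t₀ - b t₀ := by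
  classical
  refine ⟨fun t => sub_pos.mpr (hmin t t.2), fun C => ?_, ?_, ?_⟩
  · refine Set.Finite.of_finite_image (f := Subtype.val) ?_ Subtype.val_injective.injOn
    refine (h.finite_exponent_le (C + g t₀)).subset ?_
    rintro _ ⟨t, ht : g t - g t₀ ≤ C, rfl⟩
    exact sub_le_iff_le_add.mp ht
  · filter_upwards [h.eventually_summable, self_mem_nhdsWithin] with ε hsummable (hε : 0 < ε)
    refine ((hsummable.comp_injective Subtype.val_injective).mul_right |(ε ^ g t₀)⁻¹|).congr
      fun t => ?_
    simp only [Function.comp, Real.rpow_sub hε, Real.norm_eq_abs, smul_eq_mul, ← abs_mul]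
    congr 1
    ring
  · filter_upwards [h.eventually_hasSum, self_mem_nhdsWithin] with ε hsum (hε : 0 < ε)
    have hpow : ε ^ g t₀ ≠ 0 := (Real.rpow_pos_of_pos hε _).ne'
    have hrest := (hsum.sub (hasSum_ite_eq t₀ (ε ^ g t₀ • b t₀))).mul_right (ε ^ g t₀)⁻¹
    rw [show (v ε - ε ^ g t₀ • b t₀) * (ε ^ g t₀)⁻¹ = v ε / ε ^ g t₀ - b t₀ by
      rw [smul_eq_mul]; field_simp] at hrest
    refine ((hasSum_subtype_iff_of_support_subset (s := {t | t ≠ t₀}) ?_).mpr hrest).congr_fun ?_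
    · rintro t ht rfl
      simp at ht
    · rintro ⟨t, ht : t ≠ t₀⟩
      simp only [Function.comp, if_neg ht, Real.rpow_sub hε, smul_eq_mul]
      ring

theorem IsGenPowerSeries.isPuiseux {v : ℝ → ℝ} (hv : IsGenPowerSeries v) : IsPuiseux v := by
  obtain ⟨T, b, g, h⟩ := hv
  obtain ⟨B, hB⟩ := h.exists_injective_exponent
  rcases isEmpty_or_nonempty (Function.support B) with _ | _
  · left
    filter_upwards [hB.eventually_hasSum] with ε hε
    exact hε.unique hasSum_empty
  · right
    obtain ⟨γ, hγ⟩ := exists_forall_le_of_finite hB.finite_exponent_le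
    refine ⟨γ, B γ, _, γ.2, ⟨_, _, _, hB.factor_leading_term fun t ht =>
      (hγ t).lt_of_ne' (Subtype.val_injective.ne ht)⟩, ?_⟩
    filter_upwards [self_mem_nhdsWithin] with ε hε
    have := (Real.rpow_pos_of_pos hε γ).ne'
    field_simp
    ring

lemma IsGenPowerSeries.isPuiseux_const_add {v : ℝ → ℝ} (hv : IsGenPowerSeries v) (c : ℝ) :
    IsPuiseux fun ε => c + v ε := by
  rcases eq_or_ne c 0 with rfl | hc
  · simpa only [zero_add] using hv.isPuiseux
  · exact .inr ⟨0, c, v, hc, hv, by simp⟩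

lemma isPuiseux_const (c : ℝ) : IsPuiseux fun _ => c := by
  simpa using isGenPowerSeries_zero.isPuiseux_const_add c

lemma IsPuiseux.rpow_mul {u : ℝ → ℝ} (hu : IsPuiseux u) (γ : ℝ) :
    IsPuiseux fun ε => ε ^ γ * u ε := by
  rcases hu with h | ⟨δ, c, v, hc, hv, h⟩
  · left
    filter_upwards [h] with ε h
    simp [h]
  · right
    refine ⟨γ + δ, c, v, hc, hv, ?_⟩
    filter_upwards [h, self_mem_nhdsWithin] with ε h hε
    rw [h, Real.rpow_add hε, mul_assoc]

lemma isPuiseux_rpow (γ : ℝ) : IsPuiseux fun ε => ε ^ γ := by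
  simpa using (isPuiseux_const 1).rpow_mul γ

lemma IsPuiseux.mul {u w : ℝ → ℝ} (hu : IsPuiseux u) (hw : IsPuiseux w) :
    IsPuiseux fun ε => u ε * w ε := by
  rcases hu with h | ⟨δ, c, v, hc, hv, h⟩
  · left
    filter_upwards [h] with ε h
    simp [h]
  rcases hw with h' | ⟨δ', c', v', hc', hv', h'⟩
  · left
    filter_upwards [h'] with ε h'
    simp [h']
  right
  refine ⟨δ + δ', c * c', fun ε => c * v' ε + c' * v ε + v ε * v' ε, mul_ne_zero hc hc',
    ((hv'.const_mul c).add (hv.const_mul c')).add (hv.mul hv'), ?_⟩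
  filter_upwards [h, h', self_mem_nhdsWithin] with ε h h' hε
  rw [h, h', Real.rpow_add hε]
  ring

lemma IsGenPowerSeries.isPuiseux_rpow_mul_add {v w : ℝ → ℝ} (hv : IsGenPowerSeries v)
    (hw : IsGenPowerSeries w) {γ δ : ℝ} (h : γ ≤ δ) (c d : ℝ) :
    IsPuiseux fun ε => ε ^ γ * (c + v ε) + ε ^ δ * (d + w ε) := by
  rcases h.eq_or_lt with rfl | hlt
  · refine (((hv.add hw).isPuiseux_const_add (c + d)).rpow_mul γ).congr (.of_forall fun ε => ?_)
    ring
  · have hpow := isGenPowerSeries_rpow (sub_pos.mpr hlt)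
    have hseries := hv.add ((hpow.const_mul d).add (hpow.mul hw))
    refine ((hseries.isPuiseux_const_add c).rpow_mul γ).congr ?_
    filter_upwards [self_mem_nhdsWithin] with ε hε
    rw [← add_sub_cancel γ δ, Real.rpow_add hε, add_sub_cancel]
    ring

lemma IsPuiseux.add {u w : ℝ → ℝ} (hu : IsPuiseux u) (hw : IsPuiseux w) :
    IsPuiseux fun ε => u ε + w ε := by
  rcases hu with h | ⟨δ, c, v, hc, hv, h⟩
  · exact hw.congr (by filter_upwards [h] with ε h; simp [h])
  rcases hw with h' | ⟨δ', c', v', -, hv', h'⟩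
  · exact .congr (.inr ⟨δ, c, v, hc, hv, h⟩) (by filter_upwards [h'] with ε h; simp [h])
  rcases le_total δ δ' with hle | hle
  · refine (hv.isPuiseux_rpow_mul_add hv' hle c c').congr ?_
    filter_upwards [h, h'] with ε h h'
    rw [h, h']
  · refine (hv'.isPuiseux_rpow_mul_add hv hle c' c).congr ?_
    filter_upwards [h, h'] with ε h h'
    rw [h, h', add_comm]

lemma IsPuiseux.const_mul {u : ℝ → ℝ} (hu : IsPuiseux u) (c : ℝ) : IsPuiseux fun ε => c * u ε :=
  (isPuiseux_const c).mul hu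

lemma IsPuiseux.sub {u w : ℝ → ℝ} (hu : IsPuiseux u) (hw : IsPuiseux w) :
    IsPuiseux fun ε => u ε - w ε :=
  (hu.add (hw.const_mul (-1))).congr (.of_forall fun ε => by ring)

lemma IsPuiseux.sum {ι : Type*} (s : Finset ι) {u : ι → ℝ → ℝ} (h : ∀ i ∈ s, IsPuiseux (u i)) :
    IsPuiseux fun ε => ∑ i ∈ s, u i ε := by
  classical
  induction s using Finset.induction_on with
  | empty => simpa using isPuiseux_const 0
  | insert i s hi ih =>
    simp only [Finset.sum_insert hi]
    exact (h i (by simp)).add (ih fun j hj => h j (by simp [hj]))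

lemma IsGenPowerSeries.tendsto_div_rpow {u v : ℝ → ℝ} {γ c : ℝ} (hv : IsGenPowerSeries v)
    (h : u =ᶠ[𝓝[>] 0] fun ε => ε ^ γ * (c + v ε)) :
    Tendsto (fun ε => u ε / ε ^ γ) (𝓝[>] 0) (𝓝 c) := by
  have hlim : Tendsto (fun ε => c + v ε) (𝓝[>] 0) (𝓝 c) := by
    simpa only [add_zero] using hv.tendsto_zero.const_add c
  refine hlim.congr' ?_
  filter_upwards [h, self_mem_nhdsWithin] with ε h hε
  rw [h, mul_div_cancel_left₀ _ (Real.rpow_pos_of_pos hε γ).ne']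

lemma IsPuiseux.exists_isTheta_rpow {u : ℝ → ℝ} (hu : IsPuiseux u)
    (hne : ∃ᶠ ε in 𝓝[>] 0, u ε ≠ 0) : ∃ γ : ℝ, u =Θ[𝓝[>] 0] fun ε => ε ^ γ := by
  obtain ⟨γ, c, v, hc, hv, h⟩ := hu.resolve_left fun h => hne (h.mono fun ε hε => not_not.mpr hε)
  exact ⟨γ, (isTheta_of_div_tendsto_nhds_ne_zero (hv.tendsto_div_rpow h) hc).symm⟩

lemma IsPuiseux.eventually_sign {u : ℝ → ℝ} (hu : IsPuiseux u) :
    (∀ᶠ ε in 𝓝[>] 0, u ε = 0) ∨ (∀ᶠ ε in 𝓝[>] 0, 0 < u ε) ∨ ∀ᶠ ε in 𝓝[>] 0, u ε < 0 := by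
  rcases hu with h | ⟨δ, c, v, hc, hv, h⟩
  · exact .inl h
  right
  have hlim := hv.tendsto_div_rpow h
  rcases hc.lt_or_gt with hc | hc
  · right
    filter_upwards [hlim.eventually_lt_const hc, self_mem_nhdsWithin] with ε hneg hε
    exact neg_of_div_neg_left hneg (Real.rpow_nonneg (le_of_lt hε) δ)
  · left
    filter_upwards [hlim.eventually_const_lt hc, self_mem_nhdsWithin] with ε hpos hε
    exact (div_pos_iff_of_pos_right (Real.rpow_pos_of_pos hε δ)).mp hpos

/-- A generalized Puiseux germ at `0+` with positive values, the germ of a parametrised curve in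
the positive half-line. -/
structure IsPosPuiseux (u : ℝ → ℝ) : Prop where
  isPuiseux : IsPuiseux u
  eventually_pos : ∀ᶠ ε in 𝓝[>] 0, 0 < u ε

lemma IsPosPuiseux.exists_leading_coeff {u : ℝ → ℝ} (hu : IsPosPuiseux u) :
    ∃ (γ c : ℝ) (v : ℝ → ℝ), 0 < c ∧ IsGenPowerSeries v ∧
      u =ᶠ[𝓝[>] 0] fun ε => ε ^ γ * (c + v ε) := by
  rcases hu.isPuiseux with h | ⟨δ, c, v, hc, hv, h⟩
  · obtain ⟨ε, hzero, hε⟩ := (h.and hu.eventually_pos).exists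
    exact absurd hzero hε.ne'
  refine ⟨δ, c, v, hc.symm.lt_of_le (ge_of_tendsto (hv.tendsto_div_rpow h) ?_), hv, h⟩
  filter_upwards [hu.eventually_pos, self_mem_nhdsWithin] with ε hu hε
  exact (div_pos hu (Real.rpow_pos_of_pos hε δ)).le

lemma analyticAt_rpow_const {c : ℝ} (hc : c ≠ 0) (a : ℝ) : AnalyticAt ℝ (fun x : ℝ => x ^ a) c :=
  (Real.contDiffAt_rpow_const_of_ne (n := ⊤) hc).analyticAt

lemma IsPosPuiseux.rpow_const {u : ℝ → ℝ} (hu : IsPosPuiseux u) (a : ℝ) :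
    IsPosPuiseux fun ε => u ε ^ a := by
  refine ⟨?_, hu.eventually_pos.mono fun ε hε => Real.rpow_pos_of_pos hε a⟩
  obtain ⟨γ, c, v, hc, hv, h⟩ := hu.exists_leading_coeff
  have hanalytic : AnalyticAt ℝ (fun x => (c + x) ^ a - c ^ a) 0 := by
    refine (AnalyticAt.fun_comp (g := fun x : ℝ => x ^ a) (f := fun x => c + x) ?_
      (by fun_prop)).sub analyticAt_const
    simpa only [add_zero] using analyticAt_rpow_const hc.ne' a
  refine .inr ⟨γ * a, c ^ a, fun ε => (c + v ε) ^ a - c ^ a, (Real.rpow_pos_of_pos hc a).ne',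
    hv.comp_analyticAt hanalytic (by simp), ?_⟩
  filter_upwards [h, hu.eventually_pos, self_mem_nhdsWithin] with ε h hu (hε : 0 < ε)
  have hc' : 0 < c + v ε :=
    (pos_iff_pos_of_mul_pos (h ▸ hu)).mp (Real.rpow_pos_of_pos hε γ)
  rw [h, Real.mul_rpow (Real.rpow_nonneg hε.le _) hc'.le, ← Real.rpow_mul hε.le,
    add_sub_cancel]

lemma IsPuiseux.exists_isGenPowerSeries_sub_const {u : ℝ → ℝ} (hu : IsPuiseux u) {l : Filter ℝ}
    [l.NeBot] (hl : l ≤ 𝓝[>] 0) (hbdd : u =O[l] fun _ => (1 : ℝ)) :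
    ∃ c, IsGenPowerSeries fun ε => u ε - c := by
  rcases hu with h | ⟨γ, c, v, hc, hv, h⟩
  · exact ⟨0, isGenPowerSeries_zero.congr (by filter_upwards [h] with ε h; simp [h])⟩
  rcases lt_trichotomy γ 0 with hγ | rfl | hγ
  · -- `|c| = lim |u ε| * ε ^ (-γ) ≤ lim C * ε ^ (-γ) = 0`
    obtain ⟨C, hC⟩ := hbdd.bound
    refine absurd (abs_nonpos_iff.mp ?_) hc
    refine le_of_tendsto_of_tendsto ((hv.tendsto_div_rpow h).abs.mono_left hl)
      (b := l) (g := fun ε => C * ε ^ (-γ)) ?_ ?_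
    · simpa using ((tendsto_rpow_nhdsGT_zero (neg_pos.mpr hγ)).const_mul C).mono_left hl
    · filter_upwards [hl self_mem_nhdsWithin, hC] with ε (hε : 0 < ε) hu
      rw [Real.norm_eq_abs, norm_one, mul_one] at hu
      have := Real.rpow_pos_of_pos hε γ
      rw [abs_div, abs_of_pos this, Real.rpow_neg hε.le, div_eq_mul_inv]
      gcongr
  · exact ⟨c, hv.congr (by filter_upwards [h] with ε h; simp [h])⟩
  · have hpow := isGenPowerSeries_rpow hγ
    refine ⟨0, ((hpow.const_mul c).add (hpow.mul hv)).congr ?_⟩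
    filter_upwards [h] with ε h
    rw [h]
    ring

lemma IsPuiseux.eventually_eq_zero {u : ℝ → ℝ} (hu : IsPuiseux u) {l : Filter ℝ} [l.NeBot]
    (hl : l ≤ 𝓝[>] 0) (h : ∀ᶠ ε in l, u ε = 0) : ∀ᶠ ε in 𝓝[>] 0, u ε = 0 := by
  rcases hu.eventually_sign with hzero | hpos | hneg
  · exact hzero
  · obtain ⟨ε, hu, hε⟩ := (h.and (hl hpos)).exists
    exact absurd hu hε.ne'
  · obtain ⟨ε, hu, hε⟩ := (h.and (hl hneg)).exists
    exact absurd hu hε.ne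

lemma IsPuiseux.eventually_ne {u w : ℝ → ℝ} (hu : IsPuiseux u) (hw : IsPuiseux w)
    (h : ¬u =ᶠ[𝓝[>] 0] w) : ∀ᶠ ε in 𝓝[>] 0, u ε ≠ w ε := by
  rcases (hu.sub hw).eventually_sign with hzero | hpos | hneg
  · exact absurd (hzero.mono fun ε => sub_eq_zero.mp) h
  · exact hpos.mono fun ε hε => (sub_pos.mp hε).ne'
  · exact hneg.mono fun ε hε => (sub_neg.mp hε).ne

lemma IsPuiseux.eventually_le_or_lt {u w : ℝ → ℝ} (hu : IsPuiseux u) (hw : IsPuiseux w) :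
    (∀ᶠ ε in 𝓝[>] 0, u ε ≤ w ε) ∨ ∀ᶠ ε in 𝓝[>] 0, w ε < u ε := by
  rcases (hu.sub hw).eventually_sign with hzero | hpos | hneg
  · exact .inl (hzero.mono fun ε hε => (sub_eq_zero.mp hε).le)
  · exact .inr (hpos.mono fun ε => sub_pos.mp)
  · exact .inl (hneg.mono fun ε hε => (sub_neg.mp hε).le)

lemma exists_forall_eventuallyLE_iff {R : Finset (ℝ → ℝ)} (hR : ∀ r ∈ R, IsPuiseux r) :
    ∃ ε₀, ∀ r ∈ R, ∀ s ∈ R, (∀ᶠ ε in 𝓝[>] 0, r ε ≤ s ε) ↔ r ε₀ ≤ s ε₀ := by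
  suffices ∀ᶠ ε₀ in 𝓝[>] 0, ∀ r ∈ R, ∀ s ∈ R, (∀ᶠ ε in 𝓝[>] 0, r ε ≤ s ε) ↔ r ε₀ ≤ s ε₀ from
    this.exists
  refine R.eventually_all.mpr fun r hr => R.eventually_all.mpr fun s hs => ?_
  rcases (hR r hr).eventually_le_or_lt (hR s hs) with h | h
  · exact h.mono fun ε₀ h₀ => iff_of_true h h₀
  · refine h.mono fun ε₀ h₀ => iff_of_false (fun hle => ?_) h₀.not_ge
    obtain ⟨ε, hlt, hle⟩ := (h.and hle).exists
    exact hlt.not_ge hle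

end Puiseux

/-! ### The Newton polygon -/

section NewtonPolygon

lemma exists_dominant_pair_of_sum_eq_zero {ι : Type*} [Fintype ι] {a : ι → ℝ}
    (hsum : ∑ i, a i = 0) (hne : ∃ i, a i ≠ 0) :
    ∃ k j, j ≠ k ∧ (∀ i, |a i| ≤ |a k|) ∧ |a k| ≤ Fintype.card ι * |a j| := by
  classical
  obtain ⟨i₀, hi₀⟩ := hne
  obtain ⟨k, -, hk⟩ := Finset.exists_max_image Finset.univ (|a ·|) ⟨i₀, Finset.mem_univ _⟩
  have hsplit : |a k| ≤ ∑ i ∈ Finset.univ.erase k, |a i| := by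
    rw [← Finset.add_sum_erase _ _ (Finset.mem_univ k)] at hsum
    rw [eq_neg_of_add_eq_zero_left hsum, abs_neg]
    exact Finset.abs_sum_le_sum_abs _ _
  have hpos : 0 < |a k| := (abs_pos.mpr hi₀).trans_le (hk i₀ (Finset.mem_univ _))
  obtain ⟨j, hj, hmax⟩ := Finset.exists_max_image (Finset.univ.erase k) (|a ·|)
    (Finset.nonempty_of_sum_ne_zero (hpos.trans_le hsplit).ne')
  refine ⟨k, j, Finset.ne_of_mem_erase hj, fun i => hk i (Finset.mem_univ _), ?_⟩
  calc |a k| ≤ (Finset.univ.erase k).card • |a j| :=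
        hsplit.trans (Finset.sum_le_card_nsmul _ _ _ hmax)
    _ ≤ Fintype.card ι * |a j| := by
        rw [nsmul_eq_mul]
        gcongr
        exact Finset.card_le_univ _

lemma exists_isTheta_pair_of_sum_eq_zero {ι X : Type*} [Fintype ι] (l : Ultrafilter X)
    {a : ι → X → ℝ} (hsum : ∀ᶠ x in (l : Filter X), ∑ i, a i x = 0)
    (hne : ∃ i, ∀ᶠ x in (l : Filter X), a i x ≠ 0) :
    ∃ k j, j ≠ k ∧ (∀ i, a i =O[(l : Filter X)] a k) ∧ a j =Θ[(l : Filter X)] a k := by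
  obtain ⟨i₀, hi₀⟩ := hne
  have hpair : ∀ᶠ x in (l : Filter X), ∃ p : ι × ι, p.2 ≠ p.1 ∧ (∀ i, |a i x| ≤ |a p.1 x|) ∧
      |a p.1 x| ≤ Fintype.card ι * |a p.2 x| := by
    filter_upwards [hsum, hi₀] with x hsum hi₀
    obtain ⟨k, j, h⟩ := exists_dominant_pair_of_sum_eq_zero hsum ⟨i₀, hi₀⟩
    exact ⟨(k, j), h⟩
  obtain ⟨⟨k, j⟩, h⟩ := l.eventually_exists_iff.mp hpair
  have hO (i : ι) : a i =O[(l : Filter X)] a k := .of_bound' (h.mono fun x hx => hx.2.1 i)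
  exact ⟨k, j, h.exists.choose_spec.1, hO, hO j, .of_bound _ (h.mono fun x hx => hx.2.2)⟩

lemma isTheta_rpow_of_isTheta_mul_rpow {l : Filter ℝ} (hl : l ≤ 𝓝[>] 0) {y : ℝ → ℝ}
    (hy : ∀ᶠ ε in l, 0 < y ε) {a b : ℝ} (hab : a ≠ b) {γ δ : ℝ}
    (h : (fun ε => ε ^ γ * y ε ^ a) =Θ[l] fun ε => ε ^ δ * y ε ^ b) :
    y =Θ[l] fun ε => ε ^ ((δ - γ) / (a - b)) := by
  have hpos : ∀ᶠ ε in l, 0 < ε := hl self_mem_nhdsWithin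
  have hquot : (fun ε => y ε ^ (a - b)) =Θ[l] fun ε => ε ^ (δ - γ) := by
    refine EventuallyEq.trans_isTheta ?_ ((h.div
      (isTheta_refl (fun ε => ε ^ γ * y ε ^ b) l)).trans_eventuallyEq ?_)
    · filter_upwards [hpos, hy] with ε hε hy
      rw [mul_div_mul_left _ _ (Real.rpow_pos_of_pos hε γ).ne', Real.rpow_sub hy]
    · filter_upwards [hpos, hy] with ε hε hy
      rw [mul_div_mul_right _ _ (Real.rpow_pos_of_pos hy b).ne', Real.rpow_sub hε]
  have hroot := IsTheta.rpow (r := (a - b)⁻¹)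
    (hy.mono fun ε hε => (Real.rpow_pos_of_pos hε _).le)
    (hpos.mono fun ε hε => (Real.rpow_pos_of_pos hε _).le) hquot
  refine EventuallyEq.trans_isTheta ?_ (hroot.trans_eventuallyEq ?_)
  · filter_upwards [hy] with ε hε
    rw [← Real.rpow_mul hε.le, mul_inv_cancel₀ (sub_ne_zero.mpr hab), Real.rpow_one]
  · filter_upwards [hpos] with ε hε
    rw [← Real.rpow_mul hε.le, div_eq_mul_inv]

lemma exists_dominant_monomials_of_root {ι X : Type*} [Fintype ι] (l : Ultrafilter X)
    {β M U : ι → X → ℝ} (hM : ∀ k, ∀ᶠ x in (l : Filter X), M k x ≠ 0)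
    (hU : ∀ k, U k =Θ[(l : Filter X)] fun _ => (1 : ℝ))
    (hzero : ∀ᶠ x in (l : Filter X), ∑ k, β k x * M k x * U k x = 0)
    (hne : ∃ k, ∀ᶠ x in (l : Filter X), β k x ≠ 0) :
    ∃ k j, j ≠ k ∧ (∀ᶠ x in (l : Filter X), β k x ≠ 0) ∧ (∀ᶠ x in (l : Filter X), β j x ≠ 0) ∧
      (∀ i, (fun x => β i x * M i x) =O[(l : Filter X)] fun x => β k x * M k x) ∧
      (fun x => β j x * M j x) =Θ[(l : Filter X)] fun x => β k x * M k x := by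
  have hterm (k : ι) : (fun x => β k x * M k x * U k x) =Θ[(l : Filter X)]
      fun x => β k x * M k x := by
    simpa using (isTheta_refl (fun x => β k x * M k x) _).mul (hU k)
  obtain ⟨i₀, hi₀⟩ := hne
  have hne₀ : ∀ᶠ x in (l : Filter X), β i₀ x * M i₀ x ≠ 0 := by
    filter_upwards [hi₀, hM i₀] with x hβ hM using mul_ne_zero hβ hM
  obtain ⟨k, j, hjk, hO, hΘ⟩ := exists_isTheta_pair_of_sum_eq_zero l hzero
    ⟨i₀, by
      filter_upwards [hne₀, (hU i₀).eq_zero_iff] with x h hU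
      exact mul_ne_zero h (mt hU.mp one_ne_zero)⟩
  replace hO (i : ι) : (fun x => β i x * M i x) =O[(l : Filter X)]
      fun x => β k x * M k x := (hterm i).symm.trans_isBigO ((hO i).trans_isTheta (hterm k))
  replace hΘ := (hterm j).symm.trans (hΘ.trans (hterm k))
  have hk : ∀ᶠ x in (l : Filter X), β k x ≠ 0 := by
    filter_upwards [hne₀, (hO i₀).eq_zero_imp] with x h himp hk
    exact h (himp (by simp [hk]))
  refine ⟨k, j, hjk, hk, ?_, hO, hΘ⟩
  filter_upwards [hk, hM k, hΘ.eq_zero_iff] with x hk hM hiff hj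
  exact mul_ne_zero hk hM (hiff.mp (by simp [hj]))

lemma exists_newton_slope {ι : Type*} [Fintype ι] {β : ι → ℝ → ℝ} (hβ : ∀ k, IsPuiseux (β k))
    {e : ι → ℝ} (he : Function.Injective e) {l : Ultrafilter ℝ} (hl : (l : Filter ℝ) ≤ 𝓝[>] 0)
    {y : ℝ → ℝ} (hy : ∀ᶠ ε in (l : Filter ℝ), 0 < y ε) {U : ι → ℝ → ℝ}
    (hU : ∀ k, U k =Θ[(l : Filter ℝ)] fun _ => (1 : ℝ))
    (hzero : ∀ᶠ ε in (l : Filter ℝ), ∑ k, β k ε * y ε ^ e k * U k ε = 0)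
    (hne : ∃ k, ∀ᶠ ε in (l : Filter ℝ), β k ε ≠ 0) :
    ∃ τ μ : ℝ, (y =Θ[(l : Filter ℝ)] fun ε => ε ^ τ) ∧
      (∀ k, (fun ε => ε ^ (e k * τ - μ) * β k ε) =O[(l : Filter ℝ)] fun _ => (1 : ℝ)) ∧
      ∃ k, (fun ε => ε ^ (e k * τ - μ) * β k ε) =Θ[(l : Filter ℝ)] fun _ => (1 : ℝ) := by
  have hpos : ∀ᶠ ε in (l : Filter ℝ), 0 < ε := hl self_mem_nhdsWithin
  obtain ⟨k, j, hjk, hk, hj, hO, hΘ⟩ := exists_dominant_monomials_of_root l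
    (fun k => hy.mono fun ε hε => (Real.rpow_pos_of_pos hε (e k)).ne') hU hzero hne
  have hlead {i : ι} (h : ∀ᶠ ε in (l : Filter ℝ), β i ε ≠ 0) :
      ∃ γ : ℝ, β i =Θ[(l : Filter ℝ)] fun ε => ε ^ γ :=
    ((hβ i).exists_isTheta_rpow (h.frequently.filter_mono hl)).imp fun _ h => h.mono hl
  obtain ⟨γ, hγ⟩ := hlead hk
  obtain ⟨δ, hδ⟩ := hlead hj
  have hτ : y =Θ[(l : Filter ℝ)] fun ε => ε ^ ((γ - δ) / (e j - e k)) :=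
    isTheta_rpow_of_isTheta_mul_rpow hl hy (he.ne hjk)
      ((hδ.symm.mul (isTheta_refl _ _)).trans (hΘ.trans (hγ.mul (isTheta_refl _ _))))
  set τ := (γ - δ) / (e j - e k)
  have hmonomial (i : ι) : (fun ε => y ε ^ e i) =Θ[(l : Filter ℝ)] fun ε => ε ^ (e i * τ) := by
    refine (IsTheta.rpow (hy.mono fun ε hε => hε.le)
      (hpos.mono fun ε hε => (Real.rpow_pos_of_pos hε τ).le) hτ).trans_eventuallyEq ?_
    filter_upwards [hpos] with ε hε
    rw [mul_comm, Real.rpow_mul hε.le]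
  have hscale (i : ι) : (fun ε => ε ^ (e i * τ - (γ + e k * τ)) * β i ε) =Θ[(l : Filter ℝ)]
      fun ε => β i ε * y ε ^ e i * (ε ^ (γ + e k * τ))⁻¹ := by
    refine EventuallyEq.trans_isTheta ?_
      (((isTheta_refl _ _).mul (hmonomial i).symm).mul (isTheta_refl _ _))
    filter_upwards [hpos] with ε hε
    rw [Real.rpow_sub hε]
    ring
  have hunit : (fun ε => β k ε * y ε ^ e k * (ε ^ (γ + e k * τ))⁻¹) =Θ[(l : Filter ℝ)]
      fun _ => (1 : ℝ) := by
    refine ((hγ.mul (hmonomial k)).mul (isTheta_refl _ _)).trans_eventuallyEq ?_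
    filter_upwards [hpos] with ε hε
    rw [← Real.rpow_add hε, mul_inv_cancel₀ (Real.rpow_pos_of_pos hε _).ne']
  exact ⟨τ, γ + e k * τ, hτ, fun i => (hscale i).trans_isBigO
    (((hO i).mul (isBigO_refl _ _)).trans_isTheta hunit), k, (hscale k).trans hunit⟩

lemma exists_newton_coefficients {ι : Type*} [Fintype ι] {β : ι → ℝ → ℝ}
    (hβ : ∀ k, IsPuiseux (β k)) {e : ι → ℝ} (he : Function.Injective e) {l : Ultrafilter ℝ}
    (hl : (l : Filter ℝ) ≤ 𝓝[>] 0) {y : ℝ → ℝ} (hy : ∀ᶠ ε in (l : Filter ℝ), 0 < y ε)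
    {U : ι → ℝ → ℝ} (hU : ∀ k, U k =Θ[(l : Filter ℝ)] fun _ => (1 : ℝ))
    (hzero : ∀ᶠ ε in (l : Filter ℝ), ∑ k, β k ε * y ε ^ e k * U k ε = 0)
    (hne : ∃ k, ∀ᶠ ε in (l : Filter ℝ), β k ε ≠ 0) :
    ∃ (τ μ : ℝ) (b : ι → ℝ), (y =Θ[(l : Filter ℝ)] fun ε => ε ^ τ) ∧ (∃ k, b k ≠ 0) ∧
      ∀ k, IsGenPowerSeries fun ε => ε ^ (e k * τ - μ) * β k ε - b k := by
  obtain ⟨τ, μ, hτ, hO, k₀, hk₀⟩ := exists_newton_slope hβ he hl hy hU hzero hne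
  choose b hb using fun k =>
    ((hβ k).rpow_mul (e k * τ - μ)).exists_isGenPowerSeries_sub_const hl (hO k)
  refine ⟨τ, μ, b, hτ, ⟨k₀, fun hb0 => ?_⟩, hb⟩
  have hlim0 := (hb k₀).tendsto_zero.mono_left hl
  simp only [hb0, sub_zero] at hlim0
  exact one_ne_zero (tendsto_nhds_unique tendsto_const_nhds (hk₀.tendsto_zero_iff.mp hlim0))

lemma exists_tendsto_of_isTheta_one {X : Type*} (l : Ultrafilter X) {f : X → ℝ}
    (h : f =Θ[(l : Filter X)] fun _ => (1 : ℝ)) : ∃ c ≠ 0, Tendsto f l (𝓝 c) := by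
  obtain ⟨C, hC⟩ := h.1.bound
  obtain ⟨c, -, hc⟩ := (isCompact_closedBall (0 : ℝ) C).ultrafilter_le_nhds (l.map f)
    (le_principal_iff.mpr (hC.mono fun x hx => by simpa using hx))
  refine ⟨c, ?_, hc⟩
  rintro rfl
  exact one_ne_zero (tendsto_nhds_unique tendsto_const_nhds (h.tendsto_zero_iff.mp hc))

lemma exists_tendsto_div_rpow_of_isTheta {l : Ultrafilter ℝ} (hl : (l : Filter ℝ) ≤ 𝓝[>] 0)
    {y : ℝ → ℝ} {τ : ℝ} (h : y =Θ[(l : Filter ℝ)] fun ε => ε ^ τ) :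
    ∃ c ≠ 0, Tendsto (fun ε => y ε / ε ^ τ) l (𝓝 c) := by
  refine exists_tendsto_of_isTheta_one l ((h.div (isTheta_refl _ _)).trans_eventuallyEq ?_)
  filter_upwards [hl self_mem_nhdsWithin] with ε hε
  exact div_self (Real.rpow_pos_of_pos hε τ).ne'

/-- If `b k + u k` stands for `ε ^ (e k * τ - μ) * β k`, this is the function of `w` obtained from
`ε ^ (-μ) * ∑ k, β k * y ^ e k * U k (x, y)` by the substitution `y = ε ^ τ * (c + w)`.  The point
`p` collects `x`, the `u k`, the value of `ε ^ τ` and `w`, all of which tend to `0`. -/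
def newtonTransform {ι E : Type*} [Fintype ι] (e : ι → ℕ) (U : ι → E × ℝ → ℝ) (b : ι → ℝ) (c : ℝ)
    (p : (E × (ι → ℝ) × ℝ) × ℝ) : ℝ :=
  ∑ k, (b k + p.1.2.1 k) * (c + p.2) ^ e k * U k (p.1.1, p.1.2.2 * (c + p.2))

lemma analyticAt_newtonTransform {ι E : Type*} [Fintype ι] [NormedAddCommGroup E] [NormedSpace ℝ E]
    (e : ι → ℕ) {U : ι → E × ℝ → ℝ} (hU : ∀ k, AnalyticAt ℝ (U k) 0) (b : ι → ℝ) (c : ℝ) :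
    AnalyticAt ℝ (newtonTransform e U b c) 0 := by
  have hx : AnalyticAt ℝ (fun p : (E × (ι → ℝ) × ℝ) × ℝ => p.1.1) 0 :=
    analyticAt_fst.comp analyticAt_fst
  have hu (k : ι) : AnalyticAt ℝ (fun p : (E × (ι → ℝ) × ℝ) × ℝ => p.1.2.1 k) 0 :=
    ((ContinuousLinearMap.proj (R := ℝ) (φ := fun _ : ι => ℝ) k).analyticAt _).comp
      (analyticAt_fst.comp (analyticAt_snd.comp analyticAt_fst))
  have hs : AnalyticAt ℝ (fun p : (E × (ι → ℝ) × ℝ) × ℝ => p.1.2.2) 0 :=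
    analyticAt_snd.comp (analyticAt_snd.comp analyticAt_fst)
  have hw : AnalyticAt ℝ (fun p : (E × (ι → ℝ) × ℝ) × ℝ => c + p.2) 0 :=
    analyticAt_const.add analyticAt_snd
  exact Finset.analyticAt_fun_sum _ fun k _ => ((analyticAt_const.add (hu k)).mul (hw.pow _)).mul
    (AnalyticAt.comp_of_eq (hU k) (hx.prod (hs.mul hw)) (by simp))

lemma newtonTransform_eq {ι E : Type*} [Fintype ι] (e : ι → ℕ) (U : ι → E × ℝ → ℝ) (b β : ι → ℝ)
    (x : E) {ε : ℝ} (hε : 0 < ε) (τ μ c y : ℝ) :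
    newtonTransform e U b c
        ((x, fun k => ε ^ (e k * τ - μ) * β k - b k, ε ^ τ), y / ε ^ τ - c) =
      ε ^ (-μ) * ∑ k, β k * y ^ e k * U k (x, y) := by
  have hτ : ε ^ τ ≠ 0 := (Real.rpow_pos_of_pos hε τ).ne'
  simp only [newtonTransform, add_sub_cancel, mul_div_cancel₀ _ hτ, Finset.mul_sum]
  refine Finset.sum_congr rfl fun k _ => ?_
  have hscale : ε ^ (e k * τ - μ) = ε ^ (-μ) * (ε ^ τ) ^ e k := by
    rw [← Real.rpow_mul_natCast hε.le, ← Real.rpow_add hε]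
    ring_nf
  rw [hscale, div_pow]
  field_simp

lemma exists_newtonTransform_eq_zero {ι E : Type*} [Fintype ι] [TopologicalSpace E]
    [Zero E] {β : ι → ℝ → ℝ} (hβ : ∀ k, IsPuiseux (β k)) {e : ι → ℕ}
    (he : Function.Injective e) {U : ι → E × ℝ → ℝ} (hU : ∀ k, ContinuousAt (U k) 0)
    (hU0 : ∀ k, U k 0 ≠ 0) {l : Ultrafilter ℝ} (hl : (l : Filter ℝ) ≤ 𝓝[>] 0) {v : ℝ → E}
    (hv : Tendsto v l (𝓝 0)) {y : ℝ → ℝ} (hy : Tendsto y l (𝓝 0))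
    (hy0 : ∀ᶠ ε in (l : Filter ℝ), y ε ≠ 0)
    (hzero : ∀ᶠ ε in (l : Filter ℝ), ∑ k, β k ε * y ε ^ e k * U k (v ε, y ε) = 0)
    (hne : ∃ k, ∀ᶠ ε in (l : Filter ℝ), β k ε ≠ 0) :
    ∃ τ : ℝ, 0 < τ ∧ ∃ c : ℝ, c ≠ 0 ∧ ∃ (b : ι → ℝ) (u : ι → ℝ → ℝ), (∃ k, b k ≠ 0) ∧
      (∀ k, IsGenPowerSeries (u k)) ∧ Tendsto (fun ε => y ε / ε ^ τ - c) l (𝓝 0) ∧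
      ∀ᶠ ε in (l : Filter ℝ),
        newtonTransform e U b c ((v ε, fun k => u k ε, ε ^ τ), y ε / ε ^ τ - c) = 0 := by
  have hUlim (k : ι) : Tendsto (fun ε => U k (v ε, y ε)) l (𝓝 (U k 0)) :=
    (hU k).tendsto.comp (hv.prodMk_nhds hy)
  have hUunit (k : ι) : (fun ε => SignType.sign (y ε) ^ e k * U k (v ε, y ε)) =Θ[(l : Filter ℝ)]
      fun _ => (1 : ℝ) := by
    refine IsTheta.trans (.of_norm_eventuallyEq_norm ?_)
      (((isEquivalent_const_iff_tendsto (hU0 k)).mpr (hUlim k)).isTheta.trans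
        (isTheta_const_const (hU0 k) one_ne_zero))
    filter_upwards [hy0] with ε hε
    rcases hε.lt_or_gt with h | h <;> simp [h]
  obtain ⟨τ, μ, b, hτ, hb, hu⟩ := exists_newton_coefficients hβ (Nat.cast_injective.comp he) hl
    (hy0.mono fun ε => abs_pos.mpr) hUunit (hzero.mono fun ε hε => by
      rw [← hε]
      refine Finset.sum_congr rfl fun k _ => ?_
      simp only [Function.comp_apply, Real.rpow_natCast]
      rw [mul_assoc, ← mul_assoc (|y ε| ^ e k), ← mul_pow, abs_mul_sign, mul_assoc]) hne
  replace hτ : y =Θ[(l : Filter ℝ)] fun ε => ε ^ τ := hτ.of_norm_left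
  have hτpos : 0 < τ := by
    by_contra! hτ0
    refine zero_lt_one.not_ge (ge_of_tendsto (hτ.tendsto_zero_iff.mp hy) ?_)
    filter_upwards [hl (Ioo_mem_nhdsGT one_pos)] with ε hε
    exact Real.one_le_rpow_of_pos_of_le_one_of_nonpos hε.1 hε.2.le hτ0
  obtain ⟨c, hc, hlim⟩ := exists_tendsto_div_rpow_of_isTheta hl hτ
  refine ⟨τ, hτpos, c, hc, b, _, hb, hu, by simpa using hlim.sub_const c, ?_⟩
  filter_upwards [hzero, hl self_mem_nhdsWithin] with ε hzero hε
  exact (newtonTransform_eq e U b (fun k => β k ε) _ hε τ μ c _).trans (by rw [hzero, mul_zero])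

lemma iteratedDeriv_eval_const_add_zero (P : Polynomial ℝ) (c : ℝ) (k : ℕ) :
    iteratedDeriv k (fun w => P.eval (c + w)) 0 = (Polynomial.derivative^[k] P).eval c := by
  rw [iteratedDeriv_comp_const_add k (fun w => P.eval w) c]
  simp only [add_zero, iteratedDeriv_eq_iterate]
  induction k generalizing P with
  | zero => rfl
  | succ k ih =>
    rw [Function.iterate_succ_apply, Function.iterate_succ_apply, ← ih]
    exact congrFun (congrArg _ (funext fun w => P.deriv)) c

lemma exists_iteratedDeriv_eval_ne_zero {P : Polynomial ℝ} (hP : P ≠ 0) {m : ℕ}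
    (hdeg : P.natDegree ≤ m + 1) (hcoeff : P.coeff m = 0) {c : ℝ} (hc : c ≠ 0) :
    ∃ k ≤ m, iteratedDeriv k (fun w => P.eval (c + w)) 0 ≠ 0 := by
  simp only [iteratedDeriv_eval_const_add_zero]
  by_contra! hroot
  obtain ⟨Q, rfl⟩ : (Polynomial.X - Polynomial.C c) ^ (m + 1) ∣ P :=
    (Polynomial.le_rootMultiplicity_iff hP).mp
      ((Polynomial.lt_rootMultiplicity_iff_isRoot_iterate_derivative hP).mpr hroot)
  have hQ : Q ≠ 0 := right_ne_zero_of_mul hP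
  rw [Polynomial.natDegree_mul (left_ne_zero_of_mul hP) hQ, Polynomial.natDegree_pow,
    Polynomial.natDegree_X_sub_C, mul_one, add_le_iff_nonpos_right, nonpos_iff_eq_zero] at hdeg
  obtain ⟨a, rfl⟩ := Polynomial.natDegree_eq_zero.mp hdeg
  rw [Polynomial.coeff_mul_C, sub_eq_add_neg, ← Polynomial.C_neg, Polynomial.coeff_X_add_C_pow,
    add_tsub_cancel_left, pow_one, Nat.choose_succ_self_right] at hcoeff
  have ha : a ≠ 0 := by simpa using hQ
  exact mul_ne_zero (mul_ne_zero (neg_ne_zero.mpr hc) (by positivity)) ha hcoeff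

lemma exists_iteratedDeriv_newtonTransform_ne_zero {ι E : Type*} [Fintype ι]
    [Zero E] {e : ι → ℕ} (he : Function.Injective e) {m : ℕ}
    (hle : ∀ k, e k ≤ m + 1) (hm : ∀ k, e k ≠ m) {U : ι → E × ℝ → ℝ} (hU0 : ∀ k, U k 0 ≠ 0)
    {b : ι → ℝ} (hb : ∃ k, b k ≠ 0) {c : ℝ} (hc : c ≠ 0) :
    ∃ k ≤ m, iteratedDeriv k (fun w => newtonTransform e U b c (0, w)) 0 ≠ 0 := by
  set P : Polynomial ℝ := ∑ k, Polynomial.monomial (e k) (b k * U k 0) with hPdef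
  have hcoeff (n : ℕ) : P.coeff n = ∑ k, if e k = n then b k * U k 0 else 0 := by
    simp only [hPdef, Polynomial.finsetSum_coeff, Polynomial.coeff_monomial]
  have hP : P ≠ 0 := by
    obtain ⟨k, hk⟩ := hb
    intro hP0
    have hk0 := hcoeff (e k)
    rw [hP0, Polynomial.coeff_zero, Finset.sum_eq_single k (fun j _ hj => if_neg (he.ne hj))
      (fun h => absurd (Finset.mem_univ k) h), if_pos rfl] at hk0
    exact mul_ne_zero hk (hU0 k) hk0.symm
  have hdeg : P.natDegree ≤ m + 1 := Polynomial.natDegree_sum_le_of_forall_le _ _ fun k _ =>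
    (Polynomial.natDegree_monomial_le _).trans (hle k)
  obtain ⟨k, hk, hne⟩ := exists_iteratedDeriv_eval_ne_zero hP hdeg
    (by rw [hcoeff]; exact Finset.sum_eq_zero fun k _ => if_neg (hm k)) hc
  refine ⟨k, hk, ?_⟩
  have heval : (fun w => newtonTransform e U b c (0, w)) = fun w => P.eval (c + w) := by
    funext w
    simp only [newtonTransform, hPdef, Polynomial.eval_finsetSum, Polynomial.eval_monomial,
      Prod.fst_zero, Prod.snd_zero, Pi.zero_apply, add_zero, zero_mul, Prod.mk_zero_zero]
    exact Finset.sum_congr rfl fun k _ => by ring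
  rwa [heval]

lemma exists_newtonTransform_of_tschirnhaus {E : Type*} [NormedAddCommGroup E] [NormedSpace ℝ E]
    {m : ℕ} {B : ℕ → E → ℝ} (hB : ∀ k, AnalyticAt ℝ (B k) 0) {H : E × ℝ → ℝ}
    (hH : AnalyticAt ℝ H 0) (hH0 : H 0 ≠ 0) {v : ℝ → E} (hv : IsGenPowerSeries v)
    {l : Ultrafilter ℝ} (hl : (l : Filter ℝ) ≤ 𝓝[>] 0) {y : ℝ → ℝ} (hy : Tendsto y l (𝓝 0))
    (hy0 : ∀ᶠ ε in (l : Filter ℝ), y ε ≠ 0)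
    (hzero : ∀ᶠ ε in (l : Filter ℝ), ∑ k ∈ Finset.range m, B k (v ε) * y ε ^ k +
      y ε ^ (m + 1) * H (v ε, y ε) = 0) :
    ∃ (Ψ : (E × (Option (Fin m) → ℝ) × ℝ) × ℝ → ℝ) (τ c : ℝ)
      (u : ℝ → (Option (Fin m) → ℝ) × ℝ), AnalyticAt ℝ Ψ 0 ∧ 0 < τ ∧
      (∃ k ≤ m, iteratedDeriv k (fun w => Ψ (0, w)) 0 ≠ 0) ∧ IsGenPowerSeries u ∧
      Tendsto (fun ε => y ε / ε ^ τ - c) l (𝓝 0) ∧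
      ∀ᶠ ε in (l : Filter ℝ), Ψ ((v ε, u ε), y ε / ε ^ τ - c) = 0 := by
  let e : Option (Fin m) → ℕ := fun k => k.elim (m + 1) (↑)
  let β : Option (Fin m) → ℝ → ℝ := fun k ε => k.elim 1 fun k => B k (v ε)
  let U : Option (Fin m) → E × ℝ → ℝ := fun k => k.elim H fun _ _ => 1
  have he : Function.Injective e := by
    rintro (_ | i) (_ | j) hij <;> simp only [e, Option.elim] at hij <;> grind
  have hU (k) : AnalyticAt ℝ (U k) 0 := by
    cases k with
    | none => exact hH
    | some k => exact analyticAt_const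
  have hU0 (k) : U k 0 ≠ 0 := by
    cases k with
    | none => exact hH0
    | some k => exact one_ne_zero
  have hβ (k) : IsPuiseux (β k) := by
    cases k with
    | none => exact isPuiseux_const 1
    | some k =>
      refine ((hv.comp_analyticAt ((hB k).sub (analyticAt_const (v := B k 0)))
        (sub_self _)).isPuiseux_const_add (B k 0)).congr ?_
      exact .of_forall fun ε => (add_sub_cancel _ _).symm
  have hzero' : ∀ᶠ ε in (l : Filter ℝ), ∑ k, β k ε * y ε ^ e k * U k (v ε, y ε) = 0 := by
    filter_upwards [hzero] with ε hε
    simpa [Fintype.sum_option, e, β, U, Finset.sum_range, add_comm] using hε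
  obtain ⟨τ, hτ, c, hc, b, u, hb, hu, hlim, hroot⟩ :=
    exists_newtonTransform_eq_zero hβ he (fun k => (hU k).continuousAt) hU0 hl
      (hv.tendsto_zero.mono_left hl) hy hy0 hzero' ⟨none, .of_forall fun _ => one_ne_zero⟩
  refine ⟨_, τ, c, _, analyticAt_newtonTransform e hU b c, hτ, ?_,
    (IsGenPowerSeries.pi hu).prodMk (isGenPowerSeries_rpow hτ), hlim, hroot⟩
  refine exists_iteratedDeriv_newtonTransform_ne_zero he (fun k => ?_) (fun k => ?_) hU0 hb hc <;>
    cases k <;> simp only [e, Option.elim] <;> lia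

/-- A root along an ultrafilter which tends to zero is a generalized power series: by Tschirnhaus
and Newton, `y = ψ + ε ^ τ * (c + w)` where `w` is again a root, of lower order. -/
theorem exists_isGenPowerSeries_eq_of_root {E : Type} [NormedAddCommGroup E] [NormedSpace ℝ E]
    [CompleteSpace E] {Φ : E × ℝ → ℝ} (hΦ : AnalyticAt ℝ Φ 0) {n : ℕ}
    (hne : iteratedDeriv n (fun y => Φ (0, y)) 0 ≠ 0) {v : ℝ → E} (hv : IsGenPowerSeries v)
    {l : Ultrafilter ℝ} (hl : (l : Filter ℝ) ≤ 𝓝[>] 0) {y : ℝ → ℝ} (hy : Tendsto y l (𝓝 0))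
    (hroot : ∀ᶠ ε in (l : Filter ℝ), Φ (v ε, y ε) = 0) :
    ∃ z, IsGenPowerSeries z ∧ y =ᶠ[(l : Filter ℝ)] z := by
  induction n using Nat.strong_induction_on generalizing E Φ v y with
  | _ n ih =>
  rcases n with _ | m
  · have hlim := hΦ.continuousAt.tendsto.comp ((hv.tendsto_zero.mono_left hl).prodMk_nhds hy)
    rw [iteratedDeriv_zero] at hne
    exact absurd (tendsto_nhds_unique (hlim.congr' hroot) tendsto_const_nhds) hne
  by_cases hm : iteratedDeriv m (fun y => Φ (0, y)) 0 = 0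
  swap
  · exact ih m (by lia) hΦ hm hv hy hroot
  obtain ⟨ψ, B, H, hψ, hψ0, hB, hH, hH0, hexp⟩ := exists_tschirnhaus hΦ hm hne
  have hψv := hv.comp_analyticAt hψ hψ0
  have hshift : Tendsto (fun ε => y ε - ψ (v ε)) l (𝓝 0) := by
    simpa using hy.sub (hψv.tendsto_zero.mono_left hl)
  rcases l.em (fun ε => y ε - ψ (v ε) = 0) with h0 | h0
  · exact ⟨_, hψv, h0.mono fun ε hε => sub_eq_zero.mp hε⟩
  obtain ⟨Ψ, τ, c, u, hΨ, hτ, ⟨k, hk, hkne⟩, hu, hlim, hroot'⟩ :=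
    exists_newtonTransform_of_tschirnhaus hB hH hH0 hv hl hshift h0 (by
      filter_upwards [hroot, ((hv.tendsto_zero.mono_left hl).prodMk_nhds hshift).eventually hexp]
        with ε hε hexpε
      rwa [← hexpε, sub_add_cancel])
  obtain ⟨z, hz, heq⟩ := ih k (by lia) hΨ hkne (hv.prodMk hu) hlim hroot'
  have hpow := isGenPowerSeries_rpow hτ
  refine ⟨_, hψv.add ((hpow.const_mul c).add (hpow.mul hz)), ?_⟩
  filter_upwards [heq, hl self_mem_nhdsWithin] with ε hε hpos
  have : ε ^ τ ≠ 0 := (Real.rpow_pos_of_pos hpos τ).ne'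
  rw [← hε]
  field_simp
  ring

end NewtonPolygon

/-! ### Roots of univariate generalized polynomials -/

lemma encard_zeros_le_encard_zeros_deriv_add_one {f f' : ℝ → ℝ} {S : Set ℝ} (hS : S.OrdConnected)
    (hf : ∀ x ∈ S, HasDerivAt f (f' x) x) :
    {x ∈ S | f x = 0}.encard ≤ {x ∈ S | f' x = 0}.encard + 1 := by
  rcases Set.finite_or_infinite {x ∈ S | f' x = 0} with hfin | hinf
  swap
  · simp [hinf.encard_eq]
  by_contra! hlt
  obtain ⟨T, hT, hcard⟩ := Set.exists_subset_encard_eq (Order.add_one_le_of_lt hlt)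
  rw [hfin.encard_eq_coe_toFinset_card] at hcard
  lift T to Finset ℝ using Set.encard_lt_top_iff.mp (hcard ▸ WithTop.coe_lt_top _)
  rw [Set.encard_coe_eq_coe_finsetCard] at hcard
  norm_cast at hcard
  have := Finset.card_le_of_interleaved (s := T) (t := hfin.toFinset) fun x hx y hy hxy _ => by
    have hsub : Icc x y ⊆ S := hS.out (hT hx).1 (hT hy).1
    obtain ⟨z, hz, hz0⟩ := exists_hasDerivAt_eq_zero hxy
      (fun z hz => (hf z (hsub hz)).continuousAt.continuousWithinAt)
      ((hT hx).2.trans (hT hy).2.symm) fun z hz => hf z (hsub (Ioo_subset_Icc_self hz))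
    exact ⟨z, hfin.mem_toFinset.mpr ⟨hsub (Ioo_subset_Icc_self hz), hz0⟩, hz⟩
  lia

lemma hasDerivAt_sum_mul_rpow {ι : Type*} (s : Finset ι) (a α : ι → ℝ) {x : ℝ} (hx : x ≠ 0) :
    HasDerivAt (fun x => ∑ k ∈ s, a k * x ^ α k) (∑ k ∈ s, a k * α k * x ^ (α k - 1)) x := by
  simp only [mul_assoc]
  exact .fun_sum fun k _ => (Real.hasDerivAt_rpow_const (.inl hx)).const_mul _

lemma sum_mul_rpow_sub {ι : Type*} (s : Finset ι) (a α : ι → ℝ) {x : ℝ} (hx : 0 < x) (r : ℝ) :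
    ∑ k ∈ s, a k * x ^ (α k - r) = (∑ k ∈ s, a k * x ^ α k) / x ^ r := by
  simp only [Real.rpow_sub hx, mul_div_assoc', Finset.sum_div]

/-- Weak Descartes rule of signs: dividing by one of the monomials, Rolle's theorem removes it. -/
theorem encard_pos_zeros_lt_card {ι : Type*} {s : Finset ι} {a α : ι → ℝ} (hα : InjOn α s)
    (hne : ∃ k ∈ s, a k ≠ 0) :
    {x ∈ Ioi (0 : ℝ) | ∑ k ∈ s, a k * x ^ α k = 0}.encard < s.card := by
  classical
  induction s using Finset.induction_on generalizing a α with
  | empty => simp at hne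
  | insert k₀ s hk₀ ih =>
  rw [Finset.card_insert_of_notMem hk₀]
  by_cases hs : ∃ k ∈ s, a k ≠ 0
  swap
  · push Not at hs
    have hak₀ : a k₀ ≠ 0 := by
      obtain ⟨k, hk, hak⟩ := hne
      rcases Finset.mem_insert.mp hk with rfl | hk
      exacts [hak, absurd (hs k hk) hak]
    have hempty : {x ∈ Ioi (0 : ℝ) | ∑ k ∈ insert k₀ s, a k * x ^ α k = 0} = ∅ := by
      refine Set.eq_empty_iff_forall_notMem.mpr fun x ⟨hx, h0⟩ => ?_
      rw [Finset.sum_insert hk₀, Finset.sum_eq_zero fun k hk => by rw [hs k hk, zero_mul],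
        add_zero] at h0
      exact mul_ne_zero hak₀ (Real.rpow_pos_of_pos hx _).ne' h0
    rw [hempty, Set.encard_empty]
    exact_mod_cast Nat.succ_pos _
  have hdist (k : ι) (hk : k ∈ s) : α k - α k₀ ≠ 0 := sub_ne_zero.mpr fun h =>
    hk₀ (hα (Finset.mem_insert_of_mem hk) (Finset.mem_insert_self _ _) h ▸ hk)
  have hlt := ih (a := fun k => a k * (α k - α k₀)) (α := fun k => α k - α k₀ - 1)
    (fun i hi j hj hij => hα (Finset.mem_insert_of_mem hi) (Finset.mem_insert_of_mem hj)
      (sub_left_injective (sub_left_injective hij)))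
    (hs.imp fun k hk => ⟨hk.1, mul_ne_zero hk.2 (hdist k hk.1)⟩)
  have hle := encard_zeros_le_encard_zeros_deriv_add_one ordConnected_Ioi fun x (hx : 0 < x) =>
    hasDerivAt_sum_mul_rpow (insert k₀ s) a (fun k => α k - α k₀) hx.ne'
  have hderiv (x : ℝ) : ∑ k ∈ insert k₀ s, a k * (α k - α k₀) * x ^ (α k - α k₀ - 1) =
      ∑ k ∈ s, a k * (α k - α k₀) * x ^ (α k - α k₀ - 1) := by
    rw [Finset.sum_insert hk₀, sub_self, mul_zero, zero_mul, zero_add]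
  have hzeros : {x ∈ Ioi (0 : ℝ) | ∑ k ∈ insert k₀ s, a k * x ^ (α k - α k₀) = 0} =
      {x ∈ Ioi (0 : ℝ) | ∑ k ∈ insert k₀ s, a k * x ^ α k = 0} :=
    Set.ext fun x => and_congr_right fun hx => by
      rw [sum_mul_rpow_sub _ _ _ hx, div_eq_zero_iff,
        or_iff_left (Real.rpow_pos_of_pos hx _).ne']
  simp only [hderiv, hzeros] at hle
  rw [Nat.cast_add_one]
  exact hle.trans_lt ((ENat.add_lt_add_iff_right (by simp)).mpr hlt)

lemma exists_iteratedDeriv_ne_zero {f : ℝ → ℝ} {x : ℝ} (hf : AnalyticAt ℝ f x)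
    (hne : ¬∀ᶠ y in 𝓝 x, f y = 0) : ∃ n, iteratedDeriv n f x ≠ 0 := by
  by_contra! hzero
  have hp := hf.hasFPowerSeriesAt
  have hp0 : FormalMultilinearSeries.ofScalars ℝ (fun n => iteratedDeriv n f x / n.factorial) =
      0 := by
    ext n
    simp [hzero]
  exact hne (hp0 ▸ hp).eventually_eq_zero

lemma analyticAt_const_add_rpow {E : Type*} [NormedAddCommGroup E] [NormedSpace ℝ E] {c : ℝ}
    (hc : c ≠ 0) (a : ℝ) : AnalyticAt ℝ (fun p : E × ℝ => (c + p.2) ^ a) 0 :=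
  .fun_comp (g := fun x => x ^ a) (by simpa using analyticAt_rpow_const hc a)
    (analyticAt_const.add analyticAt_snd)

lemma exists_iteratedDeriv_sum_const_add_rpow_ne_zero {ι : Type*} [Fintype ι] {b α : ι → ℝ}
    (hα : Function.Injective α) (hb : ∃ k, b k ≠ 0) {c : ℝ} (hc : 0 < c) :
    ∃ n, iteratedDeriv n (fun y => ∑ k, b k * (c + y) ^ α k) 0 ≠ 0 := by
  have hfin := Set.encard_lt_top_iff.mp <| lt_top_of_lt <|
    encard_pos_zeros_lt_card hα.injOn (hb.imp fun k hk => ⟨Finset.mem_univ k, hk⟩)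
  refine exists_iteratedDeriv_ne_zero ?_ fun hzero => ?_
  · refine Finset.analyticAt_fun_sum _ fun k _ => analyticAt_const.mul ?_
    exact (analyticAt_const_add_rpow hc.ne' (α k)).fun_comp (f := fun y : ℝ => ((0 : ℝ), y))
      (by fun_prop)
  · have hnhds := hzero.and (lt_mem_nhds (neg_neg_iff_pos.mpr hc))
    refine infinite_of_mem_nhds 0 hnhds ((hfin.preimage (f := fun y => c + y)
      (add_right_injective c).injOn).subset fun y hy => ⟨?_, hy.1⟩)
    exact neg_lt_iff_pos_add'.mp hy.2

lemma analyticAt_sum_add_mul_const_add_rpow {ι : Type*} [Fintype ι] (b α : ι → ℝ) {c : ℝ}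
    (hc : c ≠ 0) :
    AnalyticAt ℝ (fun p : (ι → ℝ) × ℝ => ∑ k, (b k + p.1 k) * (c + p.2) ^ α k) 0 := by
  refine Finset.analyticAt_fun_sum _ fun k _ =>
    (analyticAt_const.add ?_).mul (analyticAt_const_add_rpow hc (α k))
  exact ((ContinuousLinearMap.proj k).comp (ContinuousLinearMap.fst ℝ (ι → ℝ) ℝ)).analyticAt 0

lemma sum_rescaled_mul_div_rpow {ι : Type*} [Fintype ι] (a α : ι → ℝ) {x ε : ℝ} (hx : 0 < x)
    (hε : 0 < ε) (τ μ : ℝ) :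
    ∑ k, ε ^ (α k * τ - μ) * a k * (x / ε ^ τ) ^ α k = ε ^ (-μ) * ∑ k, a k * x ^ α k := by
  rw [Finset.mul_sum]
  refine Finset.sum_congr rfl fun k _ => ?_
  rw [Real.div_rpow hx.le (Real.rpow_nonneg hε.le _), ← Real.rpow_mul hε.le, sub_eq_add_neg,
    Real.rpow_add hε, mul_comm τ]
  have := (Real.rpow_pos_of_pos hε (α k * τ)).ne'
  field_simp

/-- Along an ultrafilter, a positive root of a generalized polynomial with Puiseux coefficients is
a generalized Puiseux germ. -/
theorem exists_isPuiseux_eq_of_sum_eq_zero {ι : Type} [Fintype ι] {a : ι → ℝ → ℝ}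
    (ha : ∀ k, IsPuiseux (a k)) {α : ι → ℝ} (hα : Function.Injective α)
    (hne : ∃ k, ¬∀ᶠ ε in 𝓝[>] 0, a k ε = 0) {l : Ultrafilter ℝ} (hl : (l : Filter ℝ) ≤ 𝓝[>] 0)
    {x : ℝ → ℝ} (hx : ∀ᶠ ε in (l : Filter ℝ), 0 < x ε)
    (hzero : ∀ᶠ ε in (l : Filter ℝ), ∑ k, a k ε * x ε ^ α k = 0) :
    ∃ z, IsPosPuiseux z ∧ x =ᶠ[(l : Filter ℝ)] z := by
  obtain ⟨τ, μ, b, hτ, hb, hu⟩ := exists_newton_coefficients ha hα hl hx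
    (U := fun _ _ => 1) (fun _ => isTheta_refl _ _) (by simpa only [mul_one] using hzero)
    (hne.imp fun k hk => l.eventually_not.mpr fun h => hk ((ha k).eventually_eq_zero hl h))
  obtain ⟨c, hc0, hlim⟩ := exists_tendsto_div_rpow_of_isTheta hl hτ
  have hpos : ∀ᶠ ε : ℝ in 𝓝[>] 0, 0 < ε := self_mem_nhdsWithin
  have hc : 0 < c := hc0.symm.lt_of_le <| ge_of_tendsto hlim <| by
    filter_upwards [hx, hl hpos] with ε hx hε
    exact (div_pos hx (Real.rpow_pos_of_pos hε τ)).le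
  obtain ⟨n, hn⟩ := exists_iteratedDeriv_sum_const_add_rpow_ne_zero hα hb hc
  obtain ⟨z, hz, hxz⟩ := exists_isGenPowerSeries_eq_of_root
    (analyticAt_sum_add_mul_const_add_rpow b α hc0) (n := n) (by simpa using hn)
    (IsGenPowerSeries.pi hu) hl (by simpa using hlim.sub_const c) (by
      filter_upwards [hzero, hl hpos, hx] with ε hzero hε hx
      simp only [add_sub_cancel]
      rw [sum_rescaled_mul_div_rpow _ _ hx hε, hzero, mul_zero])
  refine ⟨fun ε => ε ^ τ * (c + z ε), ⟨(hz.isPuiseux_const_add c).rpow_mul τ, ?_⟩, ?_⟩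
  · have hclim : Tendsto (fun ε => c + z ε) (𝓝[>] 0) (𝓝 c) := by
      simpa using hz.tendsto_zero.const_add c
    filter_upwards [hclim.eventually (lt_mem_nhds hc), hpos] with ε hcz hε
    exact mul_pos (Real.rpow_pos_of_pos hε _) hcz
  · filter_upwards [hxz, hl hpos] with ε hxz hε
    rw [← hxz, add_sub_cancel, mul_div_cancel₀ _ (Real.rpow_pos_of_pos hε τ).ne']

lemma IsPuiseux.sum_mul_rpow {ι : Type*} (s : Finset ι) {a : ι → ℝ → ℝ}
    (ha : ∀ k ∈ s, IsPuiseux (a k)) (α : ι → ℝ) {z : ℝ → ℝ} (hz : IsPosPuiseux z) :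
    IsPuiseux fun ε => ∑ k ∈ s, a k ε * z ε ^ α k :=
  .sum s fun k hk => (ha k hk).mul (hz.rpow_const (α k)).isPuiseux

lemma finite_of_injOn_germ_of_isRoot {ι : Type*} [Fintype ι] {a : ι → ℝ → ℝ}
    (ha : ∀ k, IsPuiseux (a k)) {α : ι → ℝ} (hα : Function.Injective α)
    (hne : ∃ k, ¬∀ᶠ ε in 𝓝[>] 0, a k ε = 0) {S : Set (ℝ → ℝ)} (hS : ∀ r ∈ S, IsPosPuiseux r)
    (hroot : ∀ r ∈ S, ∀ᶠ ε in 𝓝[>] 0, ∑ k, a k ε * r ε ^ α k = 0)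
    (hinj : InjOn (fun r : ℝ → ℝ => (r : Germ (𝓝[>] (0 : ℝ)) ℝ)) S) : S.Finite := by
  by_contra hinf
  obtain ⟨T, hTS, hcard⟩ := Set.Infinite.exists_subset_card_eq hinf (Fintype.card ι)
  have hgood : ∀ᶠ ε in 𝓝[>] 0, ∀ r ∈ T, 0 < r ε ∧ ∑ k, a k ε * r ε ^ α k = 0 :=
    T.eventually_all.mpr fun r hr => (hS r (hTS hr)).eventually_pos.and (hroot r (hTS hr))
  have hdist : ∀ᶠ ε in 𝓝[>] 0, ∀ r ∈ T, ∀ s ∈ T, r ε = s ε → r = s :=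
    T.eventually_all.mpr fun r hr => T.eventually_all.mpr fun s hs => by
      by_cases hrs : r = s
      · exact .of_forall fun _ _ => hrs
      · have hne : ¬r =ᶠ[𝓝[>] 0] s := fun h => hrs (hinj (hTS hr) (hTS hs) (Germ.coe_eq.mpr h))
        exact ((hS r (hTS hr)).isPuiseux.eventually_ne (hS s (hTS hs)).isPuiseux hne).mono
          fun ε hne heq => absurd heq hne
  obtain ⟨k, hk⟩ := hne
  obtain ⟨ε, ⟨hgood, hdist⟩, hk⟩ :=
    ((hgood.and hdist).and ((ha k).eventually_ne (isPuiseux_const 0) hk)).exists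
  refine (encard_pos_zeros_lt_card (s := Finset.univ) (a := fun k => a k ε) hα.injOn
    ⟨k, Finset.mem_univ k, hk⟩).not_ge ?_
  rw [Finset.card_univ, ← hcard, ← Set.encard_coe_eq_coe_finsetCard,
    ← (show InjOn (fun r : ℝ → ℝ => r ε) T from fun r hr s hs => hdist r hr s hs).encard_image]
  exact Set.encard_le_encard (Set.image_subset_iff.mpr fun r hr => hgood r hr)

lemma exists_ultrafilter_le_of_frequently {X : Type*} {f : Filter X} {p : X → Prop}
    (h : ∃ᶠ x in f, p x) :
    ∃ l : Ultrafilter X, (l : Filter X) ≤ f ∧ ∀ᶠ x in (l : Filter X), p x := by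
  have : (f ⊓ 𝓟 {x | p x}).NeBot := frequently_mem_iff_neBot.mp h
  exact ⟨.of (f ⊓ 𝓟 {x | p x}), (Ultrafilter.of_le _).trans inf_le_left,
    le_principal_iff.mp ((Ultrafilter.of_le _).trans inf_le_right)⟩

/-- The positive roots of a nonzero generalized polynomial with Puiseux coefficients are the values
of finitely many Puiseux germs: there are finitely many root germs by Descartes' rule, and a root
escaping from all of them would do so along an ultrafilter, where it is a root germ. -/
theorem exists_finset_isPosPuiseux_roots {ι : Type} [Fintype ι] {a : ι → ℝ → ℝ}
    (ha : ∀ k, IsPuiseux (a k)) {α : ι → ℝ} (hα : Function.Injective α)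
    (hne : ∃ k, ¬∀ᶠ ε in 𝓝[>] 0, a k ε = 0) :
    ∃ R : Finset (ℝ → ℝ),
      (∀ r ∈ R, IsPosPuiseux r ∧ ∀ᶠ ε in 𝓝[>] 0, ∑ k, a k ε * r ε ^ α k = 0) ∧
      ∀ᶠ ε in 𝓝[>] 0, ∀ x, 0 < x → ∑ k, a k ε * x ^ α k = 0 → ∃ r ∈ R, x = r ε := by
  obtain ⟨S, hS, hbij⟩ := Set.exists_subset_bijOn
    {r : ℝ → ℝ | IsPosPuiseux r ∧ ∀ᶠ ε in 𝓝[>] 0, ∑ k, a k ε * r ε ^ α k = 0}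
    (fun r : ℝ → ℝ => (r : Germ (𝓝[>] (0 : ℝ)) ℝ))
  have hfin := finite_of_injOn_germ_of_isRoot ha hα hne (fun r hr => (hS hr).1)
    (fun r hr => (hS hr).2) hbij.injOn
  refine ⟨hfin.toFinset, fun r hr => hS (hfin.mem_toFinset.mp hr), ?_⟩
  by_contra hcon
  simp only [not_eventually, not_forall, hfin.mem_toFinset] at hcon
  obtain ⟨l, hl, hx⟩ := exists_ultrafilter_le_of_frequently hcon
  obtain ⟨x, hx⟩ := hx.choice
  push Not at hx
  obtain ⟨z, hz, hxz⟩ := exists_isPuiseux_eq_of_sum_eq_zero ha hα hne hl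
    (hx.mono fun ε h => h.1) (hx.mono fun ε h => h.2.1)
  have hzroot := (IsPuiseux.sum_mul_rpow Finset.univ (fun k _ => ha k) α hz).eventually_eq_zero hl
    (hxz.mp (hx.mono fun ε h hxz => hxz ▸ h.2.1))
  obtain ⟨r, hr, hrz⟩ := hbij.surjOn ⟨z, ⟨hz, hzroot⟩, rfl⟩
  obtain ⟨ε, ⟨h, hxz⟩, hrz⟩ := ((hx.and hxz).and (hl (Germ.coe_eq.mp hrz))).exists
  exact h.2.2 r hr (hxz.trans hrz.symm)

/-! ### Signomials and the lattice they generate -/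

section Signomials

/-- The restriction to the open quadrant of a function given on the whole plane. Signomials are
handled as functions `ℝ → ℝ → ℝ` of which only this restriction matters. -/
def onQuadrant (f : ℝ → ℝ → ℝ) : PQ → ℝ := fun p => f p.1.1 p.1.2

lemma onQuadrant_congr {f g : ℝ → ℝ → ℝ} (h : ∀ x y, 0 < x → 0 < y → f x y = g x y) :
    onQuadrant f = onQuadrant g :=
  funext fun p => h _ _ p.2.1 p.2.2

/-- The space of generalized polynomial functions, as the span of the monomials. -/
def signomials : Submodule ℝ (PQ → ℝ) :=
  .span ℝ (range fun α : ℝ × ℝ => onQuadrant fun x y => x ^ α.1 * y ^ α.2)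

/-- A function on the plane which is a generalized polynomial on the open quadrant. -/
def IsSignomial (f : ℝ → ℝ → ℝ) : Prop := onQuadrant f ∈ signomials

/-- A function on the plane which on the open quadrant is a lattice polynomial of generalized
polynomials, that is a supremum of infima of them. -/
def IsLatticeSignomial (f : ℝ → ℝ → ℝ) : Prop :=
  onQuadrant f ∈ latticeClosure (signomials : Set (PQ → ℝ))

variable {f g : ℝ → ℝ → ℝ}

lemma mem_signomials_iff {a : PQ → ℝ} :
    a ∈ signomials ↔ ∃ c : ℝ × ℝ →₀ ℝ, ∀ p : PQ, a p = c.sum fun α k =>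
      k * p.1.1 ^ α.1 * p.1.2 ^ α.2 := by
  rw [signomials, Finsupp.mem_span_range_iff_exists_finsupp]
  refine exists_congr fun c => ?_
  rw [eq_comm, funext_iff]
  simp [Finsupp.sum, onQuadrant, mul_assoc]

lemma isGenPoly_iff_mem_signomials {a : PQ → ℝ} : IsGenPoly a ↔ a ∈ signomials := by
  constructor
  · rintro ⟨m, c, α, -, -, ha⟩
    have : a = ∑ i, c i • onQuadrant fun x y => x ^ (α i).1 * y ^ (α i).2 := by
      ext p
      simp [ha, onQuadrant, mul_assoc]
    rw [this]
    exact Submodule.sum_smul_mem _ _ fun i _ => Submodule.subset_span ⟨α i, rfl⟩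
  · rw [mem_signomials_iff]
    rintro ⟨c, hc⟩
    let e := (Fintype.equivFin c.support).symm
    refine ⟨Fintype.card c.support, fun i => c (e i), fun i => (e i : ℝ × ℝ),
      fun i => Finsupp.mem_support_iff.mp (e i).2, Subtype.val_injective.comp e.injective,
      fun p => ?_⟩
    rw [hc, Finsupp.sum, ← Finset.sum_coe_sort]
    exact (e.sum_comp fun α : c.support => c α * p.1.1 ^ (α : ℝ × ℝ).1 * p.1.2 ^ (α : ℝ × ℝ).2).symm

lemma isSignomial_monomial (a b : ℝ) : IsSignomial fun x y => x ^ a * y ^ b :=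
  Submodule.subset_span ⟨(a, b), rfl⟩

lemma IsSignomial.congr (hf : IsSignomial f) (h : ∀ x y, 0 < x → 0 < y → g x y = f x y) :
    IsSignomial g := by
  rwa [IsSignomial, onQuadrant_congr h]

lemma monomial_mul_mem_signomials {u : PQ → ℝ} (hu : u ∈ signomials) (a b : ℝ) :
    (onQuadrant fun x y => x ^ a * y ^ b) * u ∈ signomials := by
  refine Submodule.span_induction ?_ (by simp) (fun u v _ _ hu hv => ?_) (fun c u _ hu => ?_) hu
  · rintro _ ⟨α, rfl⟩
    change IsSignomial fun x y => x ^ a * y ^ b * (x ^ α.1 * y ^ α.2)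
    refine (isSignomial_monomial (a + α.1) (b + α.2)).congr fun x y hx hy => ?_
    rw [Real.rpow_add hx, Real.rpow_add hy]
    ring
  · exact mul_add (onQuadrant _) u v ▸ signomials.add_mem hu hv
  · exact mul_smul_comm c (onQuadrant _) u ▸ signomials.smul_mem c hu

namespace IsSignomial

lemma exists_finset_sum (hf : IsSignomial f) :
    ∃ (s : Finset (ℝ × ℝ)) (c : ℝ × ℝ → ℝ), ∀ x y, 0 < x → 0 < y →
      f x y = ∑ α ∈ s, c α * x ^ α.1 * y ^ α.2 := by
  obtain ⟨c, hc⟩ := mem_signomials_iff.mp hf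
  exact ⟨c.support, c, fun x y hx hy => hc ⟨(x, y), hx, hy⟩⟩

lemma sub (hf : IsSignomial f) (hg : IsSignomial g) : IsSignomial fun x y => f x y - g x y :=
  signomials.sub_mem hf hg

lemma const_mul (hf : IsSignomial f) (c : ℝ) : IsSignomial fun x y => c * f x y :=
  signomials.smul_mem c hf

lemma sum {ι : Type*} {s : Finset ι} {f : ι → ℝ → ℝ → ℝ} (hf : ∀ i ∈ s, IsSignomial (f i)) :
    IsSignomial fun x y => ∑ i ∈ s, f i x y := by
  have : onQuadrant (fun x y => ∑ i ∈ s, f i x y) = ∑ i ∈ s, onQuadrant (f i) := by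
    ext p
    simp [onQuadrant]
  rw [IsSignomial, this]
  exact signomials.sum_mem hf

lemma monomial_mul (hf : IsSignomial f) (a b : ℝ) :
    IsSignomial fun x y => x ^ a * y ^ b * f x y :=
  monomial_mul_mem_signomials hf a b

lemma rpow_mul (hf : IsSignomial f) (a : ℝ) : IsSignomial fun x y => x ^ a * f x y := by
  simpa using hf.monomial_mul a 0

lemma continuousOn_left (hf : IsSignomial f) {y : ℝ} (hy : 0 < y) :
    ContinuousOn (fun x => f x y) (Ioi 0) := by
  obtain ⟨s, c, h⟩ := hf.exists_finset_sum
  refine ContinuousOn.congr (f := fun x => ∑ α ∈ s, c α * x ^ α.1 * y ^ α.2) ?_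
    fun x hx => h x y hx hy
  exact continuousOn_finsetSum _ fun α _ => .mul (.mul continuousOn_const
    (continuousOn_id.rpow_const fun x hx => .inl (ne_of_gt hx))) continuousOn_const

lemma isPuiseux (hf : IsSignomial f) {X Y : ℝ → ℝ} (hX : IsPosPuiseux X) (hY : IsPosPuiseux Y) :
    IsPuiseux fun ε => f (X ε) (Y ε) := by
  obtain ⟨s, c, h⟩ := hf.exists_finset_sum
  have hsum : IsPuiseux fun ε => ∑ α ∈ s, c α * X ε ^ α.1 * Y ε ^ α.2 :=
    .sum s fun α _ => ((hX.rpow_const α.1).isPuiseux.const_mul (c α)).mul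
      (hY.rpow_const α.2).isPuiseux
  exact hsum.congr ((hX.eventually_pos.and hY.eventually_pos).mono fun ε hε => h _ _ hε.1 hε.2)

lemma isLatticeSignomial (hf : IsSignomial f) : IsLatticeSignomial f :=
  subset_latticeClosure hf

end IsSignomial

lemma exists_range_fin_succ_eq {X : Type*} {t : Finset X} (ht : t.Nonempty) :
    ∃ (n : ℕ) (e : Fin (n + 1) → X), range e = t := by
  have hcard : t.card = t.card - 1 + 1 := (Nat.sub_add_cancel ht.card_pos).symm
  refine ⟨t.card - 1, fun i => ((t.equivFinOfCardEq hcard).symm i : X), ?_⟩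
  rw [range_comp' Subtype.val, Equiv.range_eq_univ, image_univ, Subtype.range_coe]

namespace IsLatticeSignomial

lemma congr (hf : IsLatticeSignomial f) (h : ∀ x y, 0 < x → 0 < y → g x y = f x y) :
    IsLatticeSignomial g := by
  rwa [IsLatticeSignomial, onQuadrant_congr h]

lemma max (hf : IsLatticeSignomial f) (hg : IsLatticeSignomial g) :
    IsLatticeSignomial fun x y => max (f x y) (g x y) :=
  isSublattice_latticeClosure.supClosed hf hg

lemma min (hf : IsLatticeSignomial f) (hg : IsLatticeSignomial g) :
    IsLatticeSignomial fun x y => min (f x y) (g x y) :=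
  isSublattice_latticeClosure.infClosed hf hg

lemma neg (hf : IsLatticeSignomial f) : IsLatticeSignomial fun x y => -f x y := by
  have himage := image_latticeClosure' (signomials : Set (PQ → ℝ)) Neg.neg neg_sup neg_inf
  have hneg : Neg.neg '' (signomials : Set (PQ → ℝ)) = signomials := by simp
  rw [hneg] at himage
  exact himage.subset (mem_image_of_mem _ hf)

lemma add (hf : IsLatticeSignomial f) (hg : IsLatticeSignomial g) :
    IsLatticeSignomial fun x y => f x y + g x y := by
  refine latticeClosure_sup_inf_induction
    (p := fun u _ => u + onQuadrant g ∈ latticeClosure (signomials : Set (PQ → ℝ)))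
    (fun a ha => ?_) (fun a _ b _ ha hb => ?_) (fun a _ b _ ha hb => ?_) hf
  · have hmem := mem_image_of_mem (a + ·) hg
    rw [image_latticeClosure _ _ (fun b c => add_sup b c a)
      (fun b c => add_inf b c a)] at hmem
    exact latticeClosure_mono (image_subset_iff.mpr fun b hb => signomials.add_mem ha hb) hmem
  · exact sup_add a b (onQuadrant g) ▸ isSublattice_latticeClosure.supClosed ha hb
  · exact inf_add a b (onQuadrant g) ▸ isSublattice_latticeClosure.infClosed ha hb

lemma rpow_mul (hf : IsLatticeSignomial f) (a : ℝ) :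
    IsLatticeSignomial fun x y => x ^ a * f x y := by
  let w : PQ → ℝ := onQuadrant fun x y => x ^ a * y ^ (0 : ℝ)
  have hw : ∀ p, 0 ≤ w p := fun p =>
    mul_nonneg (Real.rpow_nonneg p.2.1.le a) (Real.rpow_nonneg p.2.2.le 0)
  have hmem := mem_image_of_mem (w * ·) hf
  rw [image_latticeClosure _ _ (fun u v => funext fun p => mul_max_of_nonneg _ _ (hw p))
    (fun u v => funext fun p => mul_min_of_nonneg _ _ (hw p))] at hmem
  have hmem' : w * onQuadrant f ∈ latticeClosure (signomials : Set (PQ → ℝ)) :=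
    latticeClosure_mono
      (image_subset_iff.mpr fun b hb => monomial_mul_mem_signomials hb a 0) hmem
  refine IsLatticeSignomial.congr (f := fun x y => x ^ a * y ^ (0 : ℝ) * f x y) hmem'
    fun x y _ _ => ?_
  rw [Real.rpow_zero, mul_one]

lemma isSupInf (hf : IsLatticeSignomial f) : IsSupInf (onQuadrant f) := by
  rw [IsLatticeSignomial, ← supClosure_infClosure] at hf
  obtain ⟨t, ht, hts, hsup⟩ := hf
  obtain ⟨J, a, ha⟩ := exists_range_fin_succ_eq ht
  have hinf : ∀ j, ∃ (K : ℕ) (f : Fin (K + 1) → PQ → ℝ),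
      (∀ k, f k ∈ signomials) ∧ ∀ p, a j p = ⨅ k, f k p := fun j => by
    obtain ⟨T, hT, hTs, hinf⟩ := hts (ha ▸ mem_range_self j)
    obtain ⟨K, f, hf⟩ := exists_range_fin_succ_eq hT
    refine ⟨K, f, fun k => hTs (hf ▸ mem_range_self k), fun p => ?_⟩
    rw [← hinf, Finset.inf'_apply, Finset.inf'_eq_csInf_image, ← hf, ← range_comp, sInf_range]
    rfl
  choose K f hf hinf using hinf
  refine ⟨J, K, f, fun j k => isGenPoly_iff_mem_signomials.mpr (hf j k), fun p => ?_⟩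
  rw [← hsup, Finset.sup'_apply, Finset.sup'_eq_csSup_image, ← ha, ← range_comp, sSup_range]
  exact iSup_congr fun j => hinf j p

end IsLatticeSignomial

lemma isLatticeSignomial_zero : IsLatticeSignomial fun _ _ => 0 :=
  IsSignomial.isLatticeSignomial signomials.zero_mem

end Signomials

/-! ### Majorants of a function beyond one of its zeros -/

section Majorants

/-- `D` is the derivative of `G` with respect to `x ^ κ` on the positive half-line. -/
def HasDerivRpow (κ : ℝ) (G D : ℝ → ℝ) : Prop :=
  ∀ x, 0 < x → HasDerivAt G (κ * x ^ (κ - 1) * D x) x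

/-- `v` is nonpositive before `r`, and its value at any point `x` beyond `r` bounds `|F|` on the
whole of `[r, x]`. The bound on the interval is what survives an integration. -/
def IsMajorantBeyond (v F : ℝ → ℝ) (r : ℝ) : Prop :=
  (∀ x, 0 < x → x ≤ r → v x ≤ 0) ∧ ∀ u x, r ≤ u → u ≤ x → |F u| ≤ v x

/-- `V` vanishes before `r` and compensates what `G` loses beyond `r`: it bounds the negative part
of `G`, and `G + 2 V` bounds `|G|`. -/
def IsCompensatorBeyond (V G : ℝ → ℝ) (r : ℝ) : Prop :=
  (∀ x, 0 < x → x ≤ r → V x = 0) ∧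
    ∀ u x, r ≤ u → u ≤ x → 0 ≤ V x ∧ -G u ≤ V x ∧ |G u| ≤ G x + 2 * V x

variable {κ r t : ℝ} {G D v V : ℝ → ℝ}

namespace HasDerivRpow

lemma neg (h : HasDerivRpow κ G D) : HasDerivRpow κ (fun x => -G x) fun x => -D x :=
  fun x hx => by simpa only [mul_neg] using (h x hx).fun_neg

lemma exists_sub_eq (h : HasDerivRpow κ G D) (hκ : 0 < κ) {a b : ℝ} (ha : 0 < a) (hab : a < b) :
    ∃ ξ ∈ Ioo a b, G b - G a = (b ^ κ - a ^ κ) * D ξ := by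
  have hrpow : ∀ x, 0 < x → HasDerivAt (fun x : ℝ => x ^ κ) (κ * x ^ (κ - 1)) x := fun x hx =>
    Real.hasDerivAt_rpow_const (.inl hx.ne')
  obtain ⟨ξ, hξ, hslope⟩ := exists_ratio_hasDerivAt_eq_ratio_slope G _ hab
    (fun x hx => (h x (ha.trans_le hx.1)).continuousAt.continuousWithinAt)
    (fun x hx => h x (ha.trans hx.1)) (fun x : ℝ => x ^ κ) _
    (fun x hx => (hrpow x (ha.trans_le hx.1)).continuousAt.continuousWithinAt)
    (fun x hx => hrpow x (ha.trans hx.1))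
  have hpos : 0 < κ * ξ ^ (κ - 1) := mul_pos hκ (Real.rpow_pos_of_pos (ha.trans hξ.1) _)
  exact ⟨ξ, hξ, mul_right_cancel₀ hpos.ne' (by rw [← hslope]; ring)⟩

lemma le_of_pos (h : HasDerivRpow κ G D) (hκ : 0 < κ) {a b : ℝ} (ha : 0 < a) (hab : a ≤ b)
    (hD : ∀ x ∈ Ioo a b, 0 < D x) : G a ≤ G b := by
  obtain rfl | hab := hab.eq_or_lt
  · rfl
  · obtain ⟨ξ, hξ, hsub⟩ := h.exists_sub_eq hκ ha hab
    have := mul_pos (sub_pos.mpr (Real.rpow_lt_rpow ha.le hab hκ)) (hD ξ hξ)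
    linarith

lemma abs_sub_le (h : HasDerivRpow κ G D) (hκ : 0 < κ) {a b x M : ℝ} (ha : 0 < a) (hab : a ≤ b)
    (hbx : b ≤ x) (hD : ∀ u, a ≤ u → u ≤ x → |D u| ≤ M) : |G b - G a| ≤ x ^ κ * M := by
  have hM : 0 ≤ M := (abs_nonneg _).trans (hD b hab hbx)
  have hx : 0 ≤ x ^ κ := Real.rpow_nonneg (ha.le.trans (hab.trans hbx)) κ
  obtain rfl | hab := hab.eq_or_lt
  · simpa using mul_nonneg hx hM
  · obtain ⟨ξ, hξ, hsub⟩ := h.exists_sub_eq hκ ha hab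
    have hbκ : b ^ κ ≤ x ^ κ := Real.rpow_le_rpow (ha.le.trans hab.le) hbx hκ.le
    have haκ : 0 ≤ a ^ κ := Real.rpow_nonneg ha.le κ
    rw [hsub, abs_mul, abs_of_pos (sub_pos.mpr (Real.rpow_lt_rpow ha.le hab hκ))]
    exact mul_le_mul (by linarith) (hD ξ hξ.1.le (hξ.2.le.trans hbx)) (abs_nonneg _) hx

end HasDerivRpow

namespace IsMajorantBeyond

lemma neg (hv : IsMajorantBeyond v G r) : IsMajorantBeyond v (fun x => -G x) r :=
  ⟨hv.1, fun u x hu hux => by simpa only [abs_neg] using hv.2 u x hu hux⟩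

lemma rpow_mul (hv : IsMajorantBeyond v G r) (hr : 0 < r) {α : ℝ} (hα : 0 ≤ α) :
    IsMajorantBeyond (fun x => x ^ α * v x) (fun x => x ^ α * G x) r := by
  refine ⟨fun x hx hxr => mul_nonpos_of_nonneg_of_nonpos (Real.rpow_nonneg hx.le α) (hv.1 x hx hxr),
    fun u x hu hux => ?_⟩
  have hu0 : 0 < u := hr.trans_le hu
  rw [abs_mul, abs_of_pos (Real.rpow_pos_of_pos hu0 α)]
  exact mul_le_mul (Real.rpow_le_rpow hu0.le hux hα) (hv.2 u x hu hux) (abs_nonneg _)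
    (Real.rpow_nonneg (hu0.le.trans hux) α)

lemma abs_sub_le (hv : IsMajorantBeyond v D r) (h : HasDerivRpow κ G D) (hκ : 0 < κ) (hr : 0 < r)
    {u x : ℝ} (hu : r ≤ u) (hux : u ≤ x) : |G u - G r| ≤ x ^ κ * v x :=
  h.abs_sub_le hκ hr hu hux fun w hw hwx => hv.2 w x hw hwx

lemma of_deriv (hv : IsMajorantBeyond v D r) (h : HasDerivRpow κ G D) (hκ : 0 < κ) (hr : 0 < r)
    (hG : G r = 0) : IsMajorantBeyond (fun x => x ^ κ * v x) G r :=
  ⟨fun x hx hxr => mul_nonpos_of_nonneg_of_nonpos (Real.rpow_nonneg hx.le κ) (hv.1 x hx hxr),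
    fun u x hu hux => by simpa [hG] using hv.abs_sub_le h hκ hr hu hux⟩

end IsMajorantBeyond

lemma isCompensatorBeyond_zero (h : HasDerivRpow κ G D) (hκ : 0 < κ) (hr : 0 < r) (hG : G r = 0)
    (hD : ∀ x, r ≤ x → 0 < D x) : IsCompensatorBeyond (fun _ => 0) G r := by
  have hmono : ∀ u x, r ≤ u → u ≤ x → G u ≤ G x := fun u x hu hux =>
    h.le_of_pos hκ (hr.trans_le hu) hux fun w hw => hD w (hu.trans hw.1.le)
  refine ⟨fun _ _ _ => rfl, fun u x hu hux => ?_⟩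
  have hGu : 0 ≤ G u := hG ▸ hmono r u le_rfl hu
  rw [abs_of_nonneg hGu]
  exact ⟨le_rfl, by linarith, by linarith [hmono u x hu hux]⟩

/-- Between `r` and `t` the function `G` increases, and beyond `t` it moves away from `G t ≥ 0` by
no more than the integrated majorant of its derivative. -/
lemma IsMajorantBeyond.isCompensatorBeyond (hv : IsMajorantBeyond v D t) (h : HasDerivRpow κ G D)
    (hκ : 0 < κ) (hr : 0 < r) (hG : G r = 0) (hrt : r < t) (hD : ∀ x, r ≤ x → x < t → 0 < D x) :
    IsCompensatorBeyond (fun x => max 0 (x ^ κ * v x)) G r := by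
  have ht : 0 < t := hr.trans hrt
  have hmono : ∀ u x, r ≤ u → u ≤ x → x ≤ t → G u ≤ G x := fun u x hu hux hxt =>
    h.le_of_pos hκ (hr.trans_le hu) hux fun w hw => hD w (hu.trans hw.1.le) (hw.2.trans_le hxt)
  have hGt : 0 ≤ G t := hG ▸ hmono r t le_rfl hrt.le le_rfl
  refine ⟨fun x hx hxr => max_eq_left (mul_nonpos_of_nonneg_of_nonpos (Real.rpow_nonneg hx.le κ)
    (hv.1 x hx (hxr.trans hrt.le))), fun u x hu hux => ?_⟩
  have hV : 0 ≤ max 0 (x ^ κ * v x) := le_max_left _ _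
  have hbeyond : ∀ w, t ≤ w → w ≤ x → |G w - G t| ≤ max 0 (x ^ κ * v x) := fun w hw hwx =>
    (hv.abs_sub_le h hκ ht hw hwx).trans (le_max_right _ _)
  have hGu : u ≤ t → 0 ≤ G u := hG ▸ hmono r u le_rfl hu
  refine ⟨hV, ?_⟩
  rcases le_total x t with hxt | hxt
  · have := hGu (hux.trans hxt)
    rw [abs_of_nonneg this]
    constructor <;> linarith [hmono u x hu hux hxt]
  · have hx := abs_le.mp (hbeyond x hxt le_rfl)
    rcases le_total u t with hut | hut
    · have := hGu hut
      rw [abs_of_nonneg this]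
      constructor <;> linarith [hmono u t hu hut le_rfl]
    · have hu := abs_le.mp (hbeyond u hut hux)
      exact ⟨by linarith, abs_le.mpr ⟨by linarith, by linarith⟩⟩

namespace IsCompensatorBeyond

lemma isMajorantBeyond (hV : IsCompensatorBeyond V G r) (h : HasDerivRpow κ G D) (hκ : 0 < κ)
    (hG : G r = 0) (hD : ∀ x, 0 < x → x ≤ r → 0 < D x) :
    IsMajorantBeyond (fun x => G x + 2 * V x) G r := by
  refine ⟨fun x hx hxr => ?_, fun u x hu hux => (hV.2 u x hu hux).2.2⟩
  beta_reduce
  rw [hV.1 x hx hxr, mul_zero, add_zero, ← hG]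
  exact h.le_of_pos hκ hx hxr fun w hw => hD w (hx.trans hw.1) hw.2.le

lemma isMajorantBeyond_min (hV : IsCompensatorBeyond V G r) (h : HasDerivRpow κ G D) (hκ : 0 < κ)
    (hG : G r = 0) (hv : IsMajorantBeyond v D t) (ht : 0 < t) (htr : t < r)
    (hD : ∀ x, t < x → x ≤ r → 0 < D x) :
    IsMajorantBeyond (fun x => min (max (x ^ κ * v x) (V x)) (G x + 2 * V x)) G r := by
  have hneg : ∀ x, t ≤ x → x ≤ r → G x ≤ 0 := fun x hx hxr =>
    hG ▸ h.le_of_pos hκ (ht.trans_le hx) hxr fun w hw => hD w (hx.trans_lt hw.1) hw.2.le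
  refine ⟨fun x hx hxr => ?_, fun u x hu hux => ?_⟩
  · beta_reduce
    rw [hV.1 x hx hxr, mul_zero, add_zero]
    rcases le_total x t with hxt | hxt
    · exact min_le_of_left_le (max_le (mul_nonpos_of_nonneg_of_nonpos (Real.rpow_nonneg hx.le κ)
        (hv.1 x hx hxt)) le_rfl)
    · exact min_le_of_right_le (hneg x hxt hxr)
  · obtain ⟨-, hGV, habs⟩ := hV.2 u x hu hux
    refine le_min ?_ habs
    have hsub := (abs_le.mp (hv.abs_sub_le h hκ ht (htr.le.trans hu) hux)).2
    have hGt := hneg t le_rfl htr.le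
    rcases le_total 0 (G u) with hGu | hGu
    · rw [abs_of_nonneg hGu]
      exact le_max_of_le_left (by linarith)
    · rw [abs_of_nonpos hGu]
      exact le_max_of_le_right hGV

end IsCompensatorBeyond

lemma pos_of_ne_zero_of_continuousOn (hD : ContinuousOn D (Ioi 0)) {a b : ℝ} (ha : 0 < a)
    (hb : 0 < b) (hDa : 0 < D a) (hne : ∀ x ∈ uIcc a b, D x ≠ 0) : 0 < D b := by
  by_contra! hDb
  obtain ⟨x, hx, hDx⟩ := intermediate_value_uIcc (hD.mono fun x hx => (lt_min ha hb).trans_le hx.1)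
    (uIcc_of_ge (hDb.trans hDa.le) ▸ ⟨hDb, hDa.le⟩ : (0 : ℝ) ∈ uIcc (D a) (D b))
  exact hne x hx hDx

end Majorants

/-! ### Truncation of a signomial at one of its root germs -/

section Truncation

namespace IsSignomial

lemma exists_sum_rpow {f : ℝ → ℝ → ℝ} (hf : IsSignomial f) :
    ∃ (s : Finset ℝ) (A : ℝ → ℝ → ℝ), (∀ e, IsSignomial fun _ y => A e y) ∧
      ∀ x y, 0 < x → 0 < y → f x y = ∑ e ∈ s, A e y * x ^ e := by
  classical
  obtain ⟨t, c, hc⟩ := hf.exists_finset_sum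
  refine ⟨t.image Prod.fst, fun e y => ∑ α ∈ t with α.1 = e, c α * y ^ α.2, fun e => ?_,
    fun x y hx hy => ?_⟩
  · exact sum fun α _ => by simpa using (isSignomial_monomial 0 α.2).const_mul (c α)
  · rw [hc x y hx hy, ← Finset.sum_fiberwise_of_maps_to fun α => Finset.mem_image_of_mem Prod.fst]
    refine Finset.sum_congr rfl fun e _ => ?_
    rw [Finset.sum_mul]
    refine Finset.sum_congr rfl fun α hα => ?_
    rw [← (Finset.mem_filter.mp hα).2]
    ring

lemma exists_finset_roots {f : ℝ → ℝ → ℝ} {Y : ℝ → ℝ} (hf : IsSignomial f) (hY : IsPosPuiseux Y)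
    (hne : ¬∀ᶠ ε in 𝓝[>] 0, ∀ x, 0 < x → f x (Y ε) = 0) :
    ∃ R : Finset (ℝ → ℝ),
      (∀ r ∈ R, IsPosPuiseux r ∧ ∀ᶠ ε in 𝓝[>] 0, f (r ε) (Y ε) = 0) ∧
      ∀ᶠ ε in 𝓝[>] 0, ∀ x, 0 < x → f x (Y ε) = 0 → ∃ r ∈ R, x = r ε := by
  obtain ⟨s, A, hA, hsum⟩ := hf.exists_sum_rpow
  have hsum' : ∀ x y, 0 < x → 0 < y → f x y = ∑ e : s, A e y * x ^ (e : ℝ) := fun x y hx hy => by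
    rw [hsum x y hx hy, Finset.sum_coe_sort s fun e => A e y * x ^ e]
  obtain ⟨R, hR, hroots⟩ := exists_finset_isPosPuiseux_roots (ι := s)
    (a := fun e ε => A e (Y ε)) (fun e => (hA e).isPuiseux hY hY) Subtype.val_injective (by
      by_contra! hzero
      refine hne (((eventually_all.mpr hzero).and hY.eventually_pos).mono fun ε hε x hx => ?_)
      simp [hsum' x _ hx hε.2, hε.1])
  refine ⟨R, fun r hr => ⟨(hR r hr).1, ?_⟩, ?_⟩
  · filter_upwards [(hR r hr).2, (hR r hr).1.eventually_pos, hY.eventually_pos] with ε hε hrε hYε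
    rw [hsum' _ _ hrε hYε, hε]
  · filter_upwards [hroots, hY.eventually_pos] with ε hε hYε x hx hfx
    exact hε x hx (hsum' x _ hx hYε ▸ hfx)

end IsSignomial

lemma exists_next_isPuiseux {R : Finset (ℝ → ℝ)} {r : ℝ → ℝ} (hR : ∀ s ∈ R, IsPuiseux s)
    (hr : IsPuiseux r) :
    (∀ᶠ ε in 𝓝[>] 0, ∀ s ∈ R, s ε ≤ r ε) ∨
      ∃ t ∈ R, ∀ᶠ ε in 𝓝[>] 0, r ε < t ε ∧ ∀ s ∈ R, s ε ≤ r ε ∨ t ε ≤ s ε := by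
  classical
  by_cases hnext : ∀ s ∈ R, ∀ᶠ ε in 𝓝[>] 0, s ε ≤ r ε
  · exact .inl (R.eventually_all.mpr hnext)
  refine .inr ?_
  obtain ⟨ε₀, hε₀⟩ := exists_forall_eventuallyLE_iff hR
  obtain ⟨t, ht, hmin⟩ := Finset.exists_min_image
    (R.filter fun s => ¬∀ᶠ ε in 𝓝[>] 0, s ε ≤ r ε) (fun s => s ε₀)
    (by simpa [Finset.Nonempty] using hnext)
  obtain ⟨htR, htr⟩ := Finset.mem_filter.mp ht
  refine ⟨t, htR, (((hR t htR).eventually_le_or_lt hr).resolve_left htr).and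
    (R.eventually_all.mpr fun s hs => ?_)⟩
  by_cases hsr : ∀ᶠ ε in 𝓝[>] 0, s ε ≤ r ε
  · exact hsr.mono fun ε => .inl
  · exact ((hε₀ t htR s hs).mpr (hmin s (Finset.mem_filter.mpr ⟨hs, hsr⟩))).mono fun ε => .inr

lemma exists_prev_isPuiseux {R : Finset (ℝ → ℝ)} {r : ℝ → ℝ} (hR : ∀ s ∈ R, IsPuiseux s)
    (hr : IsPuiseux r) :
    (∀ᶠ ε in 𝓝[>] 0, ∀ s ∈ R, r ε ≤ s ε) ∨
      ∃ t ∈ R, ∀ᶠ ε in 𝓝[>] 0, t ε < r ε ∧ ∀ s ∈ R, r ε ≤ s ε ∨ s ε ≤ t ε := by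
  classical
  have hneg : ∀ s ∈ R.image (-·), IsPuiseux s := by
    simp only [Finset.forall_mem_image]
    exact fun s hs => ((hR s hs).const_mul (-1)).congr (.of_forall fun ε => by simp)
  have hrneg : IsPuiseux (-r) := (hr.const_mul (-1)).congr (.of_forall fun ε => by simp)
  simpa using exists_next_isPuiseux hneg hrneg

section Positivity

variable {D : ℝ → ℝ → ℝ} {Y r : ℝ → ℝ} (hD : IsSignomial D) (hY : IsPosPuiseux Y)
  (hr : IsPosPuiseux r) (hDr : ∀ᶠ ε in 𝓝[>] 0, 0 < D (r ε) (Y ε))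
include hD hY hr hDr

lemma IsSignomial.exists_finset_roots_of_pos : ∃ R : Finset (ℝ → ℝ),
    (∀ t ∈ R, IsPosPuiseux t ∧ ∀ᶠ ε in 𝓝[>] 0, D (t ε) (Y ε) = 0) ∧
    ∀ᶠ ε in 𝓝[>] 0, ∀ x, 0 < x → (∀ t ∈ R, t ε ∉ uIcc (r ε) x) → 0 < D x (Y ε) := by
  obtain ⟨R, hR, hroots⟩ := hD.exists_finset_roots hY fun hzero => by
    obtain ⟨ε, ⟨hpos, hzero⟩, hrε⟩ := ((hDr.and hzero).and hr.eventually_pos).exists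
    exact hpos.ne' (hzero (r ε) hrε)
  refine ⟨R, hR, ?_⟩
  filter_upwards [hroots, hDr, hr.eventually_pos, hY.eventually_pos]
    with ε hroots hpos hrε hYε x hx hmem
  refine pos_of_ne_zero_of_continuousOn (D := fun x => D x (Y ε)) (hD.continuousOn_left hYε)
    hrε hx hpos fun z hz hDz => ?_
  obtain ⟨t, ht, rfl⟩ := hroots z ((lt_min hrε hx).trans_le hz.1) hDz
  exact hmem t ht hz

lemma IsSignomial.pos_right_or_exists_root : (∀ᶠ ε in 𝓝[>] 0, ∀ x, r ε ≤ x → 0 < D x (Y ε)) ∨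
    ∃ t, IsPosPuiseux t ∧ (∀ᶠ ε in 𝓝[>] 0, D (t ε) (Y ε) = 0) ∧
      ∀ᶠ ε in 𝓝[>] 0, r ε < t ε ∧ ∀ x, r ε ≤ x → x < t ε → 0 < D x (Y ε) := by
  obtain ⟨R, hR, hpos⟩ := hD.exists_finset_roots_of_pos hY hr hDr
  have hne : ∀ᶠ ε in 𝓝[>] 0, ∀ s ∈ R, s ε ≠ r ε := R.eventually_all.mpr fun s hs =>
    ((hR s hs).2.and hDr).mono fun ε hε hsr => (hsr ▸ hε.1 ▸ hε.2).false
  rcases exists_next_isPuiseux (fun s hs => (hR s hs).1.isPuiseux) hr.isPuiseux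
    with h | ⟨t, ht, h⟩
  · left
    filter_upwards [h, hpos, hr.eventually_pos, hne] with ε h hpos hrε hne x hx
    refine hpos x (hrε.trans_le hx) fun s hs hmem => ?_
    rw [uIcc_of_le hx] at hmem
    exact hne s hs ((h s hs).antisymm hmem.1)
  · refine .inr ⟨t, (hR t ht).1, (hR t ht).2, ?_⟩
    filter_upwards [h, hpos, hr.eventually_pos, hne] with ε h hpos hrε hne
    refine ⟨h.1, fun x hx hxt => hpos x (hrε.trans_le hx) fun s hs hmem => ?_⟩
    rw [uIcc_of_le hx] at hmem
    exact (h.2 s hs).elim (fun hsr => hne s hs (hsr.antisymm hmem.1))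
      fun hts => (hts.trans hmem.2).not_gt hxt

lemma IsSignomial.pos_left_or_exists_root :
    (∀ᶠ ε in 𝓝[>] 0, ∀ x, 0 < x → x ≤ r ε → 0 < D x (Y ε)) ∨
    ∃ t, IsPosPuiseux t ∧ (∀ᶠ ε in 𝓝[>] 0, D (t ε) (Y ε) = 0) ∧
      ∀ᶠ ε in 𝓝[>] 0, t ε < r ε ∧ ∀ x, t ε < x → x ≤ r ε → 0 < D x (Y ε) := by
  obtain ⟨R, hR, hpos⟩ := hD.exists_finset_roots_of_pos hY hr hDr
  have hne : ∀ᶠ ε in 𝓝[>] 0, ∀ s ∈ R, s ε ≠ r ε := R.eventually_all.mpr fun s hs =>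
    ((hR s hs).2.and hDr).mono fun ε hε hsr => (hsr ▸ hε.1 ▸ hε.2).false
  rcases exists_prev_isPuiseux (fun s hs => (hR s hs).1.isPuiseux) hr.isPuiseux
    with h | ⟨t, ht, h⟩
  · left
    filter_upwards [h, hpos, hne] with ε h hpos hne x hx hxr
    refine hpos x hx fun s hs hmem => ?_
    rw [uIcc_of_ge hxr] at hmem
    exact hne s hs (hmem.2.antisymm (h s hs))
  · refine .inr ⟨t, (hR t ht).1, (hR t ht).2, ?_⟩
    filter_upwards [h, hpos, (hR t ht).1.eventually_pos, hne] with ε h hpos htε hne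
    refine ⟨h.1, fun x htx hxr => hpos x (htε.trans htx) fun s hs hmem => ?_⟩
    rw [uIcc_of_ge hxr] at hmem
    exact (h.2 s hs).elim (fun hrs => hne s hs (hmem.2.antisymm hrs))
      fun hst => (hmem.1.trans hst).not_gt htx

end Positivity

/-- Along the germ `Y`, the function `F` has beyond the germ `r` a majorant which is a lattice
polynomial of generalized polynomials. -/
def HasMajorantBeyond (F : ℝ → ℝ → ℝ) (Y r : ℝ → ℝ) : Prop :=
  ∃ v, IsLatticeSignomial v ∧
    ∀ᶠ ε in 𝓝[>] 0, IsMajorantBeyond (fun x => v x (Y ε)) (fun x => F x (Y ε)) (r ε)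

namespace HasMajorantBeyond

variable {F G D : ℝ → ℝ → ℝ} {Y r : ℝ → ℝ} {κ : ℝ}

lemma neg (h : HasMajorantBeyond F Y r) : HasMajorantBeyond (fun x y => -F x y) Y r := by
  obtain ⟨v, hv, hmaj⟩ := h
  exact ⟨v, hv, hmaj.mono fun ε => .neg⟩

lemma rpow_mul (h : HasMajorantBeyond F Y r) (hr : IsPosPuiseux r) {α : ℝ} (hα : 0 ≤ α) :
    HasMajorantBeyond (fun x y => x ^ α * F x y) Y r := by
  obtain ⟨v, hv, hmaj⟩ := h
  exact ⟨_, hv.rpow_mul α, (hmaj.and hr.eventually_pos).mono fun ε hε => hε.1.rpow_mul hε.2 hα⟩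

lemma congr (h : HasMajorantBeyond F Y r) (hr : IsPosPuiseux r)
    (hGF : ∀ x y, 0 < x → G x y = F x y) : HasMajorantBeyond G Y r := by
  obtain ⟨v, hv, hmaj⟩ := h
  refine ⟨v, hv, (hmaj.and hr.eventually_pos).mono fun ε hε => ⟨hε.1.1, fun u x hu hux => ?_⟩⟩
  beta_reduce
  rw [hGF u _ (hε.2.trans_le hu)]
  exact hε.1.2 u x hu hux

variable (hκ : 0 < κ) (hGD : ∀ y, HasDerivRpow κ (fun x => G x y) fun x => D x y)
  (hr : IsPosPuiseux r) (hGr : ∀ᶠ ε in 𝓝[>] 0, G (r ε) (Y ε) = 0)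
include hκ hGD hr hGr

lemma of_deriv_of_hasMajorantBeyond (h : HasMajorantBeyond D Y r) : HasMajorantBeyond G Y r := by
  obtain ⟨v, hv, hmaj⟩ := h
  refine ⟨_, hv.rpow_mul κ, ?_⟩
  filter_upwards [hmaj, hr.eventually_pos, hGr] with ε hmaj hrε hGr
  exact hmaj.of_deriv (hGD _) hκ hrε hGr

variable (hY : IsPosPuiseux Y) (hD : IsSignomial D)
  (hroot : ∀ t, IsPosPuiseux t → (∀ᶠ ε in 𝓝[>] 0, D (t ε) (Y ε) = 0) → HasMajorantBeyond D Y t)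
include hY hD hroot

lemma exists_isCompensatorBeyond (hDr : ∀ᶠ ε in 𝓝[>] 0, 0 < D (r ε) (Y ε)) :
    ∃ V, IsLatticeSignomial V ∧
      ∀ᶠ ε in 𝓝[>] 0, IsCompensatorBeyond (fun x => V x (Y ε)) (fun x => G x (Y ε)) (r ε) := by
  rcases hD.pos_right_or_exists_root hY hr hDr with hpos | ⟨t, ht, hDt, hpos⟩
  · refine ⟨fun _ _ => 0, isLatticeSignomial_zero, ?_⟩
    filter_upwards [hpos, hr.eventually_pos, hGr] with ε hpos hrε hGr
    exact isCompensatorBeyond_zero (hGD _) hκ hrε hGr hpos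
  · obtain ⟨v, hv, hmaj⟩ := hroot t ht hDt
    refine ⟨_, isLatticeSignomial_zero.max (hv.rpow_mul κ), ?_⟩
    filter_upwards [hpos, hr.eventually_pos, hGr, hmaj] with ε hpos hrε hGr hmaj
    exact hmaj.isCompensatorBeyond (hGD _) hκ hrε hGr hpos.1 hpos.2

lemma of_deriv_pos (hG : IsSignomial G) (hDr : ∀ᶠ ε in 𝓝[>] 0, 0 < D (r ε) (Y ε)) :
    HasMajorantBeyond G Y r := by
  obtain ⟨V, hV, hcomp⟩ := exists_isCompensatorBeyond hκ hGD hr hGr hY hD hroot hDr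
  have hGV : IsLatticeSignomial fun x y => G x y + 2 * V x y :=
    (hG.isLatticeSignomial.add (hV.add hV)).congr fun x y _ _ => by ring
  rcases hD.pos_left_or_exists_root hY hr hDr with hpos | ⟨t, ht, hDt, hpos⟩
  · refine ⟨_, hGV, ?_⟩
    filter_upwards [hcomp, hpos, hGr] with ε hcomp hpos hGr
    exact hcomp.isMajorantBeyond (hGD _) hκ hGr hpos
  · obtain ⟨v, hv, hmaj⟩ := hroot t ht hDt
    refine ⟨_, ((hv.rpow_mul κ).max hV).min hGV, ?_⟩
    filter_upwards [hcomp, hpos, hGr, hmaj, ht.eventually_pos] with ε hcomp hpos hGr hmaj htε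
    exact hcomp.isMajorantBeyond_min (hGD _) hκ hGr hmaj htε hpos.1 hpos.2

lemma of_deriv (hG : IsSignomial G) : HasMajorantBeyond G Y r := by
  rcases (hD.isPuiseux hr hY).eventually_sign with hzero | hpos | hneg
  · exact of_deriv_of_hasMajorantBeyond hκ hGD hr hGr (hroot r hr hzero)
  · exact of_deriv_pos hκ hGD hr hGr hY hD hroot hG hpos
  · have hmaj := of_deriv_pos hκ (fun y => (hGD y).neg) hr (hGr.mono fun ε => neg_eq_zero.mpr) hY
      (signomials.neg_mem hD)
      (fun t ht hDt => (hroot t ht (hDt.mono fun ε => neg_eq_zero.mp)).neg)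
      (signomials.neg_mem hG) (hneg.mono fun ε => neg_pos.mpr)
    simpa only [neg_neg] using hmaj.neg

end HasMajorantBeyond

lemma hasDerivRpow_sum_mul_rpow {ι : Type*} {κ : ℝ} (hκ : κ ≠ 0) (s : Finset ι) (a e : ι → ℝ) :
    HasDerivRpow κ (fun x => ∑ i ∈ s, a i * x ^ e i)
      fun x => ∑ i ∈ s, e i / κ * a i * x ^ (e i - κ) := by
  intro x hx
  convert hasDerivAt_sum_mul_rpow s a e hx.ne' using 1
  rw [Finset.mul_sum]
  refine Finset.sum_congr rfl fun i _ => ?_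
  rw [show e i - 1 = (κ - 1) + (e i - κ) by ring, Real.rpow_add hx]
  field_simp

lemma isSignomial_sum_mul_rpow {ι : Type*} {s : Finset ι} {A : ι → ℝ → ℝ}
    (hA : ∀ i ∈ s, IsSignomial fun _ y => A i y) (e : ι → ℝ) :
    IsSignomial fun x y => ∑ i ∈ s, A i y * x ^ e i :=
  .sum fun i hi => ((hA i hi).rpow_mul (e i)).congr fun _ _ _ _ => mul_comm _ _

lemma exists_pos_forall_le_sub {ι : Type*} {s : Finset ι} {e : ι → ℝ} {c : ℝ}
    (h : ∀ i ∈ s, c < e i) : ∃ κ, 0 < κ ∧ ∀ i ∈ s, κ ≤ e i - c := by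
  rcases s.eq_empty_or_nonempty with rfl | hs
  · exact ⟨1, one_pos, by simp⟩
  · obtain ⟨j, hj, hmin⟩ := s.exists_min_image e hs
    exact ⟨e j - c, sub_pos.mpr (h j hj), fun i hi => sub_le_sub_right (hmin i hi) c⟩

/-- Induction on the number of terms: after division by the lowest power of `x`, differentiation
with respect to a suitable power `x ^ κ` kills one term and keeps the exponents nonnegative. -/
theorem hasMajorantBeyond_sum_mul_rpow {ι : Type*} {Y : ℝ → ℝ} (hY : IsPosPuiseux Y)
    (s : Finset ι) {A : ι → ℝ → ℝ} {e : ι → ℝ} (hA : ∀ i ∈ s, IsSignomial fun _ y => A i y)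
    (he : ∀ i ∈ s, 0 ≤ e i) (hinj : InjOn e s) {r : ℝ → ℝ} (hr : IsPosPuiseux r)
    (hroot : ∀ᶠ ε in 𝓝[>] 0, ∑ i ∈ s, A i (Y ε) * r ε ^ e i = 0) :
    HasMajorantBeyond (fun x y => ∑ i ∈ s, A i y * x ^ e i) Y r := by
  classical
  induction s using Finset.strongInduction generalizing A e r with
  | H s ih =>
  rcases s.eq_empty_or_nonempty with rfl | hs
  · exact ⟨fun _ _ => 0, isLatticeSignomial_zero, .of_forall fun ε => by simp [IsMajorantBeyond]⟩
  obtain ⟨j, hj, hmin⟩ := s.exists_min_image e hs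
  obtain ⟨κ, hκ, hκle⟩ := exists_pos_forall_le_sub (s := s.erase j) (e := e) (c := e j) fun i hi =>
    (hmin i (Finset.mem_of_mem_erase hi)).lt_of_ne fun heq =>
      Finset.ne_of_mem_erase hi (hinj (Finset.mem_of_mem_erase hi) hj heq.symm)
  let B : ι → ℝ → ℝ := fun i y => (e i - e j) / κ * A i y
  have hB : ∀ i ∈ s.erase j, IsSignomial fun _ y => B i y := fun i hi =>
    (hA i (Finset.mem_of_mem_erase hi)).const_mul _
  have hderiv : ∀ y, HasDerivRpow κ (fun x => ∑ i ∈ s, A i y * x ^ (e i - e j))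
      fun x => ∑ i ∈ s.erase j, B i y * x ^ (e i - e j - κ) := fun y => by
    convert hasDerivRpow_sum_mul_rpow hκ.ne' s (A · y) (e · - e j) using 2
    exact Finset.sum_erase s (by simp [B])
  have hfactor : ∀ x y, 0 < x →
      ∑ i ∈ s, A i y * x ^ e i = x ^ e j * ∑ i ∈ s, A i y * x ^ (e i - e j) := fun x y hx => by
    rw [sum_mul_rpow_sub s _ _ hx, mul_div_cancel₀ _ (Real.rpow_pos_of_pos hx _).ne']
  refine (HasMajorantBeyond.rpow_mul ?_ hr (he j hj)).congr hr hfactor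
  refine .of_deriv hκ hderiv hr ?_ hY (isSignomial_sum_mul_rpow hB _) (fun t ht hDt => ?_)
    (isSignomial_sum_mul_rpow hA _)
  · filter_upwards [hroot, hr.eventually_pos] with ε hroot hrε
    rw [sum_mul_rpow_sub s _ _ hrε, hroot, zero_div]
  · refine ih _ (Finset.erase_ssubset hj) hB (fun i hi => sub_nonneg.mpr (hκle i hi)) ?_ ht hDt
    exact fun i hi k hk h => hinj (Finset.mem_of_mem_erase hi) (Finset.mem_of_mem_erase hk)
      (by simpa using h)

lemma IsMajorantBeyond.truncation_eq {v F : ℝ → ℝ} {r x : ℝ} (h : IsMajorantBeyond v F r)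
    (hx : 0 < x) : (x ≤ r → max (min 0 (-v x)) (min (F x) (v x)) = 0) ∧
      (r ≤ x → max (min 0 (-v x)) (min (F x) (v x)) = F x) := by
  constructor
  · intro hxr
    have hvx := h.1 x hx hxr
    rw [min_eq_left (neg_nonneg.mpr hvx)]
    exact max_eq_left (min_le_of_right_le hvx)
  · intro hrx
    obtain ⟨hle, hge⟩ := abs_le.mp (h.2 x x hrx le_rfl)
    rw [min_eq_left hge]
    exact max_eq_right (min_le_of_right_le hle)

/-- Multiplication by a power of `x` makes all exponents nonnegative; the majorant then gives the
truncation by a lattice formula. -/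
theorem IsSignomial.exists_truncation {f : ℝ → ℝ → ℝ} {Y r : ℝ → ℝ} (hf : IsSignomial f)
    (hY : IsPosPuiseux Y) (hr : IsPosPuiseux r) (hfr : ∀ᶠ ε in 𝓝[>] 0, f (r ε) (Y ε) = 0) :
    ∃ T, IsLatticeSignomial T ∧ ∀ᶠ ε in 𝓝[>] 0, ∀ x, 0 < x →
      (x ≤ r ε → T x (Y ε) = 0) ∧ (r ε ≤ x → T x (Y ε) = f x (Y ε)) := by
  obtain ⟨s, A, hA, hsum⟩ := hf.exists_sum_rpow
  obtain ⟨N, hN⟩ := (s.image fun e => -e).bddAbove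
  have hN : ∀ e ∈ s, 0 ≤ e + N := fun e he => by
    linarith [hN (Finset.mem_coe.mpr (Finset.mem_image_of_mem _ he))]
  have hfactor : ∀ x y, 0 < x → 0 < y → ∑ e ∈ s, A e y * x ^ (e + N) = x ^ N * f x y :=
    fun x y hx hy => by
      simp only [hsum x y hx hy, Real.rpow_add hx, Finset.mul_sum]
      exact Finset.sum_congr rfl fun e _ => by ring
  obtain ⟨v, hv, hmaj⟩ := hasMajorantBeyond_sum_mul_rpow hY s (fun e _ => hA e) hN
    (add_left_injective N).injOn hr (by
      filter_upwards [hfr, hr.eventually_pos, hY.eventually_pos] with ε hfr hrε hYε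
      rw [hfactor _ _ hrε hYε, hfr, mul_zero])
  refine ⟨fun x y => x ^ (-N) * max (min 0 (-v x y)) (min (x ^ N * f x y) (v x y)),
    (((isLatticeSignomial_zero.min hv.neg).max
      ((hf.rpow_mul N).isLatticeSignomial.min hv)).rpow_mul (-N)), ?_⟩
  filter_upwards [hmaj, hY.eventually_pos] with ε hmaj hYε x hx
  have htrunc := hmaj.truncation_eq hx
  rw [hfactor x _ hx hYε] at htrunc
  refine ⟨fun hxr => by rw [htrunc.1 hxr, mul_zero], fun hrx => ?_⟩
  rw [htrunc.2 hrx, Real.rpow_neg hx.le, inv_mul_cancel_left₀ (Real.rpow_pos_of_pos hx N).ne']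

end Truncation

/-! ### Lattice representation along a germ of horizontal lines -/

section Germ

lemma eq_of_forall_exists_eq {X Z ι : Type*} [TopologicalSpace X] [PreconnectedSpace X]
    [TopologicalSpace Z] [T2Space Z] [Finite ι] {H : X → Z} {f : ι → X → Z} (hH : Continuous H)
    (hf : ∀ j, Continuous (f j)) (hcov : ∀ u, ∃ j, H u = f j u) {i : ι}
    (hsep : ∀ j, f j = f i ∨ ∀ u, f j u ≠ f i u) {z : X} (hz : H z = f i z) : H = f i := by
  have hcompl : {u | H u = f i u}ᶜ = ⋃ j : {j // ∀ u, f j u ≠ f i u}, {u | H u = f j u} := by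
    ext u
    simp only [mem_compl_iff, mem_ofPred_eq, mem_iUnion, Subtype.exists, exists_prop]
    constructor
    · intro hu
      obtain ⟨j, hj⟩ := hcov u
      exact ⟨j, (hsep j).resolve_left fun hji => hu (hji ▸ hj), hj⟩
    · rintro ⟨j, hji, hj⟩ hu
      exact hji u (hj.symm.trans hu)
  have hopen : IsOpen {u | H u = f i u} := by
    rw [← isClosed_compl_iff, hcompl]
    exact isClosed_iUnion_of_finite fun j => isClosed_eq hH (hf j)
  have huniv := IsClopen.eq_univ ⟨isClosed_eq hH (hf i), hopen⟩ ⟨z, hz⟩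
  exact funext fun u => huniv.symm.subset (mem_univ u)

variable {ι : Type*} {H : ℝ → ℝ → ℝ} {f : ι → ℝ → ℝ → ℝ} {Y r : ℝ → ℝ}
  {R : Finset (ℝ → ℝ)}

/-- Along the germ of lines `y = Y ε`, the function `H` is continuous and piecewise given by the
signomials `f i`; on each Puiseux germ of points of these lines a single piece is in force. -/
structure IsPiecewiseAlong (f : ι → ℝ → ℝ → ℝ) (H : ℝ → ℝ → ℝ) (Y : ℝ → ℝ) : Prop where
  isPosPuiseux : IsPosPuiseux Y
  isSignomial : ∀ i, IsSignomial (f i)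
  continuousOn : ∀ᶠ ε in 𝓝[>] 0, ContinuousOn (fun x => H x (Y ε)) (Ioi 0)
  exists_eq : ∀ᶠ ε in 𝓝[>] 0, ∀ x, 0 < x → ∃ i, H x (Y ε) = f i x (Y ε)
  exists_eventually_eq : ∀ X, IsPosPuiseux X → ∃ i, ∀ᶠ ε in 𝓝[>] 0, H (X ε) (Y ε) = f i (X ε) (Y ε)

/-- Along the germ of lines `y = Y ε`, any two of the functions `f i` which do not coincide take
different values at all points `x > r ε` outside the finite set of germs `R`. -/
def IsSeparatedBeyond (f : ι → ℝ → ℝ → ℝ) (Y : ℝ → ℝ) (R : Finset (ℝ → ℝ)) (r : ℝ → ℝ) : Prop :=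
  ∀ᶠ ε in 𝓝[>] 0, ∀ i j, (∀ x, 0 < x → f i x (Y ε) = f j x (Y ε)) ∨
    ∀ x, r ε < x → f i x (Y ε) = f j x (Y ε) → ∃ s ∈ R, x = s ε

lemma IsSeparatedBeyond.erase [DecidableEq (ℝ → ℝ)] (h : IsSeparatedBeyond f Y R r) {t : ℝ → ℝ}
    (hrt : ∀ᶠ ε in 𝓝[>] 0, r ε < t ε) : IsSeparatedBeyond f Y (R.erase t) t := by
  filter_upwards [h, hrt] with ε h hrt i j
  refine (h i j).imp_right fun hroots x hx hfx => ?_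
  obtain ⟨s, hs, rfl⟩ := hroots x (hrt.trans hx) hfx
  exact ⟨s, Finset.mem_erase.mpr ⟨fun hst => (hst ▸ hx).false, hs⟩, rfl⟩

lemma exists_isSeparatedBeyond_zero [Finite ι] (hf : ∀ i, IsSignomial (f i))
    (hY : IsPosPuiseux Y) :
    ∃ R : Finset (ℝ → ℝ), (∀ r ∈ R, IsPosPuiseux r) ∧ IsSeparatedBeyond f Y R fun _ => 0 := by
  classical
  cases nonempty_fintype ι
  have hpair : ∀ p : ι × ι, ∃ R : Finset (ℝ → ℝ), (∀ r ∈ R, IsPosPuiseux r) ∧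
      ∀ᶠ ε in 𝓝[>] 0, (∀ x, 0 < x → f p.1 x (Y ε) = f p.2 x (Y ε)) ∨
        ∀ x, 0 < x → f p.1 x (Y ε) = f p.2 x (Y ε) → ∃ s ∈ R, x = s ε := by
    rintro ⟨i, j⟩
    by_cases heq : ∀ᶠ ε in 𝓝[>] 0, ∀ x, 0 < x → f i x (Y ε) - f j x (Y ε) = 0
    · exact ⟨∅, by simp, heq.mono fun ε h => .inl fun x hx => sub_eq_zero.mp (h x hx)⟩
    · obtain ⟨R, hR, hroots⟩ := ((hf i).sub (hf j)).exists_finset_roots hY heq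
      exact ⟨R, fun r hr => (hR r hr).1,
        hroots.mono fun ε h => .inr fun x hx hfx => h x hx (sub_eq_zero.mpr hfx)⟩
  choose R hR hroots using hpair
  refine ⟨Finset.univ.biUnion R, fun r hr => ?_, ?_⟩
  · obtain ⟨p, -, hrp⟩ := Finset.mem_biUnion.mp hr
    exact hR p r hrp
  · filter_upwards [eventually_all.mpr hroots] with ε hroots i j
    refine (hroots (i, j)).imp_right fun h x hx hfx => ?_
    obtain ⟨s, hs, rfl⟩ := h x hx hfx
    exact ⟨s, Finset.mem_biUnion.mpr ⟨(i, j), Finset.mem_univ _, hs⟩, rfl⟩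

namespace IsPiecewiseAlong

variable [Finite ι] (h : IsPiecewiseAlong f H Y)
include h

lemma exists_eventually_eqOn_closure {z : ℝ → ℝ} (hz : IsPosPuiseux z) {I : ℝ → Set ℝ}
    (hconn : ∀ ε, IsPreconnected (I ε)) (hzI : ∀ᶠ ε in 𝓝[>] 0, z ε ∈ I ε)
    (hpos : ∀ᶠ ε in 𝓝[>] 0, I ε ⊆ Ioi 0)
    (hsep : ∀ᶠ ε in 𝓝[>] 0, ∀ i j, (∀ x, 0 < x → f i x (Y ε) = f j x (Y ε)) ∨
      ∀ x ∈ I ε, f i x (Y ε) ≠ f j x (Y ε)) :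
    ∃ i, ∀ᶠ ε in 𝓝[>] 0, ∀ x, 0 < x → x ∈ closure (I ε) → H x (Y ε) = f i x (Y ε) := by
  obtain ⟨i, hi⟩ := h.exists_eventually_eq z hz
  refine ⟨i, ?_⟩
  filter_upwards [hi, hzI, hpos, hsep, h.continuousOn, h.exists_eq, h.isPosPuiseux.eventually_pos]
    with ε hi hzI hpos hsep hH hcov hYε x hx hxI
  have hf : ∀ j, ContinuousOn (fun x => f j x (Y ε)) (Ioi 0) := fun j =>
    (h.isSignomial j).continuousOn_left hYε
  have := Subtype.preconnectedSpace (hconn ε)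
  have heq := eq_of_forall_exists_eq (X := I ε) (H := fun x => H x (Y ε))
    (f := fun j x => f j x (Y ε)) (continuousOn_iff_continuous_domRestrict.mp (hH.mono hpos))
    (fun j => continuousOn_iff_continuous_domRestrict.mp ((hf j).mono hpos))
    (fun u => hcov u (hpos u.2))
    (fun j => (hsep j i).imp (fun hji => funext fun u => hji u (hpos u.2)) fun hji u => hji u u.2)
    (z := ⟨z ε, hzI⟩) hi
  exact EqOn.of_subset_closure (s := I ε) (t := Ioi 0 ∩ closure (I ε))
    (f := fun x => H x (Y ε)) (fun u hu => congrFun heq ⟨u, hu⟩)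
    (hH.mono inter_subset_left) ((hf i).mono inter_subset_left)
    (subset_inter hpos subset_closure) inter_subset_right ⟨hx, hxI⟩

variable (hr : IsPuiseux r) (hr₀ : ∀ᶠ ε in 𝓝[>] 0, 0 ≤ r ε) (hR : ∀ s ∈ R, IsPosPuiseux s)
  (hsep : IsSeparatedBeyond f Y R r)
include hr hr₀ hR hsep

lemma exists_eventually_eq_right_or_exists_next :
    (∃ i, ∀ᶠ ε in 𝓝[>] 0, ∀ x, 0 < x → r ε ≤ x → H x (Y ε) = f i x (Y ε)) ∨
    ∃ t ∈ R, (∀ᶠ ε in 𝓝[>] 0, r ε < t ε) ∧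
      ∃ i, ∀ᶠ ε in 𝓝[>] 0, ∀ x, 0 < x → r ε ≤ x → x ≤ t ε → H x (Y ε) = f i x (Y ε) := by
  rcases exists_next_isPuiseux (fun s hs => (hR s hs).isPuiseux) hr with hle | ⟨t, ht, hrt⟩
  · left
    have hz : IsPosPuiseux fun ε => r ε + 1 :=
      ⟨hr.add (isPuiseux_const 1), hr₀.mono fun ε hrε => by positivity⟩
    obtain ⟨i, hi⟩ := h.exists_eventually_eqOn_closure hz (fun ε => isPreconnected_Ioi (a := r ε))
      (.of_forall fun ε => by simp) (hr₀.mono fun ε hrε => Ioi_subset_Ioi hrε) (by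
        filter_upwards [hsep, hle] with ε hsep hle i j
        refine (hsep i j).imp_right fun hroots x hx hfx => ?_
        obtain ⟨s, hs, rfl⟩ := hroots x hx hfx
        exact (hle s hs).not_gt hx)
    refine ⟨i, hi.mono fun ε hi x hx hrx => hi x hx ?_⟩
    rwa [closure_Ioi]
  · refine .inr ⟨t, ht, hrt.mono fun ε => And.left, ?_⟩
    have hz : IsPosPuiseux fun ε => 1 / 2 * (r ε + t ε) :=
      ⟨(hr.add (hR t ht).isPuiseux).const_mul _, by
        filter_upwards [hr₀, (hR t ht).eventually_pos] with ε hrε htε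
        positivity⟩
    obtain ⟨i, hi⟩ := h.exists_eventually_eqOn_closure hz
      (fun ε => isPreconnected_Ioo (a := r ε) (b := t ε))
      (hrt.mono fun ε hε => ⟨by linarith [hε.1], by linarith [hε.1]⟩)
      (hr₀.mono fun ε hrε x hx => hrε.trans_lt hx.1) (by
        filter_upwards [hsep, hrt] with ε hsep hrt i j
        refine (hsep i j).imp_right fun hroots x hx hfx => ?_
        obtain ⟨s, hs, rfl⟩ := hroots x hx.1 hfx
        exact (hrt.2 s hs).elim hx.1.not_ge hx.2.not_ge)
    refine ⟨i, (hi.and hrt).mono fun ε hε x hx hrx hxt => hε.1 x hx ?_⟩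
    rw [closure_Ioo hε.2.1.ne]
    exact ⟨hrx, hxt⟩

/-- Passing from the piece `f i` to the next piece `f j` at a germ `t` amounts to adding the
truncation of `f j - f i` at `t`. -/
theorem exists_isLatticeSignomial_correction : ∃ i T, IsLatticeSignomial T ∧
    ∀ᶠ ε in 𝓝[>] 0, ∀ x, 0 < x →
      (x ≤ r ε → T x (Y ε) = 0) ∧ (r ε ≤ x → H x (Y ε) = f i x (Y ε) + T x (Y ε)) := by
  classical
  induction R using Finset.strongInduction generalizing r with
  | H R ih =>
  rcases h.exists_eventually_eq_right_or_exists_next hr hr₀ hR hsep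
    with ⟨i, hi⟩ | ⟨t, ht, hrt, i, hi⟩
  · refine ⟨i, fun _ _ => 0, isLatticeSignomial_zero, hi.mono fun ε hi x hx => ?_⟩
    exact ⟨fun _ => rfl, fun hrx => by rw [hi x hx hrx, add_zero]⟩
  obtain ⟨j, T, hT, hTj⟩ := ih _ (Finset.erase_ssubset ht) (hR t ht).isPuiseux
    ((hR t ht).eventually_pos.mono fun ε => le_of_lt)
    (fun s hs => hR s (Finset.mem_of_mem_erase hs)) (hsep.erase hrt)
  have hroot : ∀ᶠ ε in 𝓝[>] 0, f j (t ε) (Y ε) - f i (t ε) (Y ε) = 0 := by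
    filter_upwards [hi, hTj, hrt, (hR t ht).eventually_pos] with ε hi hTj hrt htε
    rw [← hi (t ε) htε hrt.le le_rfl, (hTj (t ε) htε).2 le_rfl, (hTj (t ε) htε).1 le_rfl]
    ring
  obtain ⟨D, hD, hDt⟩ := ((h.isSignomial j).sub (h.isSignomial i)).exists_truncation
    h.isPosPuiseux (hR t ht) hroot
  refine ⟨i, fun x y => T x y + D x y, hT.add hD, ?_⟩
  filter_upwards [hi, hTj, hDt, hrt] with ε hi hTj hDt hrt x hx
  have hzero : x ≤ t ε → T x (Y ε) + D x (Y ε) = 0 := fun hxt => by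
    rw [(hTj x hx).1 hxt, (hDt x hx).1 hxt, add_zero]
  refine ⟨fun hxr => hzero (hxr.trans hrt.le), fun hrx => ?_⟩
  rcases le_total x (t ε) with hxt | htx
  · rw [hzero hxt, hi x hx hrx hxt, add_zero]
  · rw [(hTj x hx).2 htx, (hDt x hx).2 htx]
    ring

omit hr hr₀ hR hsep

theorem exists_isLatticeSignomial :
    ∃ E, IsLatticeSignomial E ∧ ∀ᶠ ε in 𝓝[>] 0, ∀ x, 0 < x → H x (Y ε) = E x (Y ε) := by
  obtain ⟨R, hR, hsep⟩ := exists_isSeparatedBeyond_zero h.isSignomial h.isPosPuiseux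
  obtain ⟨i, T, hT, hTi⟩ := h.exists_isLatticeSignomial_correction (isPuiseux_const 0)
    (.of_forall fun _ => le_rfl) hR hsep
  exact ⟨_, (h.isSignomial i).isLatticeSignomial.add hT,
    hTi.mono fun ε hTi x hx => (hTi x hx).2 hx.le⟩

end IsPiecewiseAlong

lemma surjective_onQuadrant : Function.Surjective onQuadrant := by
  classical
  exact fun h => ⟨fun x y => if hxy : 0 < x ∧ 0 < y then h ⟨(x, y), hxy⟩ else 0,
    funext fun p => dif_pos p.2⟩

lemma IsGenPoly.exists_isSignomial {a : PQ → ℝ} (ha : IsGenPoly a) :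
    ∃ f, IsSignomial f ∧ onQuadrant f = a := by
  obtain ⟨f, rfl⟩ := surjective_onQuadrant a
  exact ⟨f, isGenPoly_iff_mem_signomials.mp ha, rfl⟩

lemma continuousOn_left_of_continuous_onQuadrant (hH : Continuous (onQuadrant H)) {y : ℝ}
    (hy : 0 < y) : ContinuousOn (fun x => H x y) (Ioi 0) :=
  continuousOn_iff_continuous_domRestrict.mpr <|
    hH.comp (f := fun x : Ioi (0 : ℝ) => (⟨(x, y), x.2, hy⟩ : PQ)) (by fun_prop)

lemma IsBasicGSA.eventually_mem_of_frequently {S : Set PQ} (hS : IsBasicGSA S) {X Y : ℝ → ℝ}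
    (hX : IsPosPuiseux X) (hY : IsPosPuiseux Y)
    (h : ∃ᶠ ε in 𝓝[>] 0, (X ε, Y ε) ∈ ((↑) : PQ → ℝ × ℝ) '' S) :
    ∀ᶠ ε in 𝓝[>] 0, (X ε, Y ε) ∈ ((↑) : PQ → ℝ × ℝ) '' S := by
  obtain ⟨f, K, g, hf, hg, rfl⟩ := hS
  obtain ⟨F, hF, rfl⟩ := hf.exists_isSignomial
  choose G hG hGg using fun k => (hg k).exists_isSignomial
  obtain rfl : g = fun k => onQuadrant (G k) := funext fun k => (hGg k).symm
  have hmem : ∀ᶠ ε in 𝓝[>] 0, (X ε, Y ε) ∈ ((↑) : PQ → ℝ × ℝ) ''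
      {p | onQuadrant F p = 0 ∧ ∀ k, 0 < onQuadrant (G k) p} ↔
      F (X ε) (Y ε) = 0 ∧ ∀ k, 0 < G k (X ε) (Y ε) := by
    filter_upwards [hX.eventually_pos, hY.eventually_pos] with ε hXε hYε
    simp [onQuadrant, hXε, hYε]
  have hfreq := h.and_eventually hmem |>.mono fun ε hε => hε.2.mp hε.1
  have hFzero : ∀ᶠ ε in 𝓝[>] 0, F (X ε) (Y ε) = 0 := by
    by_contra hne
    have hFne := (hF.isPuiseux hX hY).eventually_ne (isPuiseux_const 0) hne
    exact hfreq (hFne.mono fun ε hne h => hne h.1)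
  have hGpos k : ∀ᶠ ε in 𝓝[>] 0, 0 < G k (X ε) (Y ε) :=
    (((hG k).isPuiseux hX hY).eventually_le_or_lt (isPuiseux_const 0)).resolve_left fun hle =>
      hfreq (hle.mono fun ε hle h => (h.2 k).not_ge hle)
  filter_upwards [hmem, hFzero, eventually_all.mpr hGpos] with ε hmem hFzero hGpos
  exact hmem.mpr ⟨hFzero, hGpos⟩

lemma IsGSA.eventually_mem_of_frequently {S : Set PQ} (hS : IsGSA S) {X Y : ℝ → ℝ}
    (hX : IsPosPuiseux X) (hY : IsPosPuiseux Y)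
    (h : ∃ᶠ ε in 𝓝[>] 0, (X ε, Y ε) ∈ ((↑) : PQ → ℝ × ℝ) '' S) :
    ∀ᶠ ε in 𝓝[>] 0, (X ε, Y ε) ∈ ((↑) : PQ → ℝ × ℝ) '' S := by
  obtain ⟨J, T, hT, rfl⟩ := hS
  simp only [image_iUnion, mem_iUnion, frequently_exists] at h ⊢
  obtain ⟨j, hj⟩ := h
  exact ((hT j).eventually_mem_of_frequently hX hY hj).mono fun ε hε => ⟨j, hε⟩

lemma IsPiecewiseGenPoly.exists_isPiecewiseAlong (hH : Continuous (onQuadrant H))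
    (hpw : IsPiecewiseGenPoly (onQuadrant H)) :
    ∃ (l : ℕ) (f : Fin l → ℝ → ℝ → ℝ), ∀ Y, IsPosPuiseux Y → IsPiecewiseAlong f H Y := by
  obtain ⟨l, g, hg, -, hS, hcov⟩ := hpw
  choose f hf hfg using fun i => (hg i).exists_isSignomial
  obtain rfl : g = fun i => onQuadrant (f i) := funext fun i => (hfg i).symm
  have hcov' : ∀ x y, 0 < x → 0 < y → ∃ i, H x y = f i x y := fun x y hx hy =>
    hcov ⟨(x, y), hx, hy⟩
  refine ⟨l, f, fun Y hY => ⟨hY, hf,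
    hY.eventually_pos.mono fun ε => continuousOn_left_of_continuous_onQuadrant hH,
    hY.eventually_pos.mono fun ε hYε x hx => hcov' x _ hx hYε, fun X hX => ?_⟩⟩
  have hfreq : ∃ᶠ ε in 𝓝[>] 0, ∃ i, (X ε, Y ε) ∈ ((↑) : PQ → ℝ × ℝ) ''
      {p | onQuadrant H p = onQuadrant (f i) p} :=
    (hX.eventually_pos.and hY.eventually_pos).frequently.mono fun ε hε =>
      (hcov ⟨_, hε⟩).imp fun i hi => ⟨⟨_, hε⟩, hi, rfl⟩
  obtain ⟨i, hi⟩ := frequently_exists.mp hfreq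
  refine ⟨i, ((hS i).eventually_mem_of_frequently hX hY hi).mono ?_⟩
  rintro ε ⟨p, hp, hpε⟩
  simpa [onQuadrant, hpε] using hp

end Germ

/-! ### Finitely many strips -/

section Strips

lemma isPuiseux_id : IsPuiseux fun ε => ε := by
  simpa only [Real.rpow_one] using isPuiseux_rpow 1

lemma subset_Iio_or_subset_Ioi_of_ordConnected {α : Type*} [LinearOrder α] {I : Set α}
    (hI : I.OrdConnected) {c : α} (hc : c ∉ I) : I ⊆ Iio c ∨ I ⊆ Ioi c := by
  by_contra! ⟨hleft, hright⟩
  obtain ⟨a, ha, hca⟩ := not_subset.mp hleft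
  obtain ⟨b, hb, hbc⟩ := not_subset.mp hright
  exact hc (hI.out hb ha ⟨not_lt.mp hbc, not_lt.mp hca⟩)

lemma exists_finset_forall_ordConnected_of_mem_nhds {Q : Set ℝ → Prop} (hQ : Antitone Q) {y : ℝ}
    (hright : ∃ s ∈ 𝓝[>] y, Q s) (hleft : ∃ s ∈ 𝓝[<] y, Q s) :
    ∃ K ∈ 𝓝 y, ∃ F : Finset ℝ, ∀ I : Set ℝ, I.OrdConnected → Disjoint I F →
      (I ∩ K).Nonempty → Q I := by
  obtain ⟨s, hs, hQs⟩ := hright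
  obtain ⟨t, ht, hQt⟩ := hleft
  obtain ⟨b, hb, hbs⟩ := mem_nhdsGT_iff_exists_Ioo_subset.mp hs
  obtain ⟨a, ha, hat⟩ := mem_nhdsLT_iff_exists_Ioo_subset.mp ht
  refine ⟨Ioo a b, Ioo_mem_nhds ha hb, {a, y, b}, fun I hI hdisj ⟨z, hzI, haz, hzb⟩ => ?_⟩
  simp only [Finset.coe_insert, Finset.coe_singleton, disjoint_insert_right,
    disjoint_singleton_right] at hdisj
  have hIa := (subset_Iio_or_subset_Ioi_of_ordConnected hI hdisj.1).resolve_left fun h =>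
    haz.not_gt (h hzI)
  have hIb := (subset_Iio_or_subset_Ioi_of_ordConnected hI hdisj.2.2).resolve_right fun h =>
    hzb.not_gt (h hzI)
  rcases subset_Iio_or_subset_Ioi_of_ordConnected hI hdisj.2.1 with hIy | hIy
  · exact hQ (fun u hu => hat ⟨hIa hu, hIy hu⟩) hQt
  · exact hQ (fun u hu => hbs ⟨hIy hu, hIb hu⟩) hQs

lemma exists_finset_forall_of_isCompact {X : Type*} [TopologicalSpace X] {P Q : Set X → Prop}
    {C : Set X} (hC : IsCompact C)
    (hlocal : ∀ y ∈ C, ∃ K ∈ 𝓝 y, ∃ F : Finset X, ∀ I : Set X, P I → Disjoint I F →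
      (I ∩ K).Nonempty → Q I) :
    ∃ F : Finset X, ∀ I : Set X, P I → Disjoint I F → (I ∩ C).Nonempty → Q I := by
  classical
  refine hC.induction_on (p := fun K => ∃ F : Finset X, ∀ I : Set X, P I → Disjoint I F →
    (I ∩ K).Nonempty → Q I) ⟨∅, by simp⟩ ?_ ?_ fun y hy => ?_
  · rintro s t hst ⟨F, hF⟩
    exact ⟨F, fun I hI hdisj hne => hF I hI hdisj (hne.mono (inter_subset_inter_right I hst))⟩
  · rintro s t ⟨F, hF⟩ ⟨F', hF'⟩
    refine ⟨F ∪ F', fun I hI hdisj hne => ?_⟩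
    rw [Finset.coe_union, disjoint_union_right] at hdisj
    rw [inter_union_distrib_left, union_nonempty] at hne
    exact hne.elim (hF I hI hdisj.1) (hF' I hI hdisj.2)
  · obtain ⟨K, hK, hF⟩ := hlocal y hy
    exact ⟨K, mem_nhdsWithin_of_mem_nhds hK, hF⟩

theorem exists_finset_forall_ordConnected {Q : Set ℝ → Prop} (hQ : Antitone Q)
    (hright : ∀ y, 0 ≤ y → ∃ s ∈ 𝓝[>] y, Q s) (hleft : ∀ y, 0 < y → ∃ s ∈ 𝓝[<] y, Q s)
    (htop : ∃ s ∈ atTop, Q s) :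
    ∃ F : Finset ℝ, ∀ I : Set ℝ, I.OrdConnected → I ⊆ Ioi 0 → Disjoint I F → Q I := by
  classical
  obtain ⟨t, ht, hQt⟩ := htop
  obtain ⟨N, hN⟩ := mem_atTop_sets.mp ht
  have hQpos : Antitone fun s => Q (s ∩ Ioi 0) := fun s t hst => hQ (inter_subset_inter_left _ hst)
  have hlocal : ∀ y ∈ Icc 0 N, ∃ K ∈ 𝓝 y, ∃ F : Finset ℝ, ∀ I : Set ℝ, I.OrdConnected →
      Disjoint I F → (I ∩ K).Nonempty → Q (I ∩ Ioi 0) := fun y hy => by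
    refine exists_finset_forall_ordConnected_of_mem_nhds hQpos
      ((hright y hy.1).imp fun s hs => ⟨hs.1, hQ inter_subset_left hs.2⟩) ?_
    rcases hy.1.eq_or_lt with rfl | hy₀
    · exact ⟨_, self_mem_nhdsWithin,
      hQ (fun u ⟨hneg, hpos⟩ => (lt_asymm hneg.out hpos.out).elim) hQt⟩
    · exact (hleft y hy₀).imp fun s hs => ⟨hs.1, hQ inter_subset_left hs.2⟩
  obtain ⟨F, hF⟩ := exists_finset_forall_of_isCompact isCompact_Icc hlocal
  refine ⟨insert N F, fun I hI hpos hdisj => ?_⟩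
  rw [Finset.coe_insert, disjoint_insert_right] at hdisj
  by_cases hIN : I ⊆ Ioi N
  · exact hQ (fun y hy => hN y (hIN hy).le) hQt
  · have hIN' := (subset_Iio_or_subset_Ioi_of_ordConnected hI hdisj.1).resolve_right hIN
    obtain ⟨y, hy, -⟩ := not_subset.mp hIN
    rw [← inter_eq_left.mpr hpos]
    exact hF I hI hdisj.2 ⟨y, hy, (hpos hy).le, (hIN' hy).le⟩

lemma vstrip_subset_Ioi (η : ℕ → ℝ) (L p : ℕ) : vstrip η L p ⊆ Ioi (η p) := by
  rw [vstrip]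
  split_ifs
  · exact subset_rfl
  · exact Ioo_subset_Ioi_self

lemma ordConnected_vstrip (η : ℕ → ℝ) (L p : ℕ) : (vstrip η L p).OrdConnected := by
  rw [vstrip]
  split_ifs
  · exact ordConnected_Ioi
  · exact ordConnected_Ioo

lemma exists_strictMonoOn_forall_disjoint_vstrip (F : Finset ℝ) : ∃ (M : ℕ) (η : ℕ → ℝ),
    η 0 = 0 ∧ StrictMonoOn η (Iic M) ∧
      ∀ q, vstrip η M q ⊆ Ioi 0 ∧ Disjoint (vstrip η M q) F := by
  classical
  let G := insert 0 (F.filter (0 < ·))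
  obtain ⟨M, hM⟩ : ∃ M, G.card = M + 1 := Nat.exists_eq_add_one.mpr (by simp [G])
  let o := G.orderEmbOfFin hM
  let η : ℕ → ℝ := fun n => o ⟨min n M, by omega⟩
  have hmono : Monotone η := fun a b hab => o.monotone (Fin.mk_le_mk.mpr (min_le_min_right M hab))
  have hG : ∀ y ∈ G, 0 ≤ y ∧ ∃ k ≤ M, η k = y := fun y hy => by
    refine ⟨?_, ?_⟩
    · rcases Finset.mem_insert.mp hy with rfl | hy
      · exact le_rfl
      · exact (Finset.mem_filter.mp hy).2.le
    · obtain ⟨k, rfl⟩ : y ∈ range o := by rwa [G.range_orderEmbOfFin hM]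
      exact ⟨k, k.is_le, by simp [η, k.is_le]⟩
  have hη0 : η 0 = 0 := by
    obtain ⟨-, k, -, hk⟩ := hG 0 (Finset.mem_insert_self _ _)
    exact le_antisymm (hk ▸ hmono k.zero_le) (hG _ (G.orderEmbOfFin_mem hM _)).1
  have hpos : ∀ q, vstrip η M q ⊆ Ioi 0 := fun q =>
    (vstrip_subset_Ioi η M q).trans (Ioi_subset_Ioi (hη0 ▸ hmono q.zero_le))
  refine ⟨M, η, hη0, fun a ha b hb hab => o.strictMono ?_, fun q => ⟨hpos q, ?_⟩⟩
  · simpa [min_eq_left ha.out, min_eq_left hb.out] using hab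
  · refine disjoint_left.mpr fun y hy hyF => ?_
    obtain ⟨-, k, hk, rfl⟩ := hG y <|
      Finset.mem_insert_of_mem (Finset.mem_filter.mpr ⟨hyF, hpos q hy⟩)
    have hqk : q < k := hmono.reflect_lt (vstrip_subset_Ioi η M q hy)
    rw [vstrip, if_neg (hqk.trans_le hk).ne] at hy
    exact hy.2.not_ge (hmono hqk)

/-- On the part `y ∈ s` of the quadrant, the function `H` coincides with one lattice polynomial of
generalized polynomials. -/
def EqLatticeSignomialOn (H : ℝ → ℝ → ℝ) (s : Set ℝ) : Prop :=
  ∃ E, IsLatticeSignomial E ∧ ∀ y ∈ s, ∀ x, 0 < x → H x y = E x y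

lemma antitone_eqLatticeSignomialOn (H : ℝ → ℝ → ℝ) : Antitone (EqLatticeSignomialOn H) :=
  fun _ _ hst ⟨E, hE, hHE⟩ => ⟨E, hE, fun y hy => hHE y (hst hy)⟩

section

variable {H : ℝ → ℝ → ℝ} (hH : Continuous (onQuadrant H))
  (hpw : IsPiecewiseGenPoly (onQuadrant H))
include hH hpw

lemma exists_mem_eqLatticeSignomialOn {l : Filter ℝ} {Y φ : ℝ → ℝ} (hY : IsPosPuiseux Y)
    (hφ : Tendsto φ l (𝓝[>] 0)) (hYφ : ∀ y, Y (φ y) = y) :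
    ∃ s ∈ l, EqLatticeSignomialOn H s := by
  obtain ⟨_, f, hf⟩ := hpw.exists_isPiecewiseAlong hH
  obtain ⟨E, hE, hHE⟩ := (hf Y hY).exists_isLatticeSignomial
  exact ⟨_, hφ.eventually hHE, E, hE, fun y hy x hx => hYφ y ▸ hy.out x hx⟩

lemma exists_mem_nhdsGT_eqLatticeSignomialOn {y₀ : ℝ} (hy₀ : 0 ≤ y₀) :
    ∃ s ∈ 𝓝[>] y₀, EqLatticeSignomialOn H s := by
  refine exists_mem_eqLatticeSignomialOn hH hpw (Y := fun ε => y₀ + ε) (φ := fun y => y - y₀)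
    ⟨(isPuiseux_const y₀).add isPuiseux_id, ?_⟩ ?_ fun y => add_sub_cancel y₀ y
  · filter_upwards [self_mem_nhdsWithin] with ε (hε : 0 < ε)
    positivity
  · refine tendsto_nhdsWithin_iff.mpr ⟨((continuous_sub_right y₀).tendsto' y₀ 0
      (sub_self y₀)).mono_left nhdsWithin_le_nhds, ?_⟩
    filter_upwards [self_mem_nhdsWithin] with y hy using sub_pos.mpr hy.out

lemma exists_mem_nhdsLT_eqLatticeSignomialOn {y₀ : ℝ} (hy₀ : 0 < y₀) :
    ∃ s ∈ 𝓝[<] y₀, EqLatticeSignomialOn H s := by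
  refine exists_mem_eqLatticeSignomialOn hH hpw (Y := fun ε => y₀ - ε) (φ := fun y => y₀ - y)
    ⟨(isPuiseux_const y₀).sub isPuiseux_id, ?_⟩ ?_ fun y => sub_sub_cancel y₀ y
  · filter_upwards [mem_nhdsWithin_of_mem_nhds (Iio_mem_nhds hy₀)] with ε hε
    exact sub_pos.mpr hε
  · refine tendsto_nhdsWithin_iff.mpr ⟨((continuous_sub_left y₀).tendsto' y₀ 0
      (sub_self y₀)).mono_left nhdsWithin_le_nhds, ?_⟩
    filter_upwards [self_mem_nhdsWithin] with y hy using sub_pos.mpr hy.out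

lemma exists_mem_atTop_eqLatticeSignomialOn : ∃ s ∈ atTop, EqLatticeSignomialOn H s := by
  refine exists_mem_eqLatticeSignomialOn hH hpw (Y := fun ε => ε ^ (-1 : ℝ)) (φ := fun y => y⁻¹)
    ⟨isPuiseux_rpow _, ?_⟩ tendsto_inv_atTop_nhdsGT_zero fun y => by
      rw [Real.rpow_neg_one, inv_inv]
  filter_upwards [self_mem_nhdsWithin] with ε (hε : 0 < ε)
  positivity

end

end Strips

/-- A continuous piecewise generalized polynomial function agrees, on each
horizontal half-strip `I_q = (0,∞) × (η q, η (q+1))` of a suitable finite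
subdivision of the `y`-axis, with a sup of infs of finitely many generalized
polynomial functions. -/
theorem supInf_on_horizontal_halfstrips (h : PQ → ℝ)
    (hc : Continuous h) (hpw : IsPiecewiseGenPoly h) :
    ∃ (M : ℕ) (η : ℕ → ℝ) (e : ℕ → PQ → ℝ),
      η 0 = 0 ∧ StrictMonoOn η (Set.Iic M) ∧
      (∀ q ≤ M, IsSupInf (e q)) ∧
      (∀ q ≤ M, ∀ z : PQ, z.1.2 ∈ vstrip η M q → e q z = h z) := by
  obtain ⟨H, rfl⟩ := surjective_onQuadrant h
  obtain ⟨F, hF⟩ := exists_finset_forall_ordConnected (antitone_eqLatticeSignomialOn H)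
    (fun _ => exists_mem_nhdsGT_eqLatticeSignomialOn hc hpw)
    (fun _ => exists_mem_nhdsLT_eqLatticeSignomialOn hc hpw)
    (exists_mem_atTop_eqLatticeSignomialOn hc hpw)
  obtain ⟨M, η, hη₀, hη, hstrip⟩ := exists_strictMonoOn_forall_disjoint_vstrip F
  have hH : ∀ q, EqLatticeSignomialOn H (vstrip η M q) := fun q =>
    hF _ (ordConnected_vstrip η M q) (hstrip q).1 (hstrip q).2
  choose E hE hHE using hH
  exact ⟨M, η, fun q => onQuadrant (E q), hη₀, hη, fun q _ => (hE q).isSupInf,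
    fun q _ z hz => (hHE q _ hz _ z.2.1).symm⟩
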